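/- Let u be a weak solution of −div(A∇u) = u in Ω with u ≢ 0. Suppose that for some δ ∈ (0,1) one has liminf_{R→∞} R^{−(1−δ)} ∫_{R<|x|<2R} u² dx = 0. Then there exists a sequence r_j → ∞ such that G(r_j) > 0 for every j. -/

import Mathlib

open MeasureTheory Metric Filter

noncomputable section

abbrev En (n : ℕ) := EuclideanSpace ℝ (Fin n)

/-- The exterior domain `Ω = {x ∈ ℝⁿ : |x| > 1}`. -/
def OmegaExt (n : ℕ) : Set (En n) := {x | 1 < ‖x‖}

/-- The quadratic/bilinear form `⟨M ξ, η⟩`. -/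
def quadForm {n : ℕ} (M : Matrix (Fin n) (Fin n) ℝ) (ξ η : En n) : ℝ :=
  ∑ i, M.mulVec (fun j => ξ j) i * η i

/-- The conformal factor `μ(x) = ⟨A(x)∇r, ∇r⟩ = ⟨A(x)x, x⟩ / |x|²`. -/
def muA {n : ℕ} (A : En n → Matrix (Fin n) (Fin n) ℝ) (x : En n) : ℝ :=
  quadForm (A x) x x / ‖x‖ ^ 2

/-- The vector field `Z(x) = r(x) A(x)∇r(x) / μ(x) = A(x)x / μ(x)`. -/
def Zvec {n : ℕ} (A : En n → Matrix (Fin n) (Fin n) ℝ) (x : En n) : En n :=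
  (muA A x)⁻¹ • (WithLp.toLp 2 ((A x).mulVec (fun j => x j)) : En n)

/-- The derivative of `f` along `Z`: `Zf = ⟨Z, ∇f⟩`. -/
def Zd {n : ℕ} (A : En n → Matrix (Fin n) (Fin n) ℝ) (f : En n → ℝ) (x : En n) : ℝ :=
  ∑ i, Zvec A x i * gradient f x i

/-- Surface integral over the sphere `{|x| = ρ}` w.r.t. the `(n-1)`-dimensional
Hausdorff measure. -/
def sphInt (n : ℕ) (ρ : ℝ) (f : En n → ℝ) : ℝ :=
  ∫ x in sphere (0 : En n) ρ, f x ∂(μH[(n : ℝ) - 1])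

/-- Structural hypotheses on `A`: symmetry, `C¹` entries on `Ω`, uniform ellipticity
`λ|ξ|² ≤ ⟨A(x)ξ,ξ⟩ ≤ λ⁻¹|ξ|²`, and the decay `|x||∇B(x)| + |B(x)| ≤ C|x|^{-α}`
where `B = A - Iₙ` (entrywise). -/
def EllipticDecay {n : ℕ} (A : En n → Matrix (Fin n) (Fin n) ℝ) (lam α C : ℝ) : Prop :=
  (∀ x ∈ OmegaExt n, (A x).IsSymm) ∧
  (∀ i j, ContDiffOn ℝ 1 (fun x => A x i j) (OmegaExt n)) ∧
  (∀ x ∈ OmegaExt n, ∀ ξ : En n,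
      lam * ‖ξ‖ ^ 2 ≤ quadForm (A x) ξ ξ ∧ quadForm (A x) ξ ξ ≤ lam⁻¹ * ‖ξ‖ ^ 2) ∧
  (∀ x ∈ OmegaExt n, ∀ i j,
      ‖x‖ * ‖gradient (fun y => (A y - 1) i j) x‖ + |(A x - 1) i j| ≤ C * ‖x‖ ^ (-α))

/-- `u ∈ C¹(Ω)` is a weak solution of `-div(A∇u) = u` in `Ω`, i.e.
`∫_Ω ⟨A∇u, ∇φ⟩ = ∫_Ω u φ` for every test function `φ ∈ C_c^∞(Ω)`. -/
def WeakSol {n : ℕ} (A : En n → Matrix (Fin n) (Fin n) ℝ) (u : En n → ℝ) : Prop :=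
  ContDiffOn ℝ 1 u (OmegaExt n) ∧
  ∀ φ : En n → ℝ, ContDiff ℝ (⊤ : ℕ∞) φ → HasCompactSupport φ → tsupport φ ⊆ OmegaExt n →
    (∫ x in OmegaExt n, ∑ i, (A x).mulVec (fun j => gradient u x j) i * gradient φ x i) =
    ∫ x in OmegaExt n, u x * φ x

/-- The functional `G(ρ)` associated with a solution `u`, where `w = r^{(n-1)/2} u`. -/
def Gfun {n : ℕ} (A : En n → Matrix (Fin n) (Fin n) ℝ) (u : En n → ℝ) (ρ : ℝ) : ℝ :=
  let w : En n → ℝ := fun x => ‖x‖ ^ (((n : ℝ) - 1) / 2) * u x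
  2 * sphInt n ρ (fun x => (Zd A w x / ‖x‖) ^ 2 * muA A x)
    - sphInt n ρ (fun x => quadForm (A x) (gradient w x) (gradient w x))
    + sphInt n ρ (fun x => (w x) ^ 2)
    - ((n : ℝ) - 1) * ((n : ℝ) - 3) / 4 * sphInt n ρ (fun x => (w x) ^ 2 / ‖x‖ ^ 2 * muA A x)

section
open scoped Topology ENNReal NNReal Pointwise

/-- Two finite measures on a sphere, uniformly distributed, are proportional. -/
lemma unif_prop {E : Type*} [NormedAddCommGroup E] [NormedSpace ℝ E] [FiniteDimensional ℝ E]
    [MeasurableSpace E] [BorelSpace E] (S : Set E) (ρ₁ ρ₂ : Measure E)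
    [IsFiniteMeasure ρ₁] [IsFiniteMeasure ρ₂]
    (h1S : ρ₁ Sᶜ = 0) (h2S : ρ₂ Sᶜ = 0) (h1 : ρ₁ ≠ 0) (h2 : ρ₂ ≠ 0)
    (u1 : ∀ x ∈ S, ∀ y ∈ S, ∀ r : ℝ, ρ₁ (closedBall x r) = ρ₁ (closedBall y r))
    (u2 : ∀ x ∈ S, ∀ y ∈ S, ∀ r : ℝ, ρ₂ (closedBall x r) = ρ₂ (closedBall y r)) :
    ∃ c : ℝ≥0∞, c ≠ 0 ∧ c ≠ ∞ ∧ ρ₁ = c • ρ₂ := by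
  have key : ∀ (ρ ρ' : Measure E) [IsFiniteMeasure ρ] [IsFiniteMeasure ρ'], ρ' Sᶜ = 0 → ρ' ≠ 0 →
      (∀ x ∈ S, ∀ y ∈ S, ∀ r : ℝ, ρ (closedBall x r) = ρ (closedBall y r)) →
      (∀ x ∈ S, ∀ y ∈ S, ∀ r : ℝ, ρ' (closedBall x r) = ρ' (closedBall y r)) →
      ∃ c : ℝ≥0∞, c ≠ ∞ ∧ (∀ x ∈ S, Tendsto (fun r => ρ (closedBall x r) / ρ' (closedBall x r))
        (𝓝[>] 0) (𝓝 c)) ∧ c • ρ' ≤ ρ := by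
    intro ρ ρ' _ _ hS hne hu hu'
    have hSae : ∀ᵐ x ∂ρ', x ∈ S := hS
    have ht := Besicovitch.ae_tendsto_rnDeriv ρ ρ'
    have hlt := Measure.rnDeriv_lt_top ρ ρ'
    have : (ae ρ').NeBot := ae_neBot.2 hne
    obtain ⟨x, hx, hxt, hxl⟩ := (hSae.and (ht.and hlt)).exists
    have hall : ∀ y ∈ S, Tendsto (fun r => ρ (closedBall y r) / ρ' (closedBall y r))
        (𝓝[>] 0) (𝓝 (ρ.rnDeriv ρ' x)) := by
      intro y hy
      have : (fun r => ρ (closedBall y r) / ρ' (closedBall y r)) =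
        (fun r => ρ (closedBall x r) / ρ' (closedBall x r)) := by
        funext r; rw [hu y hy x hx, hu' y hy x hx]
      rw [this]; exact hxt
    refine ⟨_, hxl.ne, hall, ?_⟩
    have hc : ρ.rnDeriv ρ' =ᵐ[ρ'] fun _ => ρ.rnDeriv ρ' x := by
      filter_upwards [hSae, ht] with y hy hyt
      exact tendsto_nhds_unique hyt (hall y hy)
    rw [← withDensity_const, ← withDensity_congr_ae hc]
    exact Measure.withDensity_rnDeriv_le ρ ρ'
  have pos : ∀ (ρ : Measure E), ρ Sᶜ = 0 → ρ ≠ 0 →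
      (∀ x ∈ S, ∀ y ∈ S, ∀ r : ℝ, ρ (closedBall x r) = ρ (closedBall y r)) →
      ∀ x ∈ S, ∀ r : ℝ, 0 < r → ρ (closedBall x r) ≠ 0 := by
    intro ρ hS hne hu x hx r hr h0
    have : ρ S = 0 := by
      apply measure_null_of_locally_null
      intro y hy
      exact ⟨closedBall y r, mem_nhdsWithin_of_mem_nhds (closedBall_mem_nhds y hr),
        by rw [hu y hy x hx]; exact h0⟩
    apply hne
    rw [← Measure.measure_univ_eq_zero, ← Set.union_compl_self S]
    exact measure_union_null this hS
  obtain ⟨c, hc, hct, hcl⟩ := key ρ₁ ρ₂ h2S h2 u1 u2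
  obtain ⟨d, hd, hdt, hdl⟩ := key ρ₂ ρ₁ h1S h1 u2 u1
  have hne : S.Nonempty := by
    by_contra h
    rw [Set.not_nonempty_iff_eq_empty] at h
    subst h
    apply h1
    rw [← Measure.measure_univ_eq_zero]; simpa using h1S
  obtain ⟨x, hx⟩ := hne
  have hcd : d = c⁻¹ := by
    apply tendsto_nhds_unique (hdt x hx)
    have := tendsto_inv_iff.2 (hct x hx)
    refine this.congr' ?_
    filter_upwards [self_mem_nhdsWithin] with r hr
    have := pos ρ₁ h1S h1 u1 x hx r hr
    have := pos ρ₂ h2S h2 u2 x hx r hr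
    rw [ENNReal.inv_div (Or.inl (measure_ne_top _ _)) (Or.inl this)]
  have hc0 : c ≠ 0 := by
    rintro rfl
    simp at hcd
    exact hd hcd
  refine ⟨c, hc0, hc, le_antisymm ?_ hcl⟩
  intro s
  have h := hdl s
  rw [hcd] at h
  simp only [Measure.smul_apply, smul_eq_mul] at h ⊢
  calc ρ₁ s = c * (c⁻¹ * ρ₁ s) := by rw [← mul_assoc, ENNReal.mul_inv_cancel hc0 hc, one_mul]
    _ ≤ _ := by gcongr

lemma hausdorff_patch (m : ℕ) (i : Fin (m+1)) (s : ℝ) (hs : s = 1 ∨ s = -1) :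
    μH[(m:ℝ)] {x : En (m+1) | ‖x‖ = 1 ∧ 1 / ((m:ℝ)+1) ≤ s * x i} < ∞ := by
  set T : Set (En (m+1)) := {x : En (m+1) | ‖x‖ = 1 ∧ 1 / ((m:ℝ)+1) ≤ s * x i} with hT
  let P : T → (Fin m → ℝ) := fun x j => x.1 (i.succAbove j)
  have hcoord : ∀ x : T, ∀ j, |x.1 j| ≤ 1 := by
    intro x j
    have := PiLp.norm_apply_le x.1 j
    rw [x.2.1] at this
    simpa using this
  have hsq : ∀ x : T, (x.1 i)^2 + ∑ j, (P x j)^2 = 1 := by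
    intro x
    have := EuclideanSpace.norm_sq_eq x.1
    rw [x.2.1, Fin.sum_univ_succAbove _ i] at this
    simp at this
    linarith
  have hanti : AntilipschitzWith (Real.toNNReal (((m:ℝ)+1) * ((m:ℝ) * (m+1) + 1))) P := by
    apply AntilipschitzWith.of_le_mul_dist
    intro x y
    rw [Real.coe_toNNReal _ (by positivity)]
    set δ := dist (P x) (P y)
    have hδ : 0 ≤ δ := dist_nonneg
    have hj : ∀ j, |P x j - P y j| ≤ δ := fun j => dist_le_pi_dist (P x) (P y) j
    have hi : |x.1 i - y.1 i| ≤ (m:ℝ) * (m+1) * δ := by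
      have e1 : (x.1 i - y.1 i) * (x.1 i + y.1 i) = -∑ j, (P x j - P y j) * (P x j + P y j) := by
        have := hsq x; have := hsq y
        have : ∑ j, (P x j - P y j) * (P x j + P y j) = ∑ j, (P x j)^2 - ∑ j, (P y j)^2 := by
          rw [← Finset.sum_sub_distrib]; congr 1; funext j; ring
        rw [this]; nlinarith
      have e2 : |x.1 i - y.1 i| * |x.1 i + y.1 i| ≤ m * (2 * δ) := by
        rw [← abs_mul, e1, abs_neg]
        calc _ ≤ ∑ j, |(P x j - P y j) * (P x j + P y j)| := Finset.abs_sum_le_sum_abs _ _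
          _ ≤ ∑ j : Fin m, 2 * δ := by
            apply Finset.sum_le_sum; intro j _
            rw [abs_mul]
            have h1 := hj j
            have h2 : |P x j + P y j| ≤ 2 := by
              have := hcoord x (i.succAbove j); have := hcoord y (i.succAbove j)
              calc _ ≤ |P x j| + |P y j| := abs_add_le _ _
                _ ≤ 2 := by simp only [P]; linarith
            nlinarith [abs_nonneg (P x j - P y j), abs_nonneg (P x j + P y j)]
          _ = _ := by simp
      have e3 : 2 / ((m:ℝ)+1) ≤ |x.1 i + y.1 i| := by
        have hx := x.2.2; have hy := y.2.2
        have h4 : 2 / ((m:ℝ)+1) ≤ s * (x.1 i + y.1 i) := by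
          rw [mul_add]; calc _ = 1 / ((m:ℝ)+1) + 1 / ((m:ℝ)+1) := by ring
            _ ≤ _ := add_le_add hx hy
        refine h4.trans ?_
        rcases hs with h | h
        · rw [h, one_mul]; exact le_abs_self _
        · rw [h, neg_one_mul]; exact neg_le_abs _
      have e4 : |x.1 i - y.1 i| * (2 / ((m:ℝ)+1)) ≤ m * (2 * δ) :=
        (mul_le_mul_of_nonneg_left e3 (abs_nonneg _)).trans e2
      have hm : (0:ℝ) < (m:ℝ) + 1 := by positivity
      rw [mul_div_assoc', div_le_iff₀ hm] at e4
      nlinarith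
    have hall : ∀ j, |x.1 j - y.1 j| ≤ ((m:ℝ) * (m+1) + 1) * δ := by
      intro j
      rcases Fin.eq_self_or_eq_succAbove i j with h | ⟨k, h⟩
      · rw [h]; nlinarith
      · rw [h]; have := hj k
        simp only [P] at this
        have : 0 ≤ (m:ℝ) * (m+1) * δ := by positivity
        linarith
    rw [Subtype.dist_eq, dist_eq_norm]
    apply le_of_sq_le_sq _ (by positivity)
    rw [EuclideanSpace.norm_sq_eq]
    calc _ ≤ ∑ j : Fin (m+1), (((m:ℝ) * (m+1) + 1) * δ)^2 := by
          apply Finset.sum_le_sum; intro j _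
          simp only [PiLp.sub_apply, Real.norm_eq_abs]
          exact pow_le_pow_left₀ (abs_nonneg _) (hall j) 2
      _ = ((m:ℝ)+1) * (((m:ℝ) * (m+1) + 1) * δ)^2 := by simp
      _ ≤ _ := by
          have h1 : (1:ℝ) ≤ (m:ℝ)+1 := by have : (0:ℝ) ≤ m := by positivity
                                          linarith
          have h2 := sq_nonneg (((m:ℝ) * (m+1) + 1) * δ)
          rw [mul_assoc, mul_pow ((m:ℝ)+1)]
          apply mul_le_mul_of_nonneg_right _ h2
          nlinarith
  have hiso : μH[(m:ℝ)] T = μH[(m:ℝ)] (Set.univ : Set T) := by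
    have := isometry_subtype_coe.hausdorffMeasure_image (X := T) (d := m) (Or.inl (by positivity)) Set.univ
    rw [← this]; simp
  rw [hiso]
  refine (hanti.le_hausdorffMeasure_image (by positivity) Set.univ).trans_lt ?_
  apply ENNReal.mul_lt_top
  · apply ENNReal.rpow_lt_top_of_nonneg (by positivity) (by simp)
  · have := hausdorffMeasure_pi_real (ι := Fin m)
    simp only [Fintype.card_fin] at this
    rw [this]
    apply Bornology.IsBounded.measure_lt_top
    apply (isBounded_closedBall (x := (0 : Fin m → ℝ)) (r := 1)).subset
    rintro _ ⟨x, -, rfl⟩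
    rw [mem_closedBall, dist_zero_right, pi_norm_le_iff_of_nonneg (by norm_num)]
    intro j; exact hcoord x _

lemma hausdorff_sphere_lt_top (m : ℕ) : μH[(m:ℝ)] (sphere (0 : En (m+1)) 1) < ∞ := by
  have hsub : sphere (0 : En (m+1)) 1 ⊆ ⋃ i : Fin (m+1), ⋃ b : Bool,
      {x : En (m+1) | ‖x‖ = 1 ∧ 1 / ((m:ℝ)+1) ≤ (if b then 1 else -1) * x i} := by
    intro x hx
    rw [mem_sphere_zero_iff_norm] at hx
    have h1 := EuclideanSpace.norm_sq_eq x
    rw [hx] at h1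
    have hm : (0:ℝ) < (m:ℝ) + 1 := by positivity
    have : ∃ i, 1 / ((m:ℝ)+1) ≤ (x i)^2 := by
      by_contra! hcon
      have : ∑ i, ‖x i‖^2 < ∑ i : Fin (m+1), 1 / ((m:ℝ)+1) := by
        apply Finset.sum_lt_sum_of_nonempty Finset.univ_nonempty
        intro i _; simpa using hcon i
      rw [← h1] at this
      simp at this
      rw [mul_inv_cancel₀ hm.ne'] at this
      linarith
    obtain ⟨i, hi⟩ := this
    have habs : 1 / ((m:ℝ)+1) ≤ |x i| := by
      rw [← sq_abs] at hi
      have hle : |x i| ≤ 1 := by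
        have := PiLp.norm_apply_le x i
        rw [hx] at this
        simpa using this
      nlinarith [abs_nonneg (x i)]
    simp only [Set.mem_iUnion]
    refine ⟨i, ?_⟩
    rcases abs_cases (x i) with ⟨h, _⟩ | ⟨h, _⟩
    · exact ⟨true, hx, by simp only [if_true, one_mul]; rw [← h]; exact habs⟩
    · exact ⟨false, hx, by simp only [Bool.false_eq_true, if_false, neg_one_mul]; rw [← h]; exact habs⟩
  refine (measure_mono hsub).trans_lt ?_
  refine (measure_iUnion_le _).trans_lt ?_
  rw [tsum_fintype]
  apply ENNReal.sum_lt_top.2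
  intro i _
  refine (measure_iUnion_le _).trans_lt ?_
  rw [tsum_fintype]
  apply ENNReal.sum_lt_top.2
  intro b _
  exact hausdorff_patch m i _ (by cases b <;> simp)

lemma hausdorff_sphere_pos (m : ℕ) : 0 < μH[(m:ℝ)] (sphere (0 : En (m+1)) 1) := by
  let P : En (m+1) → (Fin m → ℝ) := fun x j => x j.succ
  have hL : LipschitzWith 1 P := by
    apply LipschitzWith.of_dist_le_mul
    intro x y
    rw [NNReal.coe_one, one_mul, dist_pi_le_iff dist_nonneg]
    intro j
    have := PiLp.norm_apply_le (x - y) j.succ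
    rw [dist_eq_norm, dist_eq_norm]; simpa using this
  have h1 := hL.hausdorffMeasure_image_le (d := m) (by positivity) (sphere (0 : En (m+1)) 1)
  have h2 : 0 < μH[(m:ℝ)] (P '' sphere (0 : En (m+1)) 1) := by
    have := hausdorffMeasure_pi_real (ι := Fin m)
    simp only [Fintype.card_fin] at this
    rw [this]
    refine (measure_ball_pos volume (0 : Fin m → ℝ) (r := 1/((m:ℝ)+1)) (by positivity)).trans_le ?_
    apply measure_mono
    intro y hy
    have hy' : ∀ j, |y j| ≤ 1/((m:ℝ)+1) := by
      intro j
      rw [mem_ball_zero_iff] at hy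
      exact (norm_le_pi_norm y j).trans hy.le
    have hsum : ∑ j, (y j)^2 ≤ 1 := by
      calc _ ≤ ∑ j : Fin m, (1/((m:ℝ)+1)) := by
            apply Finset.sum_le_sum; intro j _
            have h1 := hy' j
            rw [← sq_abs]
            have : 1/((m:ℝ)+1) ≤ 1 := by
              rw [div_le_one (by positivity)]; linarith [(Nat.cast_nonneg m : (0:ℝ) ≤ m)]
            nlinarith [abs_nonneg (y j)]
        _ ≤ 1 := by simp; rw [← div_eq_mul_inv, div_le_one (by positivity)]; linarith
    refine ⟨WithLp.toLp 2 (Fin.cons (Real.sqrt (1 - ∑ j, (y j)^2)) y), ?_, ?_⟩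
    · rw [mem_sphere_zero_iff_norm, EuclideanSpace.norm_eq, Fin.sum_univ_succ]
      simp
      rw [Real.sq_sqrt (by linarith)]
      ring
    · funext j; simp [P]
  simp at h1
  exact h2.trans_le h1

lemma exists_rot {n : ℕ} (x y : En n) (h : ‖x‖ = ‖y‖) : ∃ e : En n ≃ₗᵢ[ℝ] En n, e x = y :=
  ⟨_, Submodule.reflection_sub h⟩

/-- The unit-sphere measure. -/
def sig (n : ℕ) : Measure (sphere (0 : En n) 1) := (volume : Measure (En n)).toSphere

instance (n : ℕ) : IsFiniteMeasure (sig n) := by unfold sig; infer_instance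

lemma hausdorff_sphere_eq (m : ℕ) : ∃ c : ℝ≥0∞, c ≠ 0 ∧ c ≠ ∞ ∧
    (μH[(m:ℝ)]).restrict (sphere (0 : En (m+1)) 1) = c • (sig (m+1)).map Subtype.val := by
  have hfin : IsFiniteMeasure ((μH[(m:ℝ)]).restrict (sphere (0 : En (m+1)) 1)) :=
    ⟨by rw [Measure.restrict_apply_univ]; exact hausdorff_sphere_lt_top m⟩
  have hemb : MeasurableEmbedding (Subtype.val : sphere (0 : En (m+1)) 1 → En (m+1)) :=
    MeasurableEmbedding.subtype_coe isClosed_sphere.measurableSet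
  apply unif_prop (sphere (0 : En (m+1)) 1)
  · rw [Measure.restrict_apply isClosed_sphere.measurableSet.compl]; simp
  · rw [hemb.map_apply]; simp
  · rw [Ne, Measure.restrict_eq_zero]; exact (hausdorff_sphere_pos m).ne'
  · intro h
    have := Measure.map_eq_zero_iff (μ := sig (m+1)) hemb.measurable.aemeasurable
    rw [this] at h
    exact Measure.toSphere_ne_zero (volume : Measure (En (m+1))) h
  · intro x hx y hy r
    obtain ⟨e, he⟩ := exists_rot x y (by simp at hx hy; rw [hx, hy])
    rw [Measure.restrict_apply isClosed_closedBall.measurableSet,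
      Measure.restrict_apply isClosed_closedBall.measurableSet,
      ← e.toIsometryEquiv.hausdorffMeasure_image _ (closedBall x r ∩ _)]
    congr 1
    change e '' (closedBall x r ∩ sphere 0 1) = _
    rw [Set.image_inter e.injective]
    simp [he]
  · intro x hx y hy r
    obtain ⟨e, he⟩ := exists_rot x y (by simp at hx hy; rw [hx, hy])
    rw [hemb.map_apply, hemb.map_apply, sig,
      Measure.toSphere_apply' _ (hemb.measurable isClosed_closedBall.measurableSet),
      Measure.toSphere_apply' _ (hemb.measurable isClosed_closedBall.measurableSet),
      Subtype.image_preimage_coe, Subtype.image_preimage_coe]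
    congr 1
    have hmp := e.measurePreserving
    have h1 : Set.Ioo (0:ℝ) 1 • (sphere (0 : En (m+1)) 1 ∩ closedBall x r) =
        e ⁻¹' (Set.Ioo (0:ℝ) 1 • (sphere (0 : En (m+1)) 1 ∩ closedBall y r)) := by
      ext z
      simp only [Set.mem_smul, Set.mem_preimage]
      constructor
      · rintro ⟨t, ht, v, ⟨hv1, hv2⟩, rfl⟩
        refine ⟨t, ht, e v, ⟨by simpa using hv1, ?_⟩, by simp⟩
        rw [← he, mem_closedBall, e.dist_map]; exact hv2
      · rintro ⟨t, ht, v, ⟨hv1, hv2⟩, h⟩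
        refine ⟨t, ht, e.symm v, ⟨by simpa using hv1, ?_⟩, ?_⟩
        · rw [mem_closedBall, ← e.dist_map, he]; simpa using hv2
        · rw [← map_smul, h]; simp
    rw [h1]
    exact (hmp.measure_preimage_equiv (f := e.toHomeomorph.toMeasurableEquiv) _).symm ▸ rfl

end

section
open scoped Topology ENNReal NNReal Pointwise

/-- Spherical integral with the polar weight. -/
def Sph (n : ℕ) (f : En n → ℝ) (r : ℝ) : ℝ :=
  r ^ (n - 1) * ∫ θ : sphere (0 : En n) 1, f (r • θ.1) ∂(sig n)

lemma sphInt_eq (n : ℕ) (hn : 1 ≤ n) (ρ : ℝ) (hρ : 0 < ρ) :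
    ∃ c : ℝ, 0 < c ∧ ∀ f : En n → ℝ, sphInt n ρ f = c * Sph n f ρ := by
  obtain ⟨m, rfl⟩ : ∃ m, n = m + 1 := ⟨n - 1, by omega⟩
  obtain ⟨c, c0, ct, hc⟩ := hausdorff_sphere_eq m
  let e : En (m+1) ≃ₜ En (m+1) := Homeomorph.smulOfNeZero ρ hρ.ne'
  have he : MeasurableEmbedding e := e.measurableEmbedding
  let k : ℝ≥0 := ‖ρ‖₊ ^ (m:ℝ)
  have hk : 0 < k := NNReal.rpow_pos (by simpa using hρ.ne')
  have h1 : (μH[(m:ℝ)] : Measure (En (m+1))) = (k : ℝ≥0∞) • (μH[(m:ℝ)]).map e := by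
    ext s hs
    rw [Measure.smul_apply, he.map_apply]
    have : s = ρ • (e ⁻¹' s) := by
      ext x
      rw [Set.mem_smul_set_iff_inv_smul_mem₀ hρ.ne']
      simp [e, smul_smul, hρ.ne']
    conv_lhs => rw [this, Measure.hausdorffMeasure_smul₀ (by positivity) hρ.ne']
    rfl
  have hpre : e ⁻¹' (sphere (0 : En (m+1)) ρ) = sphere 0 1 := by
    ext x
    simp [e, norm_smul, abs_of_pos hρ, hρ.ne']
  have hemb : MeasurableEmbedding (Subtype.val : sphere (0 : En (m+1)) 1 → En (m+1)) :=
    MeasurableEmbedding.subtype_coe isClosed_sphere.measurableSet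
  refine ⟨k * c.toReal / ρ ^ m, by have := ENNReal.toReal_pos c0 ct; positivity, fun f => ?_⟩
  have h2 : sphInt (m+1) ρ f = ∫ x in sphere (0 : En (m+1)) ρ, f x ∂(μH[(m : ℝ)]) := by
    unfold sphInt; congr 3; push_cast; ring
  rw [h2, h1, Measure.restrict_smul, integral_smul_measure, he.restrict_map, hpre, hc,
    he.integral_map, integral_smul_measure, hemb.integral_map, Sph]
  have : ρ ^ m ≠ 0 := by positivity
  simp only [smul_eq_mul, ENNReal.coe_toReal, Nat.add_sub_cancel]
  field_simp
  rfl

lemma integral_polar (n : ℕ) (hn : 1 ≤ n) (f : En n → ℝ) (hf : Integrable f) :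
    ∫ x, f x = ∫ r in Set.Ioi (0:ℝ), Sph n f r := by
  have : Nontrivial (En n) := by
    have : Nonempty (Fin n) := ⟨⟨0, hn⟩⟩
    infer_instance
  have hmp := (volume : Measure (En n)).measurePreserving_homeomorphUnitSphereProd
  have hfr : Module.finrank ℝ (En n) = n := by simp
  have hInt : ∫ x, f x = ∫ x : ({(0)}ᶜ : Set (En n)), f x.1 ∂(Measure.comap Subtype.val volume) := by
    rw [integral_subtype_comap (measurableSet_singleton _).compl fun x => f x,
      restrict_compl_singleton]
  have h1 : ∀ x : ({(0)}ᶜ : Set (En n)), f x.1 =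
      (fun y : sphere (0:En n) 1 × Set.Ioi (0:ℝ) => f (y.2.1 • y.1.1))
        (homeomorphUnitSphereProd (En n) x) := by
    intro x
    have := congrArg Subtype.val ((homeomorphUnitSphereProd (En n)).symm_apply_apply x)
    rw [homeomorphUnitSphereProd_symm_apply_coe] at this
    simp only
    rw [this]
  have hmes := (homeomorphUnitSphereProd (En n)).measurableEmbedding
  have hI : Integrable (fun y : sphere (0:En n) 1 × Set.Ioi (0:ℝ) => f (y.2.1 • y.1.1))
      ((volume : Measure (En n)).toSphere.prod (Measure.volumeIoiPow (n-1))) := by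
    have h3 : Integrable (fun x : ({(0)}ᶜ : Set (En n)) => f x.1) (Measure.comap Subtype.val volume) := by
      have : IntegrableOn f ({(0)}ᶜ : Set (En n)) := hf.integrableOn
      exact (integrableOn_iff_comap_subtypeVal (measurableSet_singleton _).compl).mp this
    simp_rw [h1] at h3
    have := (hmp.integrable_comp_emb hmes (g := (fun y : sphere (0:En n) 1 × Set.Ioi (0:ℝ) => f (y.2.1 • y.1.1)))).mp h3
    rwa [hfr] at this
  have h5 := hmp.integral_comp hmes (fun y : sphere (0:En n) 1 × Set.Ioi (0:ℝ) => f (y.2.1 • y.1.1))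
  rw [hInt, integral_congr_ae (Filter.Eventually.of_forall h1), h5, hfr, integral_prod_symm _ hI]
  have : ∀ r : Set.Ioi (0:ℝ), ∫ (x : ↑(sphere (0:En n) 1)), f ((r:ℝ) • x.1) ∂(volume : Measure (En n)).toSphere
     = (fun r : ℝ => ∫ (x : ↑(sphere (0:En n) 1)), f ((r:ℝ) • x.1) ∂(sig n)) r := fun r => rfl
  simp only [this, Measure.volumeIoiPow, ENNReal.ofReal]
  rw [integral_withDensity_eq_integral_smul, integral_subtype_comap measurableSet_Ioi
    (fun r : ℝ => Real.toNNReal (r ^ (n-1)) • ∫ (x : ↑(sphere (0:En n) 1)), f ((r:ℝ) • x.1) ∂(sig n))]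
  · apply setIntegral_congr_fun measurableSet_Ioi
    intro r hr
    simp only [Sph, NNReal.smul_def, smul_eq_mul]
    rw [Real.coe_toNNReal _ (pow_nonneg (le_of_lt hr) _)]
  · fun_prop

end

section
open scoped Topology ENNReal NNReal Pointwise ContDiff

lemma compact_Ioi_bounds (K : Set ℝ) (hK : IsCompact K) (h : K ⊆ Set.Ioi 1) :
    ∃ a b : ℝ, 1 < a ∧ a < b ∧ K ⊆ Set.Ioo a b := by
  rcases K.eq_empty_or_nonempty with rfl | hne
  · exact ⟨2, 3, by norm_num, by norm_num, by simp⟩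
  · obtain ⟨x, hx, hmin⟩ := hK.exists_isMinOn hne continuousOn_id
    obtain ⟨y, hy, hmax⟩ := hK.exists_isMaxOn hne continuousOn_id
    have h1 : 1 < x := h hx
    refine ⟨(1 + x)/2, y + 1, by linarith, ?_, fun z hz => ⟨?_, ?_⟩⟩
    · have := hmax hx; simp at this; linarith
    · have := hmin hz; simp at this; linarith
    · have := hmax hz; simp at this; linarith

lemma setIntegral_Ioi_eq_interval (g : ℝ → ℝ) (a b : ℝ) (ha : 1 < a) (hab : a < b)
    (hg : ∀ x, x ∉ Set.Ioo a b → g x = 0) : ∫ r in Set.Ioi (0:ℝ), g r = ∫ r in a..b, g r := by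
  rw [intervalIntegral.integral_of_le hab.le]
  refine setIntegral_eq_of_subset_of_forall_sdiff_eq_zero measurableSet_Ioi ?_ ?_
  · intro x hx; exact lt_trans (by linarith) hx.1
  · intro x hx; exact hg x fun h => hx.2 ⟨h.1, h.2.le⟩

lemma integral_eq_interval (g : ℝ → ℝ) (a b : ℝ) (hab : a < b)
    (hg : ∀ x, x ∉ Set.Ioo a b → g x = 0) : ∫ r, g r = ∫ r in a..b, g r := by
  rw [intervalIntegral.integral_of_le hab.le, ← setIntegral_univ]
  refine setIntegral_eq_of_subset_of_forall_sdiff_eq_zero MeasurableSet.univ (Set.subset_univ _) ?_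
  intro x hx; exact hg x fun h => hx.2 ⟨h.1, h.2.le⟩

lemma duBoisReymond (f q : ℝ → ℝ) (hf : ContinuousOn f (Set.Ioi 1))
    (hq : ContinuousOn q (Set.Ioi 1))
    (h : ∀ η : ℝ → ℝ, ContDiff ℝ ∞ η → HasCompactSupport η → tsupport η ⊆ Set.Ioi 1 →
      ∫ r in Set.Ioi (0:ℝ), (deriv η r * f r + η r * q r) = 0) :
    ∀ r, 1 < r → HasDerivAt f (q r) r := by
  set K : ℝ → ℝ := fun r => ∫ t in (2:ℝ)..r, q t with hKdef
  have hK : ∀ r, 1 < r → HasDerivAt K (q r) r := by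
    intro r hr
    have hsub : Set.uIcc 2 r ⊆ Set.Ioi (1:ℝ) := by
      intro x hx
      rcases Set.mem_uIcc.mp hx with h | h
      · exact lt_of_lt_of_le (by norm_num) h.1
      · exact lt_of_lt_of_le hr h.1
    exact intervalIntegral.integral_hasDerivAt_right ((hq.mono hsub).intervalIntegrable)
      (hq.stronglyMeasurableAtFilter isOpen_Ioi r hr) (hq.continuousAt (isOpen_Ioi.mem_nhds hr))
  set F : ℝ → ℝ := fun r => f r - K r with hF
  have hKc : ContinuousOn K (Set.Ioi 1) := fun r hr => (hK r hr).continuousAt.continuousWithinAt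
  have hFc : ContinuousOn F (Set.Ioi 1) := hf.sub hKc
  -- step 1: integral of the tested function vanishes
  have h1 : ∀ η : ℝ → ℝ, ContDiff ℝ ∞ η → ∀ a b : ℝ, 1 < a → a < b →
      tsupport η ⊆ Set.Ioo a b → ∫ r in a..b, deriv η r * F r = 0 := by
    intro η hη a b ha hab hs
    have hsub : Set.uIcc a b ⊆ Set.Ioi (1:ℝ) := by
      rw [Set.uIcc_of_le hab.le]; intro x hx; exact lt_of_lt_of_le ha hx.1
    have hcs : HasCompactSupport η :=
      HasCompactSupport.of_support_subset_isCompact isCompact_Icc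
        ((subset_tsupport _).trans (hs.trans Set.Ioo_subset_Icc_self))
    have e1 := h η hη hcs (hs.trans fun x hx => lt_trans ha hx.1)
    have hz : ∀ x, x ∉ Set.Ioo a b → η x = 0 ∧ deriv η x = 0 := by
      intro x hx
      have : x ∉ tsupport η := fun h => hx (hs h)
      refine ⟨image_eq_zero_of_notMem_tsupport this, ?_⟩
      exact image_eq_zero_of_notMem_tsupport (fun h => this (tsupport_deriv_subset (f := η) h))
    rw [setIntegral_Ioi_eq_interval _ a b ha hab] at e1
    swap
    · intro x hx; simp [hz x hx]
    have hdc : Continuous (deriv η) := hη.continuous_deriv (by simp)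
    have e2 : ∫ r in a..b, (deriv η r * K r + η r * q r) = 0 := by
      rw [intervalIntegral.integral_eq_sub_of_hasDerivAt (f := fun r => η r * K r)]
      · rw [(hz a (by simp)).1, (hz b (by simp)).1]; simp
      · intro x hx
        exact ((hη.differentiable (by simp) x).hasDerivAt).mul (hK x (hsub hx))
      · apply ContinuousOn.intervalIntegrable
        exact (hdc.continuousOn.mul (hKc.mono hsub)).add (hη.continuous.continuousOn.mul (hq.mono hsub))
    rw [← sub_eq_zero.mpr (e1.trans e2.symm), ← intervalIntegral.integral_sub]
    · apply intervalIntegral.integral_congr; intro x _; simp only [hF]; ring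
    · apply ContinuousOn.intervalIntegrable
      exact (hdc.continuousOn.mul (hf.mono hsub)).add (hη.continuous.continuousOn.mul (hq.mono hsub))
    · apply ContinuousOn.intervalIntegrable
      exact (hdc.continuousOn.mul (hKc.mono hsub)).add (hη.continuous.continuousOn.mul (hq.mono hsub))
  -- fixed bump
  let bb : ContDiffBump (3:ℝ) := ⟨1/2, 1, by norm_num, by norm_num⟩
  let β : ℝ → ℝ := bb.normed volume
  have hβ : ContDiff ℝ ∞ β := bb.contDiff_normed
  have hβi : ∫ x, β x = 1 := bb.integral_normed
  have hβs : tsupport β = closedBall 3 1 := bb.tsupport_normed_eq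
  have hβc : HasCompactSupport β := bb.hasCompactSupport_normed
  set c : ℝ := ∫ x, β x * F x with hc
  have h2 : ∀ᵐ x : ℝ, x ∈ Set.Ioi (1:ℝ) → F x - c = 0 := by
    apply isOpen_Ioi.ae_eq_zero_of_integral_contDiff_smul_eq_zero
    · exact (hFc.sub continuousOn_const).locallyIntegrableOn measurableSet_Ioi
    intro g hg hgc hgs
    obtain ⟨a, b, ha, hab, hsub⟩ := compact_Ioi_bounds (tsupport g ∪ tsupport β)
      (hgc.isCompact.union hβc.isCompact) (by
        refine Set.union_subset hgs ?_
        rw [hβs]; intro x hx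
        rw [mem_closedBall, Real.dist_eq, abs_le] at hx
        simp; linarith [hx.1])
    have hgz : ∀ x, x ∉ Set.Ioo a b → g x = 0 := fun x hx =>
      image_eq_zero_of_notMem_tsupport fun h => hx (hsub (Or.inl h))
    have hbz : ∀ x, x ∉ Set.Ioo a b → β x = 0 := fun x hx =>
      image_eq_zero_of_notMem_tsupport fun h => hx (hsub (Or.inr h))
    obtain ⟨a', b', ha', hab', hsub'⟩ := compact_Ioi_bounds (Set.Icc a b) isCompact_Icc
      (fun x hx => lt_of_lt_of_le ha hx.1)
    set G : ℝ := ∫ x, g x with hG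
    set k : ℝ → ℝ := fun x => g x - G * β x with hk
    have hkc : Continuous k := by have := hg.continuous; have := hβ.continuous; fun_prop
    have hkz : ∀ x, x ∉ Set.Ioo a b → k x = 0 := by
      intro x hx; simp [hk, hgz x hx, hbz x hx]
    set η : ℝ → ℝ := fun r => ∫ t in a..r, k t with hη
    have hηd : ∀ r, HasDerivAt η (k r) r := fun r =>
      intervalIntegral.integral_hasDerivAt_right (hkc.intervalIntegrable _ _)
        (hkc.stronglyMeasurableAtFilter _ _) hkc.continuousAt
    have hder : deriv η = k := funext fun r => (hηd r).deriv
    have hηs : ContDiff ℝ ∞ η := by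
      rw [contDiff_infty_iff_deriv]
      refine ⟨fun r => (hηd r).differentiableAt, ?_⟩
      rw [hder]; exact hg.sub (contDiff_const.mul hβ)
    have hkab : ∫ t in a..b, k t = 0 := by
      rw [← integral_eq_interval k a b hab hkz, hk, integral_sub, integral_const_mul, hβi]
      · simp [hG]
      · exact hg.continuous.integrable_of_hasCompactSupport hgc
      · exact (hβ.continuous.integrable_of_hasCompactSupport hβc).const_mul _
    have hηz : ∀ x, x ∉ Set.Icc a b → η x = 0 := by
      intro x hx
      rw [Set.mem_Icc, not_and_or, not_le, not_le] at hx
      rcases hx with hx | hx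
      · simp only [hη]
        rw [intervalIntegral.integral_zero_ae]
        refine Filter.Eventually.of_forall fun t ht => hkz t fun h => ?_
        rw [Set.uIoc_of_ge hx.le] at ht
        exact absurd h.1 (not_lt.mpr ht.2)
      · simp only [hη]
        rw [← intervalIntegral.integral_add_adjacent_intervals (hkc.intervalIntegrable a b)
          (hkc.intervalIntegrable b x), hkab, zero_add, intervalIntegral.integral_zero_ae]
        refine Filter.Eventually.of_forall fun t ht => hkz t fun h => ?_
        rw [Set.uIoc_of_le hx.le] at ht
        exact absurd h.2 (not_lt.mpr ht.1.le)
    have hηsup : tsupport η ⊆ Set.Ioo a' b' := by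
      refine Set.Subset.trans ?_ hsub'
      apply closure_minimal _ isClosed_Icc
      intro x hx
      by_contra hcon
      exact hx (hηz x hcon)
    have e3 := h1 η hηs a' b' ha' hab' hηsup
    have hkz' : ∀ x, x ∉ Set.Ioo a' b' → k x = 0 := fun x hx => hkz x
      fun h => hx (hsub' (Set.Ioo_subset_Icc_self h))
    rw [hder, ← integral_eq_interval _ a' b' hab' (fun x hx => by simp [hkz' x hx])] at e3
    have intF : ∀ g : ℝ → ℝ, Continuous g → HasCompactSupport g → tsupport g ⊆ Set.Ioi 1 →
        Integrable (fun x => g x * F x) := by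
      intro g hgc hgcs hgs
      apply Continuous.integrable_of_hasCompactSupport
      · rw [continuous_iff_continuousAt]
        intro x
        by_cases hx : x ∈ tsupport g
        · exact hgc.continuousAt.mul (hFc.continuousAt (isOpen_Ioi.mem_nhds (hgs hx)))
        · have : (fun x => g x * F x) =ᶠ[𝓝 x] fun _ => 0 := by
            filter_upwards [(isClosed_tsupport g).isOpen_compl.mem_nhds hx] with y hy
            rw [image_eq_zero_of_notMem_tsupport hy, zero_mul]
          exact continuousAt_const.congr this.symm
      · exact hgcs.mul_right
    have i1 := intF g hg.continuous hgc hgs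
    have i2 := intF β hβ.continuous hβc (fun x hx => lt_trans ha (hsub (Or.inr hx)).1)
    have e4 : ∫ x, k x * F x = (∫ x, g x * F x) - G * c := by
      rw [hc, ← integral_const_mul, ← integral_sub i1 (i2.const_mul _)]
      congr 1; funext x; simp only [hk]; ring
    rw [e4] at e3
    simp only [smul_eq_mul, mul_sub]
    rw [integral_sub i1 ((hg.continuous.integrable_of_hasCompactSupport hgc).mul_const _),
      integral_mul_const]
    exact e3
  have h3 : ∀ r, 1 < r → F r = c := by
    have : F =ᵐ[volume.restrict (Set.Ioi (1:ℝ))] fun _ => c := by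
      rw [Filter.EventuallyEq, ae_restrict_iff' measurableSet_Ioi]
      filter_upwards [h2] with x hx hx1
      linarith [hx hx1]
    have := Measure.eqOn_open_of_ae_eq this isOpen_Ioi hFc continuousOn_const
    exact fun r hr => this hr
  intro r hr
  have h4 : f =ᶠ[𝓝 r] fun t => K t + c := by
    filter_upwards [isOpen_Ioi.mem_nhds hr] with t ht
    have := h3 t ht
    simp only [hF] at this
    linarith
  exact ((hK r hr).add_const c).congr_of_eventuallyEq h4

end

section
open scoped Topology ENNReal NNReal Pointwise ContDiff

instance sig_openPos (n : ℕ) : (sig n).IsOpenPosMeasure := by unfold sig; infer_instance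

lemma isOpen_Om (n : ℕ) : IsOpen (OmegaExt n) := isOpen_lt continuous_const continuous_norm

lemma smul_mem_Om {n : ℕ} {r : ℝ} (hr : 1 < r) (θ : sphere (0 : En n) 1) :
    r • θ.1 ∈ OmegaExt n := by
  have : ‖θ.1‖ = 1 := by simp
  simp only [OmegaExt, Set.mem_ofPred_eq, norm_smul, this, mul_one, Real.norm_eq_abs]
  exact lt_of_lt_of_le hr (le_abs_self r)

lemma norm_smul_sph {n : ℕ} {r : ℝ} (hr : 0 < r) (θ : sphere (0 : En n) 1) :
    ‖r • θ.1‖ = r := by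
  have : ‖θ.1‖ = 1 := by simp
  simp [norm_smul, this, abs_of_pos hr]

lemma sph_cont {n : ℕ} {f : En n → ℝ} (hf : ContinuousOn f (OmegaExt n)) {r : ℝ} (hr : 1 < r) :
    Continuous (fun θ : sphere (0 : En n) 1 => f (r • θ.1)) := by
  apply hf.comp_continuous (by fun_prop) (fun θ => smul_mem_Om hr θ)

lemma sph_int {n : ℕ} {f : En n → ℝ} (hf : ContinuousOn f (OmegaExt n)) {r : ℝ} (hr : 1 < r) :
    Integrable (fun θ : sphere (0 : En n) 1 => f (r • θ.1)) (sig n) :=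
  (sph_cont hf hr).integrable_of_hasCompactSupport (HasCompactSupport.of_compactSpace _)

lemma Sph_contOn {n : ℕ} {f : En n → ℝ} (hf : ContinuousOn f (OmegaExt n)) :
    ContinuousOn (Sph n f) (Set.Ioi 1) := by
  apply (continuousOn_id.pow (n-1)).mul
  rw [continuousOn_iff_continuous_domRestrict]
  have h1 : Continuous (Function.uncurry
      (fun (r : Set.Ioi (1:ℝ)) (θ : sphere (0 : En n) 1) => f (r.1 • θ.1))) := by
    have h0 : Continuous (fun p : Set.Ioi (1:ℝ) × sphere (0 : En n) 1 => p.1.1 • p.2.1) :=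
      (continuous_subtype_val.comp continuous_fst).smul (continuous_subtype_val.comp continuous_snd)
    exact hf.comp_continuous h0 (fun θ => smul_mem_Om θ.1.2 θ.2)
  have : LocallyCompactSpace (Set.Ioi (1:ℝ)) := isOpen_Ioi.locallyCompactSpace
  have := continuous_parametric_integral_of_continuous (μ := sig n) h1 isCompact_univ
  simp only [Measure.restrict_univ] at this
  exact this

lemma Sph_congr {n : ℕ} {f g : En n → ℝ} (h : ∀ x ∈ OmegaExt n, f x = g x) {r : ℝ} (hr : 1 < r) :
    Sph n f r = Sph n g r := by
  unfold Sph; congr 2; funext θ; exact h _ (smul_mem_Om hr θ)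

lemma Sph_add {n : ℕ} {f g : En n → ℝ} (hf : ContinuousOn f (OmegaExt n))
    (hg : ContinuousOn g (OmegaExt n)) {r : ℝ} (hr : 1 < r) :
    Sph n (fun x => f x + g x) r = Sph n f r + Sph n g r := by
  unfold Sph; rw [integral_add (sph_int hf hr) (sph_int hg hr)]; ring

lemma Sph_sub {n : ℕ} {f g : En n → ℝ} (hf : ContinuousOn f (OmegaExt n))
    (hg : ContinuousOn g (OmegaExt n)) {r : ℝ} (hr : 1 < r) :
    Sph n (fun x => f x - g x) r = Sph n f r - Sph n g r := by
  unfold Sph; rw [integral_sub (sph_int hf hr) (sph_int hg hr)]; ring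

lemma Sph_radial {n : ℕ} (c : ℝ → ℝ) (f : En n → ℝ) {r : ℝ} (hr : 0 < r) :
    Sph n (fun x => c ‖x‖ * f x) r = c r * Sph n f r := by
  unfold Sph
  simp only [norm_smul_sph hr]
  rw [integral_const_mul]; ring

lemma Sph_const_mul {n : ℕ} (c : ℝ) (f : En n → ℝ) (r : ℝ) :
    Sph n (fun x => c * f x) r = c * Sph n f r := by
  unfold Sph
  rw [integral_const_mul]; ring

lemma Sph_mono {n : ℕ} {f g : En n → ℝ} (hf : ContinuousOn f (OmegaExt n))
    (hg : ContinuousOn g (OmegaExt n)) {r : ℝ} (hr : 1 < r)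
    (h : ∀ x, ‖x‖ = r → f x ≤ g x) : Sph n f r ≤ Sph n g r := by
  unfold Sph
  apply mul_le_mul_of_nonneg_left _ (by positivity)
  exact integral_mono (sph_int hf hr) (sph_int hg hr)
    fun θ => h _ (norm_smul_sph (by linarith) θ)

lemma Sph_nonneg {n : ℕ} {f : En n → ℝ} {r : ℝ} (hr : 1 < r)
    (h : ∀ x, ‖x‖ = r → 0 ≤ f x) : 0 ≤ Sph n f r := by
  unfold Sph
  apply mul_nonneg (by positivity)
  exact integral_nonneg fun θ => h _ (norm_smul_sph (by linarith) θ)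

lemma Sph_eq_zero {n : ℕ} {f : En n → ℝ} (hf : ContinuousOn f (OmegaExt n)) {r : ℝ} (hr : 1 < r)
    (h : ∀ x, ‖x‖ = r → 0 ≤ f x) (h0 : Sph n f r = 0) : ∀ x, ‖x‖ = r → f x = 0 := by
  unfold Sph at h0
  have hr0 : 0 < r := by linarith
  rcases mul_eq_zero.mp h0 with h1 | h1
  · exact absurd h1 (by positivity)
  have h2 : (fun θ : sphere (0 : En n) 1 => f (r • θ.1)) = 0 :=
    ((sph_cont hf hr).ae_eq_iff_eq (sig n) continuous_zero).mp
      ((integral_eq_zero_iff_of_nonneg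
      (fun θ => h _ (norm_smul_sph (by linarith) θ)) (sph_int hf hr)).mp h1)
  intro x hx
  have hx1 : r⁻¹ • x ∈ sphere (0 : En n) 1 := by
    simp [norm_smul, hx, abs_of_pos hr0, hr0.ne']
  have := congrFun h2 ⟨r⁻¹ • x, hx1⟩
  simpa [smul_smul, hr0.ne'] using this

/-- Cauchy-Schwarz: if `k² ≤ f g` pointwise in the sense of quadratic forms. -/
lemma Sph_cs {n : ℕ} {f g k : En n → ℝ} (hf : ContinuousOn f (OmegaExt n))
    (hg : ContinuousOn g (OmegaExt n)) (hk : ContinuousOn k (OmegaExt n)) {r : ℝ} (hr : 1 < r)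
    (h : ∀ x, ‖x‖ = r → ∀ t : ℝ, 0 ≤ f x + 2 * t * k x + t ^ 2 * g x) :
    Sph n k r ^ 2 ≤ Sph n f r * Sph n g r := by
  have h1 : ∀ t : ℝ, 0 ≤ Sph n g r * (t * t) + (2 * Sph n k r) * t + Sph n f r := by
    intro t
    have e1 : Sph n (fun x => (f x + (2 * t) * k x) + t ^ 2 * g x) r =
        Sph n f r + 2 * t * Sph n k r + t ^ 2 * Sph n g r := by
      rw [Sph_add (hf.fun_add (continuousOn_const.fun_mul hk)) (continuousOn_const.fun_mul hg) hr,
        Sph_add hf (continuousOn_const.fun_mul hk) hr, Sph_const_mul, Sph_const_mul]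
    have e2 : 0 ≤ Sph n (fun x => (f x + (2 * t) * k x) + t ^ 2 * g x) r :=
      Sph_nonneg hr fun x hx => by have := h x hx t; linarith
    rw [e1] at e2; linarith
  have := discrim_le_zero h1
  unfold discrim at this
  nlinarith

/-- Radial pair. -/
def RP (n : ℕ) (P Q : En n → ℝ) : Prop :=
  ContinuousOn P (OmegaExt n) ∧ ContinuousOn Q (OmegaExt n) ∧
    ∀ r, 1 < r → HasDerivAt (Sph n P) (Sph n Q r) r

lemma RP.add {n : ℕ} {P Q P' Q' : En n → ℝ} (h : RP n P Q) (h' : RP n P' Q') :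
    RP n (fun x => P x + P' x) (fun x => Q x + Q' x) := by
  refine ⟨h.1.add h'.1, h.2.1.add h'.2.1, fun r hr => ?_⟩
  rw [Sph_add h.2.1 h'.2.1 hr]
  apply ((h.2.2 r hr).add (h'.2.2 r hr)).congr_of_eventuallyEq
  filter_upwards [isOpen_Ioi.mem_nhds hr] with t ht
  exact Sph_add h.1 h'.1 ht

lemma RP.congr {n : ℕ} {P Q P' Q' : En n → ℝ} (h : RP n P Q)
    (hP : ∀ x ∈ OmegaExt n, P' x = P x) (hQ : ∀ x ∈ OmegaExt n, Q' x = Q x) : RP n P' Q' := by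
  refine ⟨h.1.congr hP, h.2.1.congr hQ, fun r hr => ?_⟩
  rw [Sph_congr hQ hr]
  apply (h.2.2 r hr).congr_of_eventuallyEq
  filter_upwards [isOpen_Ioi.mem_nhds hr] with t ht
  exact Sph_congr hP ht

lemma RP.radial {n : ℕ} {P Q : En n → ℝ} (h : RP n P Q) (c c' : ℝ → ℝ)
    (hc : ∀ r, 1 < r → HasDerivAt c (c' r) r) (hc' : ContinuousOn c' (Set.Ioi 1)) :
    RP n (fun x => c ‖x‖ * P x) (fun x => c ‖x‖ * Q x + c' ‖x‖ * P x) := by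
  have hcc : ContinuousOn c (Set.Ioi 1) := fun r hr => (hc r hr).continuousAt.continuousWithinAt
  have h1 : ContinuousOn (fun x : En n => c ‖x‖) (OmegaExt n) :=
    hcc.comp continuous_norm.continuousOn fun x hx => hx
  have h2 : ContinuousOn (fun x : En n => c' ‖x‖) (OmegaExt n) :=
    hc'.comp continuous_norm.continuousOn fun x hx => hx
  refine ⟨h1.mul h.1, (h1.mul h.2.1).add (h2.mul h.1), fun r hr => ?_⟩
  rw [Sph_add (h1.fun_mul h.2.1) (h2.fun_mul h.1) hr, Sph_radial c Q (by linarith),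
    Sph_radial c' P (by linarith)]
  have := ((hc r hr).mul (h.2.2 r hr))
  rw [add_comm] at this
  apply this.congr_of_eventuallyEq
  filter_upwards [isOpen_Ioi.mem_nhds hr] with t ht
  exact Sph_radial c P (lt_trans one_pos ht)

lemma cutoff_cont {n : ℕ} {φ P : En n → ℝ} (hφ : Continuous φ) (hs : tsupport φ ⊆ OmegaExt n)
    (hP : ContinuousOn P (OmegaExt n)) : Continuous (fun x => φ x * P x) := by
  rw [continuous_iff_continuousAt]
  intro x
  by_cases hx : x ∈ tsupport φ
  · exact hφ.continuousAt.mul (hP.continuousAt ((isOpen_Om n).mem_nhds (hs hx)))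
  · have : (fun x => φ x * P x) =ᶠ[𝓝 x] fun _ => 0 := by
      filter_upwards [(isClosed_tsupport φ).isOpen_compl.mem_nhds hx] with y hy
      rw [image_eq_zero_of_notMem_tsupport hy, zero_mul]
    exact continuousAt_const.congr this.symm

lemma cutoff_contDiff {n : ℕ} {φ P : En n → ℝ} (hφ : ContDiff ℝ 1 φ) (hs : tsupport φ ⊆ OmegaExt n)
    (hP : ContDiffOn ℝ 1 P (OmegaExt n)) : ContDiff ℝ 1 (fun x => φ x * P x) := by
  rw [contDiff_iff_contDiffAt]
  intro x
  by_cases hx : x ∈ tsupport φ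
  · exact hφ.contDiffAt.mul (hP.contDiffAt ((isOpen_Om n).mem_nhds (hs hx)))
  · have : (fun x => φ x * P x) =ᶠ[𝓝 x] fun _ => 0 := by
      filter_upwards [(isClosed_tsupport φ).isOpen_compl.mem_nhds hx] with y hy
      rw [image_eq_zero_of_notMem_tsupport hy, zero_mul]
    exact contDiffAt_const.congr_of_eventuallyEq this

lemma radial_supp {n : ℕ} {η : ℝ → ℝ} (hc : HasCompactSupport η) (hs : tsupport η ⊆ Set.Ioi 1) :
    HasCompactSupport (fun x : En n => η ‖x‖) ∧ tsupport (fun x : En n => η ‖x‖) ⊆ OmegaExt n := by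
  have hcl : IsClosed ((fun x : En n => ‖x‖) ⁻¹' tsupport η) :=
    (isClosed_tsupport η).preimage continuous_norm
  have hsub : tsupport (fun x : En n => η ‖x‖) ⊆ (fun x : En n => ‖x‖) ⁻¹' tsupport η := by
    apply closure_minimal _ hcl
    intro x hx
    exact subset_tsupport _ hx
  refine ⟨?_, fun x hx => hs (hsub hx)⟩
  obtain ⟨a, b, ha, hab, hK⟩ := compact_Ioi_bounds _ hc.isCompact hs
  apply HasCompactSupport.of_support_subset_isCompact (isCompact_closedBall (0 : En n) b)
  intro x hx
  simpa using (hK (hsub (subset_tsupport _ hx))).2.le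

lemma radial_contDiff {n : ℕ} {η : ℝ → ℝ} (hη : ContDiff ℝ ∞ η) (hs : tsupport η ⊆ Set.Ioi 1) :
    ContDiff ℝ ∞ (fun x : En n => η ‖x‖) := by
  rw [contDiff_iff_contDiffAt]
  intro x
  by_cases hx : x = 0
  · have : (fun x : En n => η ‖x‖) =ᶠ[𝓝 x] fun _ => 0 := by
      filter_upwards [ball_mem_nhds x one_pos] with y hy
      apply image_eq_zero_of_notMem_tsupport
      intro h
      have := hs h
      rw [hx] at hy
      simp at hy this
      linarith
    exact contDiffAt_const.congr_of_eventuallyEq this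
  · exact hη.contDiffAt.comp x (contDiffAt_norm ℝ hx)

/-- From the tested identity to radial pairs. -/
lemma RP.of_test {n : ℕ} (hn : 1 ≤ n) {P Q : En n → ℝ} (hP : ContinuousOn P (OmegaExt n))
    (hQ : ContinuousOn Q (OmegaExt n))
    (h : ∀ η : ℝ → ℝ, ContDiff ℝ ∞ η → HasCompactSupport η → tsupport η ⊆ Set.Ioi 1 →
      ∫ x : En n, (deriv η ‖x‖ * P x + η ‖x‖ * Q x) = 0) : RP n P Q := by
  refine ⟨hP, hQ, duBoisReymond _ _ (Sph_contOn hP) (Sph_contOn hQ) ?_⟩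
  intro η hη hc hs
  have hd : Continuous (deriv η) := hη.continuous_deriv (by simp)
  have hdc : HasCompactSupport (deriv η) := hc.deriv
  have hds : tsupport (deriv η) ⊆ Set.Ioi 1 := (tsupport_deriv_subset).trans hs
  have r1 := radial_supp (n := n) hc hs
  have r2 := radial_supp (n := n) hdc hds
  have i1 : Integrable (fun x : En n => deriv η ‖x‖ * P x) :=
    (cutoff_cont (hd.comp continuous_norm) r2.2 hP).integrable_of_hasCompactSupport r2.1.mul_right
  have i2 : Integrable (fun x : En n => η ‖x‖ * Q x) :=
    (cutoff_cont (hη.continuous.comp continuous_norm) r1.2 hQ).integrable_of_hasCompactSupport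
      r1.1.mul_right
  have e := h η hη hc hs
  rw [integral_add i1 i2, integral_polar n hn _ i1, integral_polar n hn _ i2] at e
  refine Eq.trans ?_ e
  obtain ⟨a, b, ha, hab, hK⟩ := compact_Ioi_bounds _ hc.isCompact hs
  have hz : ∀ x, x ∉ Set.Ioo a b → η x = 0 ∧ deriv η x = 0 := by
    intro x hx
    have : x ∉ tsupport η := fun h => hx (hK h)
    refine ⟨image_eq_zero_of_notMem_tsupport this, ?_⟩
    exact image_eq_zero_of_notMem_tsupport (fun h => this (tsupport_deriv_subset (f := η) h))
  have hsub : Set.uIcc a b ⊆ Set.Ioi (1:ℝ) := by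
    rw [Set.uIcc_of_le hab.le]; intro x hx; exact lt_of_lt_of_le ha hx.1
  have f1 : ∫ r in Set.Ioi (0:ℝ), Sph n (fun x => deriv η ‖x‖ * P x) r =
      ∫ r in Set.Ioi (0:ℝ), deriv η r * Sph n P r :=
    setIntegral_congr_fun measurableSet_Ioi fun r hr => Sph_radial _ _ hr
  have f2 : ∫ r in Set.Ioi (0:ℝ), Sph n (fun x => η ‖x‖ * Q x) r =
      ∫ r in Set.Ioi (0:ℝ), η r * Sph n Q r :=
    setIntegral_congr_fun measurableSet_Ioi fun r hr => Sph_radial _ _ hr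
  rw [f1, f2, setIntegral_Ioi_eq_interval _ a b ha hab, setIntegral_Ioi_eq_interval _ a b ha hab,
    setIntegral_Ioi_eq_interval _ a b ha hab, intervalIntegral.integral_add]
  · exact (hd.continuousOn.mul ((Sph_contOn hP).mono hsub)).intervalIntegrable
  · exact (hη.continuous.continuousOn.mul ((Sph_contOn hQ).mono hsub)).intervalIntegrable
  all_goals (intro x hx; simp [hz x hx])

end

section
open scoped Topology ENNReal NNReal Pointwise ContDiff Convolution

/-- Coordinate vector. -/
def ev {n : ℕ} (i : Fin n) : En n := EuclideanSpace.single i (1:ℝ)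

/-- Partial derivative. -/
def pd {n : ℕ} (i : Fin n) (f : En n → ℝ) (x : En n) : ℝ := fderiv ℝ f x (ev i)

lemma gradient_apply {n : ℕ} (f : En n → ℝ) (x : En n) (i : Fin n) :
    gradient f x i = pd i f x := by
  have h : inner ℝ (gradient f x) (ev i) = fderiv ℝ f x (ev i) := by
    unfold gradient; exact InnerProductSpace.toDual_symm_apply
  rw [pd, ← h, ev, EuclideanSpace.inner_single_right]
  simp

lemma norm_ev {n : ℕ} (i : Fin n) : ‖ev i‖ = 1 := by simp [ev]

lemma pd_cont {n : ℕ} (i : Fin n) {f : En n → ℝ} (hf : ContDiff ℝ 1 f) : Continuous (pd i f) :=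
  (hf.continuous_fderiv (by simp)).clm_apply continuous_const

lemma pd_contOn {n : ℕ} (i : Fin n) {f : En n → ℝ} (hf : ContDiffOn ℝ 1 f (OmegaExt n)) :
    ContinuousOn (pd i f) (OmegaExt n) :=
  (hf.continuousOn_fderiv_of_isOpen (isOpen_Om n) (by simp)).clm_apply continuousOn_const

lemma diffAt_Om {n : ℕ} {f : En n → ℝ} (hf : ContDiffOn ℝ 1 f (OmegaExt n)) {x : En n}
    (hx : x ∈ OmegaExt n) : DifferentiableAt ℝ f x :=
  (hf.contDiffAt ((isOpen_Om n).mem_nhds hx)).differentiableAt (by simp)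

lemma pd_mul {n : ℕ} (i : Fin n) {f g : En n → ℝ} {x : En n} (hf : DifferentiableAt ℝ f x)
    (hg : DifferentiableAt ℝ g x) :
    pd i (fun y => f y * g y) x = pd i f x * g x + f x * pd i g x := by
  unfold pd
  rw [fderiv_fun_mul hf hg]
  simp; ring

lemma pd_add {n : ℕ} (i : Fin n) {f g : En n → ℝ} {x : En n} (hf : DifferentiableAt ℝ f x)
    (hg : DifferentiableAt ℝ g x) :
    pd i (fun y => f y + g y) x = pd i f x + pd i g x := by
  unfold pd
  rw [fderiv_fun_add hf hg]
  simp

lemma pd_sub {n : ℕ} (i : Fin n) {f g : En n → ℝ} {x : En n} (hf : DifferentiableAt ℝ f x)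
    (hg : DifferentiableAt ℝ g x) :
    pd i (fun y => f y - g y) x = pd i f x - pd i g x := by
  unfold pd
  rw [fderiv_fun_sub hf hg]
  simp

lemma pd_supp {n : ℕ} (i : Fin n) (f : En n → ℝ) {x : En n} (hx : x ∉ tsupport f) :
    pd i f x = 0 := by
  have : fderiv ℝ f x = 0 :=
    image_eq_zero_of_notMem_tsupport (fun h => hx (tsupport_fderiv_subset ℝ h))
  simp [pd, this]

lemma pd_tsupport {n : ℕ} (i : Fin n) (f : En n → ℝ) : tsupport (pd i f) ⊆ tsupport f := by
  apply closure_minimal _ (isClosed_tsupport f)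
  intro x hx
  by_contra h
  exact hx (pd_supp i f h)

lemma pd_compact {n : ℕ} (i : Fin n) {f : En n → ℝ} (hf : HasCompactSupport f) :
    HasCompactSupport (pd i f) :=
  hf.isCompact.of_isClosed_subset (isClosed_tsupport _) (pd_tsupport i f)

lemma pd_congr {n : ℕ} (i : Fin n) {f g : En n → ℝ} {x : En n} (h : f =ᶠ[𝓝 x] g) :
    pd i f x = pd i g x := by
  unfold pd; rw [h.fderiv_eq]

lemma integral_pd {n : ℕ} (i : Fin n) {f : En n → ℝ} (hf : ContDiff ℝ 1 f)
    (hc : HasCompactSupport f) : ∫ x, pd i f x = 0 := by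
  have h1 : Integrable f := hf.continuous.integrable_of_hasCompactSupport hc
  have h2 : Integrable (pd i f) := (pd_cont i hf).integrable_of_hasCompactSupport (pd_compact i hc)
  have := integral_mul_fderiv_eq_neg_fderiv_mul_of_integrable (μ := (volume : Measure (En n)))
    (f := fun _ => (1:ℝ)) (g := f) (v := ev i) (by simp) (by simpa using (show Integrable (fun x => fderiv ℝ f x (ev i)) volume from h2))
    (by simpa using h1)
    (by intro x; simp) (fun x _ => hf.differentiable (by simp) x)
  simpa [pd] using this

lemma exists_radial_cutoff {n : ℕ} (K : Set (En n)) (hK : IsCompact K) (hs : K ⊆ OmegaExt n) :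
    ∃ χ : En n → ℝ, ContDiff ℝ ∞ χ ∧ HasCompactSupport χ ∧ tsupport χ ⊆ OmegaExt n ∧
      (∀ x, 0 ≤ χ x) ∧ (∀ x ∈ K, χ =ᶠ[𝓝 x] fun _ => 1) := by
  obtain ⟨a, b, ha, hab, hsub⟩ := compact_Ioi_bounds ((fun x => ‖x‖) '' K)
    (hK.image continuous_norm) (by rintro _ ⟨x, hx, rfl⟩; exact hs hx)
  let κ : ContDiffBump ((a+b)/2) := ⟨(b-a)/2, (b-a)/2 + (a-1)/2, by linarith, by linarith⟩
  have hκs : tsupport κ ⊆ Set.Ioi 1 := by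
    rw [κ.tsupport_eq]
    intro x hx
    rw [mem_closedBall, Real.dist_eq, abs_le] at hx
    have := hx.1
    simp only [κ] at this
    simp; linarith
  have hr := radial_supp (n := n) κ.hasCompactSupport hκs
  refine ⟨fun x => κ ‖x‖, radial_contDiff κ.contDiff hκs, hr.1, hr.2, fun x => κ.nonneg, ?_⟩
  intro x hx
  have h1 : ‖x‖ ∈ Set.Ioo a b := hsub ⟨x, hx, rfl⟩
  have h2 : ∀ᶠ y : En n in 𝓝 x, ‖y‖ ∈ Set.Ioo a b :=
    continuous_norm.continuousAt.eventually (isOpen_Ioo.mem_nhds h1)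
  filter_upwards [h2] with y hy
  apply κ.one_of_mem_closedBall
  rw [mem_closedBall, Real.dist_eq, abs_le]
  simp only [κ]
  constructor <;> linarith [hy.1, hy.2]

lemma mollify {n : ℕ} {φ : En n → ℝ} {U : Set (En n)} (hU : IsOpen U) (hφ : ContDiff ℝ 1 φ)
    (hc : HasCompactSupport φ) (hs : tsupport φ ⊆ U) :
    ∃ K, IsCompact K ∧ K ⊆ U ∧ tsupport φ ⊆ K ∧ ∀ ε > 0, ∃ ψ : En n → ℝ, ContDiff ℝ ∞ ψ ∧
      tsupport ψ ⊆ K ∧ ∀ x, |ψ x - φ x| ≤ ε ∧ ∀ i, |pd i ψ x - pd i φ x| ≤ ε := by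
  obtain ⟨δ, hδ, hδU⟩ := hc.isCompact.exists_cthickening_subset_open hU hs
  refine ⟨cthickening δ (tsupport φ), hc.isCompact.cthickening, hδU, self_subset_cthickening _, ?_⟩
  intro ε hε
  have huc : UniformContinuous φ := hc.uniformContinuous_of_continuous hφ.continuous
  have huc' : ∀ i, UniformContinuous (pd i φ) := fun i =>
    (pd_compact i hc).uniformContinuous_of_continuous (pd_cont i hφ)
  rw [Metric.uniformContinuous_iff] at huc
  simp only [Metric.uniformContinuous_iff] at huc'
  obtain ⟨d0, hd0, h0⟩ := huc ε hε
  choose d hd h1 using fun i => huc' i ε hε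
  obtain ⟨d1, hd1, hd1'⟩ : ∃ d1 > 0, ∀ i, d1 ≤ d i := by
    rcases isEmpty_or_nonempty (Fin n) with he | he
    · exact ⟨1, one_pos, fun i => he.elim i⟩
    · refine ⟨Finset.univ.inf' Finset.univ_nonempty d, ?_, fun i => Finset.inf'_le _ (Finset.mem_univ i)⟩
      rw [gt_iff_lt, Finset.lt_inf'_iff]; exact fun i _ => hd i
  set R := min δ (min d0 d1) with hR
  have hR0 : 0 < R := by positivity
  let b : ContDiffBump (0 : En n) := ⟨R/2, R, by linarith, by linarith⟩
  let ψ : En n → ℝ := (b.normed volume) ⋆[ContinuousLinearMap.lsmul ℝ ℝ, volume] φ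
  have hbl : LocallyIntegrable (b.normed (volume : Measure (En n))) :=
    b.continuous_normed.locallyIntegrable
  refine ⟨ψ, ?_, ?_, fun x => ⟨?_, fun i => ?_⟩⟩
  · exact b.hasCompactSupport_normed.contDiff_convolution_left _ b.contDiff_normed
      hφ.continuous.locallyIntegrable
  · apply closure_minimal _ isClosed_cthickening
    refine (support_convolution_subset _).trans ?_
    rintro _ ⟨y, hy, z, hz, rfl⟩
    rw [b.support_normed_eq, mem_ball_zero_iff] at hy
    apply mem_cthickening_of_dist_le _ z δ _ (subset_tsupport _ hz)
    simp only [dist_eq_norm, add_sub_cancel_right]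
    exact hy.le.trans (min_le_left _ _)
  · rw [← Real.dist_eq]
    apply b.dist_normed_convolution_le hφ.continuous.aestronglyMeasurable
    intro y hy
    exact (h0 (lt_of_lt_of_le hy ((min_le_right _ _).trans (min_le_left _ _)))).le
  · have hd2 := hc.hasFDerivAt_convolution_right (ContinuousLinearMap.lsmul ℝ ℝ) hbl hφ x
    have : pd i ψ x = ((b.normed volume) ⋆[ContinuousLinearMap.lsmul ℝ ℝ, volume] (pd i φ)) x := by
      rw [pd, hd2.fderiv]
      exact convolution_precompR_apply _ hbl (hc.fderiv ℝ) (hφ.continuous_fderiv (by simp)) x (ev i)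
    rw [this, ← Real.dist_eq]
    apply b.dist_normed_convolution_le (pd_cont i hφ).aestronglyMeasurable
    intro y hy
    exact (h1 i (lt_of_lt_of_le hy
      ((min_le_right _ _).trans ((min_le_right _ _).trans (hd1' i))))).le

/-- `(A∇u)_i`. -/
def au {n : ℕ} (A : En n → Matrix (Fin n) (Fin n) ℝ) (u : En n → ℝ) (i : Fin n) (x : En n) : ℝ :=
  ∑ j, A x i j * pd j u x

lemma au_contOn {n : ℕ} {A : En n → Matrix (Fin n) (Fin n) ℝ} {u : En n → ℝ}
    (hA : ∀ i j, ContDiffOn ℝ 1 (fun x => A x i j) (OmegaExt n))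
    (hu : ContDiffOn ℝ 1 u (OmegaExt n)) (i : Fin n) : ContinuousOn (au A u i) (OmegaExt n) := by
  unfold au
  exact continuousOn_finsetSum _ fun j _ => (hA i j).continuousOn.mul (pd_contOn j hu)

lemma weak_C1 {n : ℕ} {A : En n → Matrix (Fin n) (Fin n) ℝ} {u : En n → ℝ}
    (hA : ∀ i j, ContDiffOn ℝ 1 (fun x => A x i j) (OmegaExt n)) (hu : WeakSol A u)
    {φ : En n → ℝ} (hφ : ContDiff ℝ 1 φ) (hc : HasCompactSupport φ)
    (hs : tsupport φ ⊆ OmegaExt n) :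
    ∫ x, ((∑ i, au A u i x * pd i φ x) - u x * φ x) = 0 := by
  have hauc := au_contOn hA hu.1
  -- integrability
  have hInt1 : ∀ ψ : En n → ℝ, ContDiff ℝ 1 ψ → HasCompactSupport ψ → tsupport ψ ⊆ OmegaExt n →
      Integrable (fun x => ∑ i, au A u i x * pd i ψ x) := by
    intro ψ h1 h2 h3
    apply integrable_finsetSum
    intro i _
    simp_rw [mul_comm (au A u i _)]
    exact (cutoff_cont (pd_cont i h1) ((pd_tsupport i ψ).trans h3) (hauc i)).integrable_of_hasCompactSupport
      (pd_compact i h2).mul_right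
  have hInt2 : ∀ ψ : En n → ℝ, ContDiff ℝ 1 ψ → HasCompactSupport ψ → tsupport ψ ⊆ OmegaExt n →
      Integrable (fun x => u x * ψ x) := by
    intro ψ h1 h2 h3
    simp_rw [mul_comm (u _)]
    exact (cutoff_cont h1.continuous h3 hu.1.continuousOn).integrable_of_hasCompactSupport
      h2.mul_right
  have hsm : ∀ ψ : En n → ℝ, ContDiff ℝ ∞ ψ → HasCompactSupport ψ → tsupport ψ ⊆ OmegaExt n →
      ∫ x, ((∑ i, au A u i x * pd i ψ x) - u x * ψ x) = 0 := by
    intro ψ h1 h2 h3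
    have h1' : ContDiff ℝ 1 ψ := h1.of_le (by simp)
    rw [integral_sub (hInt1 ψ h1' h2 h3) (hInt2 ψ h1' h2 h3)]
    have := hu.2 ψ h1 h2 h3
    have e1 : ∀ x, (∑ i, (A x).mulVec (fun j => gradient u x j) i * gradient ψ x i) =
        ∑ i, au A u i x * pd i ψ x := by
      intro x
      apply Finset.sum_congr rfl
      intro i _
      simp only [gradient_apply, Matrix.mulVec, dotProduct, au]
    simp_rw [e1] at this
    rw [setIntegral_eq_integral_of_forall_compl_eq_zero, setIntegral_eq_integral_of_forall_compl_eq_zero] at this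
    · rw [this, sub_self]
    · intro x hx
      rw [image_eq_zero_of_notMem_tsupport (fun h => hx (h3 h)), mul_zero]
    · intro x hx
      apply Finset.sum_eq_zero
      intro i _
      rw [pd_supp i ψ (fun h => hx (h3 h)), mul_zero]
  obtain ⟨K, hK, hKU, hφK, happ⟩ := mollify (isOpen_Om n) hφ hc hs
  set V : En n → ℝ := fun x => (∑ i, |au A u i x|) + |u x| with hV
  have hVc : ContinuousOn V (OmegaExt n) :=
    (continuousOn_finsetSum _ fun i _ => (hauc i).abs).add hu.1.continuousOn.abs
  have hVK : IntegrableOn V K := (hVc.mono hKU).integrableOn_compact hK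
  set M := ∫ x in K, V x with hM
  have hV0 : ∀ x, 0 ≤ V x := fun x => by simp only [hV]; positivity
  have hM0 : 0 ≤ M := integral_nonneg hV0
  have key : ∀ ε > 0, |∫ x, ((∑ i, au A u i x * pd i φ x) - u x * φ x)| ≤ ε * M := by
    intro ε hε
    obtain ⟨ψ, hψ, hψK, hψφ⟩ := happ ε hε
    have hψc : HasCompactSupport ψ := hK.of_isClosed_subset (isClosed_tsupport _) hψK
    have hψ1 : ContDiff ℝ 1 ψ := hψ.of_le (by simp)
    have e := hsm ψ hψ hψc (hψK.trans hKU)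
    have j1 : Integrable (fun x => (∑ i, au A u i x * pd i φ x) - u x * φ x) :=
      (hInt1 φ hφ hc hs).sub (hInt2 φ hφ hc hs)
    have j2 : Integrable (fun x => (∑ i, au A u i x * pd i ψ x) - u x * ψ x) :=
      (hInt1 ψ hψ1 hψc (hψK.trans hKU)).sub (hInt2 ψ hψ1 hψc (hψK.trans hKU))
    rw [← sub_zero (∫ x, ((∑ i, au A u i x * pd i φ x) - u x * φ x)), ← e, ← integral_sub j1 j2]
    have hp : ∀ x, ‖((∑ i, au A u i x * pd i φ x) - u x * φ x) -
        ((∑ i, au A u i x * pd i ψ x) - u x * ψ x)‖ ≤ K.indicator (fun x => ε * V x) x := by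
      intro x
      by_cases hx : x ∈ K
      · rw [Set.indicator_of_mem hx]
        have : ((∑ i, au A u i x * pd i φ x) - u x * φ x) -
          ((∑ i, au A u i x * pd i ψ x) - u x * ψ x) =
          (∑ i, au A u i x * (pd i φ x - pd i ψ x)) + u x * (ψ x - φ x) := by
          simp only [mul_sub, Finset.sum_sub_distrib]; ring
        rw [this, Real.norm_eq_abs, hV]
        refine (abs_add_le _ _).trans ?_
        simp only [mul_add, Finset.mul_sum]
        apply add_le_add
        · refine (Finset.abs_sum_le_sum_abs _ _).trans (Finset.sum_le_sum fun i _ => ?_)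
          rw [abs_mul, mul_comm, abs_sub_comm]
          exact mul_le_mul_of_nonneg_right ((hψφ x).2 i) (abs_nonneg _)
        · rw [abs_mul, mul_comm]
          exact mul_le_mul_of_nonneg_right (hψφ x).1 (abs_nonneg _)
      · rw [Set.indicator_of_notMem hx, image_eq_zero_of_notMem_tsupport (fun h => hx (hφK h)),
          image_eq_zero_of_notMem_tsupport (fun h => hx (hψK h))]
        have h1 : ∀ i, pd i φ x = 0 := fun i => pd_supp i φ (fun h => hx (hφK h))
        have h2 : ∀ i, pd i ψ x = 0 := fun i => pd_supp i ψ (fun h => hx (hψK h))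
        simp [h1, h2]
    have := norm_integral_le_of_norm_le (g := K.indicator (fun x => ε * V x))
      ((integrable_indicator_iff hK.measurableSet).mpr (hVK.const_mul ε)) (Eventually.of_forall hp)
    rw [integral_indicator hK.measurableSet, integral_const_mul] at this
    exact this
  rw [← abs_eq_zero]
  apply le_antisymm _ (abs_nonneg _)
  apply le_of_forall_pos_le_add
  intro ε hε
  refine (key (ε / (M + 1)) (by positivity)).trans ?_
  rw [zero_add, div_mul_eq_mul_div, div_le_iff₀ (by positivity)]
  nlinarith

end

section
open scoped Topology ENNReal NNReal Pointwise ContDiff Convolution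

lemma pd_line {n : ℕ} (m : Fin n) {f : En n → ℝ} (hf : ContDiff ℝ 1 f) (x : En n) (t : ℝ) :
    HasDerivAt (fun t : ℝ => f (x + t • ev m)) (pd m f (x + t • ev m)) t := by
  have h1 : HasDerivAt (fun t : ℝ => x + t • ev m) (ev m) t := by
    simpa using ((hasDerivAt_id t).smul_const (ev m)).const_add x
  exact ((hf.differentiable (by simp) _).hasFDerivAt.comp_hasDerivAt t h1)

lemma transl_deriv {n : ℕ} (m : Fin n) {f k : En n → ℝ} (hf : ContDiff ℝ 1 f)
    (hfc : HasCompactSupport f) (hk : Continuous k) (hkc : HasCompactSupport k) :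
    HasDerivAt (fun t : ℝ => ∫ x, f (x + t • ev m) * k x) (∫ x, pd m f x * k x) 0 := by
  obtain ⟨M, hM⟩ := (pd_cont m hf).bounded_above_of_compact_support (pd_compact m hfc)
  have := hasDerivAt_integral_of_dominated_loc_of_deriv_le (μ := (volume : Measure (En n)))
    (F := fun t x => f (x + t • ev m) * k x) (F' := fun t x => pd m f (x + t • ev m) * k x)
    (x₀ := (0:ℝ)) (s := Set.univ) (bound := fun x => M * |k x|) univ_mem ?_ ?_ ?_ ?_ ?_ ?_
  · simpa using this.2
  · refine Eventually.of_forall fun t => Continuous.aestronglyMeasurable ?_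
    have := hf.continuous; fun_prop
  · apply Continuous.integrable_of_hasCompactSupport
    · have := hf.continuous; fun_prop
    · exact hkc.mul_left
  · apply Continuous.aestronglyMeasurable
    have := pd_cont m hf; fun_prop
  · refine Eventually.of_forall fun x t _ => ?_
    rw [norm_mul]
    exact mul_le_mul_of_nonneg_right (hM _) (norm_nonneg _)
  · apply Continuous.integrable_of_hasCompactSupport
    · fun_prop
    · exact hkc.abs.mul_left
  · exact Eventually.of_forall fun x t _ => (pd_line m hf x t).mul_const _

lemma psd_conv {n : ℕ} (a : Fin n → Fin n → ℝ) (hsym : ∀ i j, a i j = a j i)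
    (hpos : ∀ ξ : Fin n → ℝ, 0 ≤ ∑ i, ∑ j, a i j * (ξ i * ξ j)) (U V : Fin n → ℝ) :
    ∑ i, (∑ j, a i j * U j) * (V i - U i) ≤
      1/2 * ((∑ i, ∑ j, a i j * (V i * V j)) - ∑ i, ∑ j, a i j * (U i * U j)) := by
  have h := hpos (fun i => V i - U i)
  have e1 : ∑ i, ∑ j, a i j * ((V i - U i) * (V j - U j)) =
      (∑ i, ∑ j, a i j * (V i * V j)) - (∑ i, ∑ j, a i j * (V i * U j)) -
       (∑ i, ∑ j, a i j * (U i * V j)) + ∑ i, ∑ j, a i j * (U i * U j) := by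
    simp only [← Finset.sum_sub_distrib, ← Finset.sum_add_distrib]
    refine Finset.sum_congr rfl fun i _ => Finset.sum_congr rfl fun j _ => by ring
  have e2 : (∑ i, ∑ j, a i j * (U i * V j)) = ∑ i, ∑ j, a i j * (V i * U j) := by
    rw [Finset.sum_comm]
    refine Finset.sum_congr rfl fun i _ => Finset.sum_congr rfl fun j _ => by rw [hsym j i]; ring
  have e3 : ∑ i, (∑ j, a i j * U j) * (V i - U i) =
      (∑ i, ∑ j, a i j * (V i * U j)) - ∑ i, ∑ j, a i j * (U i * U j) := by
    simp only [← Finset.sum_sub_distrib, Finset.sum_mul]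
    refine Finset.sum_congr rfl fun i _ => Finset.sum_congr rfl fun j _ => by ring
  rw [e1, e2] at h
  rw [e3]
  linarith

/-- The Rellich integrand, linear in `ζ`. -/
def RI {n : ℕ} (A : En n → Matrix (Fin n) (Fin n) ℝ) (u : En n → ℝ) (m : Fin n) (ζ : En n → ℝ)
    (x : En n) : ℝ :=
  pd m ζ x * (∑ i, ∑ j, A x i j * (pd i u x * pd j u x))
   + ζ x * (∑ i, ∑ j, pd m (fun y => A y i j) x * (pd i u x * pd j u x))
   - 2 * pd m u x * (∑ i, pd i ζ x * au A u i x) + 2 * ζ x * (u x * pd m u x)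

lemma quadForm_eq {n : ℕ} (M : Matrix (Fin n) (Fin n) ℝ) (ξ η : En n) :
    quadForm M ξ η = ∑ i, ∑ j, M i j * (η i * ξ j) := by
  unfold quadForm Matrix.mulVec dotProduct
  simp only [Finset.sum_mul]
  refine Finset.sum_congr rfl fun i _ => Finset.sum_congr rfl fun j _ => by ring

lemma eq_on_supp {n : ℕ} {ζ : En n → ℝ} {χ u : En n → ℝ}
    (hχ : ∀ x ∈ tsupport ζ, χ =ᶠ[𝓝 x] fun _ => 1) {x : En n} (hx : x ∈ tsupport ζ) :
    (fun y => χ y * u y) =ᶠ[𝓝 x] u := by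
  filter_upwards [hχ x hx] with y hy
  rw [hy, one_mul]

lemma rellich_pos {n : ℕ} {A : En n → Matrix (Fin n) (Fin n) ℝ} {u : En n → ℝ}
    (hA : ∀ i j, ContDiffOn ℝ 1 (fun x => A x i j) (OmegaExt n))
    (hsym : ∀ x ∈ OmegaExt n, (A x).IsSymm)
    (hpos : ∀ x ∈ OmegaExt n, ∀ ξ : En n, 0 ≤ quadForm (A x) ξ ξ)
    (hu : WeakSol A u) (m : Fin n) {ζ : En n → ℝ} (hζ : ContDiff ℝ 1 ζ)
    (hζc : HasCompactSupport ζ) (hζs : tsupport ζ ⊆ OmegaExt n) (hζ0 : ∀ x, 0 ≤ ζ x) :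
    ∫ x, RI A u m ζ x = 0 := by
  obtain ⟨χ, hχ, hχc, hχs, hχ0, hχ1⟩ := exists_radial_cutoff (tsupport ζ) hζc.isCompact hζs
  set U : En n → ℝ := fun x => χ x * u x with hUdef
  have hU : ContDiff ℝ 1 U := cutoff_contDiff (hχ.of_le (by simp)) hχs hu.1
  have hUc : HasCompactSupport U := hχc.mul_right
  have hUu : ∀ x ∈ tsupport ζ, U =ᶠ[𝓝 x] u := fun x hx => eq_on_supp hχ1 hx
  have hUi : ∀ i, Continuous (pd i U) := fun i => pd_cont i hU
  have hUic : ∀ i, HasCompactSupport (pd i U) := fun i => pd_compact i hUc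
  set a : Fin n → Fin n → En n → ℝ := fun i j x => ζ x * A x i j with hadef
  have ha : ∀ i j, ContDiff ℝ 1 (a i j) := fun i j => cutoff_contDiff hζ hζs (hA i j)
  have hac : ∀ i j, HasCompactSupport (a i j) := fun i j => hζc.mul_right
  have hauc := au_contOn hA hu.1
  set k : En n → ℝ := fun x => ∑ i, pd i ζ x * au A u i x with hkdef
  have hk : Continuous k := continuous_finsetSum _ fun i _ =>
    cutoff_cont (pd_cont i hζ) ((pd_tsupport i ζ).trans hζs) (hauc i)
  have hkz : ∀ x, x ∉ tsupport ζ → k x = 0 := fun x hx =>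
    Finset.sum_eq_zero fun i _ => by rw [pd_supp i ζ hx, zero_mul]
  have hkc : HasCompactSupport k := hζc.isCompact.of_isClosed_subset (isClosed_tsupport _) (by
    apply closure_minimal _ (isClosed_tsupport ζ)
    intro x hx; by_contra h; exact hx (hkz x h))
  set l : En n → ℝ := fun x => ζ x * u x with hldef
  have hl : Continuous l := cutoff_cont hζ.continuous hζs hu.1.continuousOn
  have hlc : HasCompactSupport l := hζc.mul_right
  set q : Fin n → Fin n → En n → ℝ := fun i j x => pd i U x * pd j U x with hqdef
  have hq : ∀ i j, Continuous (q i j) := fun i j => (hUi i).mul (hUi j)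
  have hqc : ∀ i j, HasCompactSupport (q i j) := fun i j => (hUic i).mul_right
  set ψ : ℝ → ℝ := fun t => 1/2 * (∑ i, ∑ j, ∫ x, a i j (x + (-t) • ev m) * q i j x)
    - 1/2 * (∑ i, ∑ j, ∫ x, a i j x * q i j x)
    + ((∫ x, U (x + t • ev m) * k x) - ∫ x, U x * k x)
    - ((∫ x, U (x + t • ev m) * l x) - ∫ x, U x * l x) with hψ
  have hψ0 : ψ 0 = 0 := by simp [hψ]
  have hψd : HasDerivAt ψ (1/2 * (∑ i, ∑ j, -∫ x, pd m (a i j) x * q i j x)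
      + (∫ x, pd m U x * k x) - ∫ x, pd m U x * l x) 0 := by
    have d1 : ∀ i j, HasDerivAt (fun t : ℝ => ∫ x, a i j (x + (-t) • ev m) * q i j x)
        (-∫ x, pd m (a i j) x * q i j x) 0 := by
      intro i j
      have h0 := transl_deriv m (ha i j) (hac i j) (hq i j) (hqc i j)
      have h1 : HasDerivAt (fun t : ℝ => -t) (-1) 0 := (hasDerivAt_id 0).neg
      rw [show (0:ℝ) = -0 by simp] at h0
      have h2 := HasDerivAt.comp (0:ℝ) h0 h1
      rw [mul_neg_one] at h2
      exact h2
    have d2 := transl_deriv m hU hUc hk hkc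
    have d3 := transl_deriv m hU hUc hl hlc
    have d4 : HasDerivAt (fun t : ℝ => ∑ i, ∑ j, ∫ x, a i j (x + (-t) • ev m) * q i j x)
        (∑ i, ∑ j, -∫ x, pd m (a i j) x * q i j x) 0 :=
      HasDerivAt.fun_sum fun i _ => HasDerivAt.fun_sum fun j _ => d1 i j
    exact (((d4.const_mul (1/2)).sub_const _).add (d2.sub_const _)).sub (d3.sub_const _)
  have hψpos : ∀ t, 0 ≤ ψ t := by
    intro t
    -- test function
    set Ut : En n → ℝ := fun x => U (x + t • ev m) with hUt
    have hUtC : ContDiff ℝ 1 Ut := hU.comp (contDiff_id.add contDiff_const)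
    have hpdUt : ∀ i x, pd i Ut x = pd i U (x + t • ev m) := by
      intro i x
      unfold pd
      rw [hUt, fderiv_comp_add_right]
    set φ : En n → ℝ := fun x => ζ x * (Ut x - U x) with hφdef
    have hφ : ContDiff ℝ 1 φ := hζ.mul (hUtC.sub hU)
    have hφs : tsupport φ ⊆ tsupport ζ := tsupport_mul_subset_left
    have hφc : HasCompactSupport φ := hζc.mul_right
    have hw := weak_C1 hA hu hφ hφc (hφs.trans hζs)
    have hpw : ∀ x, ((∑ i, au A u i x * pd i φ x) - u x * φ x) ≤
        1/2 * ((∑ i, ∑ j, a i j x * q i j (x + t • ev m)) - ∑ i, ∑ j, a i j x * q i j x)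
         + (Ut x * k x - U x * k x) - (Ut x * l x - U x * l x) := by
      intro x
      by_cases hx : x ∈ tsupport ζ
      · have hO := hζs hx
        have p1 : ∀ i, pd i φ x = pd i ζ x * (Ut x - U x) + ζ x * (pd i Ut x - pd i U x) := by
          intro i
          have dU := hU.differentiable (by simp) x
          have dUt := hUtC.differentiable (by simp) x
          have dd : DifferentiableAt ℝ (fun y => Ut y - U y) x := dUt.sub dU
          rw [hφdef, pd_mul i (hζ.differentiable (by simp) x) dd, pd_sub i dUt dU]
        have p2 : ∀ i, pd i u x = pd i U x := fun i => (pd_congr i (hUu x hx)).symm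
        have p3 : u x = U x := ((hUu x hx).eq_of_nhds).symm
        have hc := psd_conv (fun i j => a i j x)
          (fun i j => by simp only [hadef]; rw [(hsym x hO).apply])
          (fun ξ => by
            have := hpos x hO (WithLp.toLp 2 ξ)
            rw [quadForm_eq] at this
            have e : ∑ i, ∑ j, a i j x * (ξ i * ξ j) = ζ x * ∑ i, ∑ j, A x i j * (ξ i * ξ j) := by
              simp only [Finset.mul_sum, hadef, mul_assoc]
            rw [e]
            exact mul_nonneg (hζ0 x) this)
          (fun i => pd i U x) (fun i => pd i Ut x)
        have e1 : (∑ i, au A u i x * pd i φ x) =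
            (∑ i, (∑ j, a i j x * pd j U x) * (pd i Ut x - pd i U x)) + (Ut x - U x) * k x := by
          simp only [hkdef, Finset.mul_sum, ← Finset.sum_add_distrib]
          refine Finset.sum_congr rfl fun i _ => ?_
          have : (∑ j, a i j x * pd j U x) = ζ x * au A u i x := by
            simp only [au, Finset.mul_sum, hadef, p2, mul_assoc]
          rw [this, p1]; ring
        rw [e1]
        have e2 : u x * φ x = (Ut x - U x) * l x := by
          simp only [hφdef, hldef]; ring
        rw [e2]
        have e3 : ∀ i j, pd i Ut x * pd j Ut x = q i j (x + t • ev m) := fun i j => by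
          simp only [hqdef, hpdUt]
        simp only [e3] at hc
        have e4 : ∑ i, ∑ j, a i j x * q i j x = ∑ i, ∑ j, a i j x * (pd i U x * pd j U x) := rfl
        rw [e4]
        linarith
      · have h1 : ∀ i, pd i φ x = 0 := fun i => pd_supp i φ (fun h => hx (hφs h))
        have h2 : ζ x = 0 := image_eq_zero_of_notMem_tsupport hx
        have h3 : φ x = 0 := by simp only [hφdef, h2, zero_mul]
        have h4 : l x = 0 := by simp only [hldef, h2, zero_mul]
        have h5 : ∀ i j, a i j x = 0 := fun i j => by simp only [hadef, h2, zero_mul]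
        simp [h1, hkz x hx, h3, h4, h5]
    have hqt : ∀ i j, Continuous (fun x => q i j (x + t • ev m)) := fun i j => by
      have := hq i j; fun_prop
    have I1 : ∀ i j, Integrable (fun x => a i j x * q i j (x + t • ev m)) := fun i j =>
      ((ha i j).continuous.mul (hqt i j)).integrable_of_hasCompactSupport (hac i j).mul_right
    have I2 : ∀ i j, Integrable (fun x => a i j x * q i j x) := fun i j =>
      ((ha i j).continuous.mul (hq i j)).integrable_of_hasCompactSupport (hac i j).mul_right
    have I3 : Integrable (fun x => Ut x * k x) :=
      (hUtC.continuous.mul hk).integrable_of_hasCompactSupport hkc.mul_left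
    have I4 : Integrable (fun x => U x * k x) :=
      (hU.continuous.mul hk).integrable_of_hasCompactSupport hkc.mul_left
    have I5 : Integrable (fun x => Ut x * l x) :=
      (hUtC.continuous.mul hl).integrable_of_hasCompactSupport hlc.mul_left
    have I6 : Integrable (fun x => U x * l x) :=
      (hU.continuous.mul hl).integrable_of_hasCompactSupport hlc.mul_left
    have I1s : Integrable (fun x => ∑ i, ∑ j, a i j x * q i j (x + t • ev m)) :=
      integrable_finsetSum _ fun i _ => integrable_finsetSum _ fun j _ => I1 i j
    have I2s : Integrable (fun x => ∑ i, ∑ j, a i j x * q i j x) :=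
      integrable_finsetSum _ fun i _ => integrable_finsetSum _ fun j _ => I2 i j
    have J1 : Integrable (fun x => 1/2 * ((∑ i, ∑ j, a i j x * q i j (x + t • ev m)) - ∑ i, ∑ j, a i j x * q i j x)) :=
      (I1s.sub I2s).const_mul _
    have J2 : Integrable (fun x => Ut x * k x - U x * k x) := I3.sub I4
    have J3 : Integrable (fun x => Ut x * l x - U x * l x) := I5.sub I6
    have J4 : Integrable (fun x => 1/2 * ((∑ i, ∑ j, a i j x * q i j (x + t • ev m)) - ∑ i, ∑ j, a i j x * q i j x)
         + (Ut x * k x - U x * k x)) := J1.add J2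
    have hle : (0:ℝ) ≤ ∫ x, (1/2 * ((∑ i, ∑ j, a i j x * q i j (x + t • ev m)) - ∑ i, ∑ j, a i j x * q i j x)
         + (Ut x * k x - U x * k x) - (Ut x * l x - U x * l x)) := by
      rw [← hw]
      apply integral_mono _ (J4.sub J3) hpw
      apply Integrable.sub
      · apply integrable_finsetSum
        intro i _
        simp_rw [mul_comm (au A u i _)]
        exact (cutoff_cont (pd_cont i hφ) (((pd_tsupport i φ).trans hφs).trans hζs)
          (hauc i)).integrable_of_hasCompactSupport (pd_compact i hφc).mul_right
      · simp_rw [mul_comm (u _)]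
        exact (cutoff_cont hφ.continuous (hφs.trans hζs)
          hu.1.continuousOn).integrable_of_hasCompactSupport hφc.mul_right
    have htr : ∀ i j, ∫ x, a i j x * q i j (x + t • ev m) =
        ∫ x, a i j (x + (-t) • ev m) * q i j x := by
      intro i j
      rw [← integral_add_right_eq_self (fun x => a i j (x + (-t) • ev m) * q i j x) (t • ev m)]
      simp
    rw [integral_sub J4 J3, integral_add J1 J2, integral_const_mul, integral_sub I1s I2s,
      integral_sub I3 I4, integral_sub I5 I6,
      integral_finsetSum _ (fun i _ => integrable_finsetSum _ fun j _ => I1 i j),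
      integral_finsetSum _ (fun i _ => integrable_finsetSum _ fun j _ => I2 i j)] at hle
    simp only [integral_finsetSum _ (fun j _ => I1 _ j), integral_finsetSum _ (fun j _ => I2 _ j), htr] at hle
    simp only [hψ]
    linarith
  have hmin : IsLocalMin ψ 0 := Eventually.of_forall fun t => by rw [hψ0]; exact hψpos t
  have hfin := hmin.hasDerivAt_eq_zero hψd
  -- identify
  have K1 : ∀ i j, Integrable (fun x => pd m (a i j) x * q i j x) := fun i j =>
    ((pd_cont m (ha i j)).mul (hq i j)).integrable_of_hasCompactSupport (hqc i j).mul_left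
  have K1s : Integrable (fun x => ∑ i, ∑ j, pd m (a i j) x * q i j x) :=
    integrable_finsetSum _ fun i _ => integrable_finsetSum _ fun j _ => K1 i j
  have K2 : Integrable (fun x => pd m U x * k x) :=
    ((hUi m).mul hk).integrable_of_hasCompactSupport hkc.mul_left
  have K3 : Integrable (fun x => pd m U x * l x) :=
    ((hUi m).mul hl).integrable_of_hasCompactSupport hlc.mul_left
  have hRI : ∀ x, RI A u m ζ x = (∑ i, ∑ j, pd m (a i j) x * q i j x) - 2 * (pd m U x * k x)
      + 2 * (pd m U x * l x) := by
    intro x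
    by_cases hx : x ∈ tsupport ζ
    · have hO := hζs hx
      have p2 : ∀ i, pd i u x = pd i U x := fun i => (pd_congr i (hUu x hx)).symm
      have p4 : ∀ i j, pd m (a i j) x = pd m ζ x * A x i j + ζ x * pd m (fun y => A y i j) x :=
        fun i j => pd_mul m (hζ.differentiable (by simp) x) (diffAt_Om (hA i j) hO)
      have e1 : (∑ i, ∑ j, pd m (a i j) x * q i j x) =
          pd m ζ x * (∑ i, ∑ j, A x i j * (pd i U x * pd j U x))
          + ζ x * (∑ i, ∑ j, pd m (fun y => A y i j) x * (pd i U x * pd j U x)) := by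
        simp only [p4, Finset.mul_sum, ← Finset.sum_add_distrib, hqdef]
        refine Finset.sum_congr rfl fun i _ => Finset.sum_congr rfl fun j _ => by ring
      rw [e1]
      simp only [RI, p2, hkdef, hldef]
      ring
    · have h1 : ∀ i, pd i ζ x = 0 := fun i => pd_supp i ζ hx
      have h2 : ζ x = 0 := image_eq_zero_of_notMem_tsupport hx
      have h3 : ∀ i j, pd m (a i j) x = 0 := fun i j =>
        pd_supp m _ (fun h => hx (tsupport_mul_subset_left h))
      simp [RI, h1, h2, h3, hkz x hx, hldef]
  simp_rw [hRI]
  have K12 : Integrable (fun x => (∑ i, ∑ j, pd m (a i j) x * q i j x) - 2 * (pd m U x * k x)) :=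
    K1s.sub (K2.const_mul 2)
  rw [integral_add K12 (K3.const_mul 2), integral_sub K1s (K2.const_mul 2), integral_const_mul,
    integral_const_mul, integral_finsetSum _ (fun i _ => integrable_finsetSum _ fun j _ => K1 i j)]
  simp only [integral_finsetSum _ (fun j _ => K1 _ j)]
  simp only [Finset.sum_neg_distrib] at hfin
  linarith

lemma RI_int {n : ℕ} {A : En n → Matrix (Fin n) (Fin n) ℝ} {u : En n → ℝ}
    (hA : ∀ i j, ContDiffOn ℝ 1 (fun x => A x i j) (OmegaExt n))
    (hu : ContDiffOn ℝ 1 u (OmegaExt n)) (m : Fin n) {ζ : En n → ℝ} (hζ : ContDiff ℝ 1 ζ)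
    (hζc : HasCompactSupport ζ) (hζs : tsupport ζ ⊆ OmegaExt n) :
    Integrable (RI A u m ζ) := by
  have hz : ∀ x, x ∉ tsupport ζ → RI A u m ζ x = 0 := by
    intro x hx
    have h1 : ∀ i, pd i ζ x = 0 := fun i => pd_supp i ζ hx
    have h2 : ζ x = 0 := image_eq_zero_of_notMem_tsupport hx
    simp [RI, h1, h2]
  have hon : ContinuousOn (RI A u m ζ) (OmegaExt n) := by
    have h1 := fun i => (pd_cont i hζ).continuousOn (s := OmegaExt n)
    have h2 := hζ.continuous.continuousOn (s := OmegaExt n)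
    have h3 := fun i => pd_contOn i hu
    have h4 := au_contOn hA hu
    have h5 := fun i j => pd_contOn m (hA i j)
    have h6 := fun i j => (hA i j).continuousOn
    have h7 := hu.continuousOn
    unfold RI
    refine ContinuousOn.add (ContinuousOn.sub (ContinuousOn.add (ContinuousOn.mul (h1 m) ?_)
      (ContinuousOn.mul h2 ?_)) (ContinuousOn.mul (continuousOn_const.mul (h3 m)) ?_))
      (ContinuousOn.mul (continuousOn_const.mul h2) (h7.mul (h3 m)))
    · exact continuousOn_finsetSum _ fun i _ => continuousOn_finsetSum _ fun j _ =>
        (h6 i j).mul ((h3 i).mul (h3 j))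
    · exact continuousOn_finsetSum _ fun i _ => continuousOn_finsetSum _ fun j _ =>
        (h5 i j).mul ((h3 i).mul (h3 j))
    · exact continuousOn_finsetSum _ fun i _ => (h1 i).mul (h4 i)
  have hsup : tsupport (RI A u m ζ) ⊆ tsupport ζ := by
    apply closure_minimal _ (isClosed_tsupport ζ)
    intro x hx; by_contra h; exact hx (hz x h)
  apply Continuous.integrable_of_hasCompactSupport
  · rw [continuous_iff_continuousAt]
    intro x
    by_cases hx : x ∈ tsupport ζ
    · exact hon.continuousAt ((isOpen_Om n).mem_nhds (hζs hx))
    · have : (RI A u m ζ) =ᶠ[𝓝 x] fun _ => 0 := by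
        filter_upwards [(isClosed_tsupport ζ).isOpen_compl.mem_nhds hx] with y hy
        exact hz y hy
      exact continuousAt_const.congr this.symm
  · exact hζc.isCompact.of_isClosed_subset (isClosed_tsupport _) hsup

lemma rellich {n : ℕ} {A : En n → Matrix (Fin n) (Fin n) ℝ} {u : En n → ℝ}
    (hA : ∀ i j, ContDiffOn ℝ 1 (fun x => A x i j) (OmegaExt n))
    (hsym : ∀ x ∈ OmegaExt n, (A x).IsSymm)
    (hpos : ∀ x ∈ OmegaExt n, ∀ ξ : En n, 0 ≤ quadForm (A x) ξ ξ)
    (hu : WeakSol A u) (m : Fin n) {ζ : En n → ℝ} (hζ : ContDiff ℝ 1 ζ)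
    (hζc : HasCompactSupport ζ) (hζs : tsupport ζ ⊆ OmegaExt n) :
    ∫ x, RI A u m ζ x = 0 := by
  obtain ⟨χ, hχ, hχc, hχs, hχ0, hχ1⟩ := exists_radial_cutoff (tsupport ζ) hζc.isCompact hζs
  obtain ⟨M, hM⟩ := hζ.continuous.bounded_above_of_compact_support hζc
  have hM0 : 0 ≤ M := (norm_nonneg _).trans (hM 0)
  have hχ' : ContDiff ℝ 1 χ := hχ.of_le (by simp)
  set z2 : En n → ℝ := fun x => M * χ x with hz2
  set z1 : En n → ℝ := fun x => ζ x + z2 x with hz1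
  have c2 : ContDiff ℝ 1 z2 := contDiff_const.mul hχ'
  have c1 : ContDiff ℝ 1 z1 := hζ.add c2
  have k2 : HasCompactSupport z2 := hχc.mul_left
  have k1 : HasCompactSupport z1 := hζc.add k2
  have s2 : tsupport z2 ⊆ OmegaExt n := (tsupport_mul_subset_right).trans hχs
  have s1 : tsupport z1 ⊆ OmegaExt n := (tsupport_add ζ z2).trans (Set.union_subset hζs s2)
  have n2 : ∀ x, 0 ≤ z2 x := fun x => mul_nonneg hM0 (hχ0 x)
  have n1 : ∀ x, 0 ≤ z1 x := by
    intro x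
    by_cases hx : x ∈ tsupport ζ
    · have h1 := (hχ1 x hx).eq_of_nhds
      have h2 := hM x
      rw [Real.norm_eq_abs, abs_le] at h2
      simp only [hz1, hz2, h1]; linarith
    · simp only [hz1, image_eq_zero_of_notMem_tsupport hx, zero_add]; exact n2 x
  have r1 := rellich_pos hA hsym hpos hu m c1 k1 s1 n1
  have r2 := rellich_pos hA hsym hpos hu m c2 k2 s2 n2
  have hlin : ∀ x, RI A u m ζ x = RI A u m z1 x - RI A u m z2 x := by
    intro x
    have hp : ∀ i, pd i z1 x = pd i ζ x + pd i z2 x := fun i =>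
      pd_add i (hζ.differentiable (by simp) x) (c2.differentiable (by simp) x)
    simp only [RI, hp, add_mul, Finset.sum_add_distrib]
    simp only [hz1]
    ring
  simp_rw [hlin]
  rw [integral_sub (RI_int hA hu.1 m c1 k1 s1) (RI_int hA hu.1 m c2 k2 s2), r1, r2, sub_zero]

end

section
open scoped Topology ENNReal NNReal Pointwise ContDiff Convolution

lemma pd_norm {n : ℕ} (i : Fin n) {x : En n} (hx : x ≠ 0) :
    pd i (fun y : En n => ‖y‖) x = x i / ‖x‖ := by
  have h2 : DifferentiableAt ℝ (fun y : En n => ‖y‖) x :=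
    (contDiffAt_norm ℝ hx).differentiableAt (n := 1) (by simp)
  have h1 := pd_mul i h2 h2
  have h3 : pd i (fun y : En n => ‖y‖ * ‖y‖) x = 2 * x i := by
    have : (fun y : En n => ‖y‖ * ‖y‖) = fun y => ‖y‖ ^ 2 := by ext; ring
    rw [this, pd, fderiv_norm_sq_apply]
    simp [ev, EuclideanSpace.inner_single_right]
  rw [h3] at h1
  have : ‖x‖ ≠ 0 := norm_ne_zero_iff.mpr hx
  field_simp
  linarith

lemma Om_ne {n : ℕ} {x : En n} (hx : x ∈ OmegaExt n) : x ≠ 0 := by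
  rintro rfl
  have : (1:ℝ) < ‖(0 : En n)‖ := hx
  simp at this; linarith

lemma pd_comp_norm {n : ℕ} (i : Fin n) {c : ℝ → ℝ} {c' : ℝ} {x : En n} (hx : x ≠ 0)
    (hc : HasDerivAt c c' ‖x‖) : pd i (fun y : En n => c ‖y‖) x = c' * (x i / ‖x‖) := by
  have h2 : DifferentiableAt ℝ (fun y : En n => ‖y‖) x :=
    (contDiffAt_norm ℝ hx).differentiableAt (n := 1) (by simp)
  have := (hc.comp_hasFDerivAt x h2.hasFDerivAt).fderiv
  rw [← pd_norm i hx]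
  unfold pd
  have h3 : (fun y : En n => c ‖y‖) = c ∘ fun y : En n => ‖y‖ := rfl
  rw [h3, this]
  simp

lemma radial_pd {n : ℕ} (i : Fin n) {η : ℝ → ℝ} (hη : ContDiff ℝ ∞ η)
    (hs : tsupport η ⊆ Set.Ioi 1) (x : En n) :
    pd i (fun y : En n => η ‖y‖) x = deriv η ‖x‖ * (x i / ‖x‖) := by
  by_cases hx : x = 0
  · have : (fun x : En n => η ‖x‖) =ᶠ[𝓝 x] fun _ => 0 := by
      filter_upwards [ball_mem_nhds x one_pos] with y hy
      apply image_eq_zero_of_notMem_tsupport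
      intro h
      have := hs h
      rw [hx] at hy
      simp at hy this
      linarith
    rw [pd_congr i this]
    simp [pd, hx]
  · exact pd_comp_norm i hx (hη.differentiable (by simp) _).hasDerivAt

lemma coord_contOn {n : ℕ} (i : Fin n) :
    ContinuousOn (fun x : En n => x i / ‖x‖) (OmegaExt n) :=
  ContinuousOn.div (by fun_prop) (by fun_prop) fun x hx => norm_ne_zero_iff.mpr (Om_ne hx)

lemma deriv_off {η : ℝ → ℝ} {n : ℕ} {x : En n} (hs : tsupport η ⊆ Set.Ioi 1)
    (hx : x ∉ OmegaExt n) : η ‖x‖ = 0 ∧ deriv η ‖x‖ = 0 := by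
  have : ‖x‖ ∉ tsupport η := fun h => hx (hs h)
  exact ⟨image_eq_zero_of_notMem_tsupport this,
    image_eq_zero_of_notMem_tsupport (fun h => this (tsupport_deriv_subset (f := η) h))⟩

lemma RP.div {n : ℕ} (hn : 1 ≤ n) (f : Fin n → En n → ℝ)
    (hf : ∀ j, ContDiffOn ℝ 1 (f j) (OmegaExt n)) :
    RP n (fun x => ∑ j, x j / ‖x‖ * f j x) (fun x => ∑ j, pd j (f j) x) := by
  refine RP.of_test hn
    (continuousOn_finsetSum _ fun j _ => (coord_contOn j).mul (hf j).continuousOn)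
    (continuousOn_finsetSum _ fun j _ => pd_contOn j (hf j)) ?_
  intro η hη hc hs
  have r1 := radial_supp (n := n) hc hs
  have r3 : ContDiff ℝ 1 (fun x : En n => η ‖x‖) := (radial_contDiff hη hs).of_le (by simp)
  have c : ∀ j, ContDiff ℝ 1 (fun x : En n => η ‖x‖ * f j x) := fun j =>
    cutoff_contDiff r3 r1.2 (hf j)
  have k : ∀ j, HasCompactSupport (fun x : En n => η ‖x‖ * f j x) := fun j => r1.1.mul_right
  have e : ∀ x : En n, deriv η ‖x‖ * (∑ j, x j / ‖x‖ * f j x) + η ‖x‖ * (∑ j, pd j (f j) x)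
      = ∑ j, pd j (fun x : En n => η ‖x‖ * f j x) x := by
    intro x
    by_cases hx : x ∈ OmegaExt n
    · simp only [Finset.mul_sum, ← Finset.sum_add_distrib]
      refine Finset.sum_congr rfl fun j _ => ?_
      rw [pd_mul j (r3.differentiable (by simp) x) (diffAt_Om (hf j) hx), radial_pd j hη hs]
      ring
    · have h1 : x ∉ tsupport (fun x : En n => η ‖x‖) := fun h => hx (r1.2 h)
      rw [(deriv_off hs hx).1, (deriv_off hs hx).2]
      rw [Finset.sum_eq_zero fun j _ => pd_supp j _ fun h => h1 (tsupport_mul_subset_left h)]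
      simp
  simp_rw [e]
  rw [integral_finsetSum _ fun j _ =>
    (pd_cont j (c j)).integrable_of_hasCompactSupport (pd_compact j (k j))]
  exact Finset.sum_eq_zero fun j _ => integral_pd j (c j) (k j)

lemma RP.weak {n : ℕ} (hn : 1 ≤ n) {A : En n → Matrix (Fin n) (Fin n) ℝ} {u : En n → ℝ}
    (hA : ∀ i j, ContDiffOn ℝ 1 (fun x => A x i j) (OmegaExt n)) (hu : WeakSol A u) :
    RP n (fun x => u x * ∑ i, x i / ‖x‖ * au A u i x)
      (fun x => (∑ i, au A u i x * pd i u x) - u x ^ 2) := by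
  have hc0 := hu.1.continuousOn
  have hau := au_contOn hA hu.1
  refine RP.of_test hn
    (hc0.mul (continuousOn_finsetSum _ fun j _ => (coord_contOn j).mul (hau j)))
    ((continuousOn_finsetSum _ fun j _ => (hau j).mul (pd_contOn j hu.1)).sub (hc0.pow 2)) ?_
  intro η hη hc hs
  have r1 := radial_supp (n := n) hc hs
  have r3 : ContDiff ℝ 1 (fun x : En n => η ‖x‖) := (radial_contDiff hη hs).of_le (by simp)
  have c : ContDiff ℝ 1 (fun x : En n => η ‖x‖ * u x) := cutoff_contDiff r3 r1.2 hu.1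
  have k : HasCompactSupport (fun x : En n => η ‖x‖ * u x) := r1.1.mul_right
  rw [← weak_C1 hA hu c k (tsupport_mul_subset_left.trans r1.2)]
  congr 1
  ext x
  by_cases hx : x ∈ OmegaExt n
  · have e : ∀ j, pd j (fun x : En n => η ‖x‖ * u x) x =
        deriv η ‖x‖ * (x j / ‖x‖) * u x + η ‖x‖ * pd j u x := fun j => by
      rw [pd_mul j (r3.differentiable (by simp) x) (diffAt_Om hu.1 hx), radial_pd j hη hs]
    simp only [e, mul_add, mul_sub, Finset.mul_sum, Finset.sum_add_distrib]
    have e1 : ∑ i, deriv η ‖x‖ * (u x * (x i / ‖x‖ * au A u i x)) =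
      ∑ i, au A u i x * (deriv η ‖x‖ * (x i / ‖x‖) * u x) :=
      Finset.sum_congr rfl fun i _ => by ring
    have e2 : ∑ i, η ‖x‖ * (au A u i x * pd i u x) = ∑ i, au A u i x * (η ‖x‖ * pd i u x) :=
      Finset.sum_congr rfl fun i _ => by ring
    rw [e1, e2]; ring
  · have h1 : x ∉ tsupport (fun x : En n => η ‖x‖) := fun h => hx (r1.2 h)
    have h2 : ∀ i, pd i (fun x : En n => η ‖x‖ * u x) x = 0 := fun i =>
      pd_supp i _ fun h => h1 (tsupport_mul_subset_left h)
    simp [h2, (deriv_off hs hx).1, (deriv_off hs hx).2]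

lemma RP.rellich {n : ℕ} (hn : 1 ≤ n) {A : En n → Matrix (Fin n) (Fin n) ℝ} {u : En n → ℝ}
    (hA : ∀ i j, ContDiffOn ℝ 1 (fun x => A x i j) (OmegaExt n))
    (hsym : ∀ x ∈ OmegaExt n, (A x).IsSymm)
    (hpos : ∀ x ∈ OmegaExt n, ∀ ξ : En n, 0 ≤ quadForm (A x) ξ ξ)
    (hu : WeakSol A u) (Y : Fin n → En n → ℝ) (hY : ∀ j, ContDiffOn ℝ 1 (Y j) (OmegaExt n)) :
    RP n (fun x => (∑ m, x m / ‖x‖ * Y m x) * (∑ i, ∑ j, A x i j * (pd i u x * pd j u x))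
        - 2 * (∑ m, Y m x * pd m u x) * (∑ i, x i / ‖x‖ * au A u i x))
      (fun x => (∑ m, pd m (Y m) x) * (∑ i, ∑ j, A x i j * (pd i u x * pd j u x))
        + (∑ m, Y m x * ∑ i, ∑ j, pd m (fun y => A y i j) x * (pd i u x * pd j u x))
        - 2 * (∑ m, pd m u x * ∑ i, pd i (Y m) x * au A u i x)
        + 2 * (u x * ∑ m, Y m x * pd m u x)) := by
  have hc0 := hu.1.continuousOn
  have hau := au_contOn hA hu.1
  have hpu := fun i => pd_contOn i hu.1
  have hAc := fun i j => (hA i j).continuousOn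
  have hAp := fun m i j => pd_contOn m (hA i j)
  have hYc := fun j => (hY j).continuousOn
  have hYp := fun i j => pd_contOn i (hY j)
  have hE : ContinuousOn (fun x => ∑ i, ∑ j, A x i j * (pd i u x * pd j u x)) (OmegaExt n) :=
    continuousOn_finsetSum _ fun i _ => continuousOn_finsetSum _ fun j _ =>
        (hAc i j).mul ((hpu i).mul (hpu j))
  refine RP.of_test hn ?_ ?_ ?_
  · exact (ContinuousOn.mul (continuousOn_finsetSum _ fun j _ => (coord_contOn j).mul (hYc j)) hE).sub
      ((continuousOn_const.mul (continuousOn_finsetSum _ fun j _ => (hYc j).mul (hpu j))).mul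
        (continuousOn_finsetSum _ fun j _ => (coord_contOn j).mul (hau j)))
  · refine (((ContinuousOn.mul (continuousOn_finsetSum _ fun j _ => hYp j j) hE).add
      (continuousOn_finsetSum _ fun m _ => (hYc m).mul (continuousOn_finsetSum _ fun i _ =>
        continuousOn_finsetSum _ fun j _ => (hAp m i j).mul ((hpu i).mul (hpu j))))).sub
      (continuousOn_const.mul (continuousOn_finsetSum _ fun m _ => (hpu m).mul
        (continuousOn_finsetSum _ fun i _ => (hYp i m).mul (hau i))))).add
      (continuousOn_const.mul (hc0.mul (continuousOn_finsetSum _ fun j _ => (hYc j).mul (hpu j))))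
  intro η hη hc hs
  have r1 := radial_supp (n := n) hc hs
  have r3 : ContDiff ℝ 1 (fun x : En n => η ‖x‖) := (radial_contDiff hη hs).of_le (by simp)
  have c : ∀ m, ContDiff ℝ 1 (fun x : En n => η ‖x‖ * Y m x) := fun m =>
    cutoff_contDiff r3 r1.2 (hY m)
  have k : ∀ m, HasCompactSupport (fun x : En n => η ‖x‖ * Y m x) := fun m => r1.1.mul_right
  have s : ∀ m, tsupport (fun x : En n => η ‖x‖ * Y m x) ⊆ OmegaExt n := fun m =>
    tsupport_mul_subset_left.trans r1.2
  have e0 : ∫ x, ∑ m, RI A u m (fun x : En n => η ‖x‖ * Y m x) x = 0 := by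
    rw [integral_finsetSum _ fun m _ => RI_int hA hu.1 m (c m) (k m) (s m)]
    exact Finset.sum_eq_zero fun m _ => _root_.rellich hA hsym hpos hu m (c m) (k m) (s m)
  rw [← e0]
  congr 1
  ext x
  by_cases hx : x ∈ OmegaExt n
  · have e : ∀ i m, pd i (fun x : En n => η ‖x‖ * Y m x) x =
        deriv η ‖x‖ * (x i / ‖x‖) * Y m x + η ‖x‖ * pd i (Y m) x := fun i m => by
      rw [pd_mul i (r3.differentiable (by simp) x) (diffAt_Om (hY m) hx), radial_pd i hη hs]
    have e2 : ∀ m, ∑ i, (deriv η ‖x‖ * (x i / ‖x‖) * Y m x + η ‖x‖ * pd i (Y m) x) * au A u i x =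
      deriv η ‖x‖ * Y m x * (∑ i, x i / ‖x‖ * au A u i x) + η ‖x‖ * ∑ i, pd i (Y m) x * au A u i x := by
      intro m
      simp only [Finset.mul_sum, ← Finset.sum_add_distrib]
      exact Finset.sum_congr rfl fun i _ => by ring
    simp only [RI, e, e2]
    generalize (∑ i, ∑ j, A x i j * (pd i u x * pd j u x)) = E
    generalize (∑ i, x i / ‖x‖ * au A u i x) = I
    rw [mul_sub, mul_add, mul_sub, mul_add]
    simp only [Finset.sum_mul, Finset.mul_sum (s := Finset.univ (α := Fin n)) (a := η ‖x‖),
      Finset.mul_sum (s := Finset.univ (α := Fin n)) (a := deriv η ‖x‖),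
      Finset.mul_sum (s := Finset.univ (α := Fin n)) (a := u x),
      Finset.mul_sum (s := Finset.univ (α := Fin n)) (a := (2:ℝ)),
       ← Finset.sum_add_distrib, ← Finset.sum_sub_distrib]
    refine Finset.sum_congr rfl fun m _ => ?_
    generalize (∑ i, ∑ j, pd m (fun y => A y i j) x * (pd i u x * pd j u x)) = F
    simp only [← Finset.mul_sum]
    ring
  · have h1 : x ∉ tsupport (fun x : En n => η ‖x‖) := fun h => hx (r1.2 h)
    have h2 : ∀ i m, pd i (fun x : En n => η ‖x‖ * Y m x) x = 0 := fun i m =>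
      pd_supp i _ fun h => h1 (tsupport_mul_subset_left h)
    simp [RI, h2, (deriv_off hs hx).1, (deriv_off hs hx).2]

end

section
open scoped Topology ENNReal NNReal Pointwise ContDiff Convolution

/-- Power bound on the exterior domain. -/
def Bd {n : ℕ} (k : ℝ) (f : En n → ℝ) : Prop :=
  ∃ C, 0 ≤ C ∧ ∀ x ∈ OmegaExt n, |f x| ≤ C * ‖x‖ ^ k

lemma Om_pos {n : ℕ} {x : En n} (hx : x ∈ OmegaExt n) : 0 < ‖x‖ := lt_trans one_pos hx
lemma Om_one {n : ℕ} {x : En n} (hx : x ∈ OmegaExt n) : 1 ≤ ‖x‖ := le_of_lt hx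

lemma Bd.congr {n : ℕ} {k : ℝ} {f g : En n → ℝ} (h : Bd k f) (e : ∀ x ∈ OmegaExt n, g x = f x) :
    Bd k g := by
  obtain ⟨C, hC, H⟩ := h
  exact ⟨C, hC, fun x hx => by rw [e x hx]; exact H x hx⟩

lemma Bd.mono {n : ℕ} {k l : ℝ} {f : En n → ℝ} (h : Bd k f) (e : k ≤ l) : Bd l f := by
  obtain ⟨C, hC, H⟩ := h
  exact ⟨C, hC, fun x hx => (H x hx).trans
    (mul_le_mul_of_nonneg_left (Real.rpow_le_rpow_of_exponent_le (Om_one hx) e) hC)⟩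

lemma Bd.add {n : ℕ} {k : ℝ} {f g : En n → ℝ} (h : Bd k f) (h' : Bd k g) :
    Bd k (fun x => f x + g x) := by
  obtain ⟨C, hC, H⟩ := h
  obtain ⟨C', hC', H'⟩ := h'
  refine ⟨C + C', by positivity, fun x hx => (abs_add_le _ _).trans ?_⟩
  rw [add_mul]; exact add_le_add (H x hx) (H' x hx)

lemma Bd.neg {n : ℕ} {k : ℝ} {f : En n → ℝ} (h : Bd k f) : Bd k (fun x => - f x) := by
  obtain ⟨C, hC, H⟩ := h
  exact ⟨C, hC, fun x hx => by rw [abs_neg]; exact H x hx⟩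

lemma Bd.sub {n : ℕ} {k : ℝ} {f g : En n → ℝ} (h : Bd k f) (h' : Bd k g) :
    Bd k (fun x => f x - g x) := by
  simpa only [sub_eq_add_neg] using h.add h'.neg

lemma Bd.mul {n : ℕ} {k l : ℝ} {f g : En n → ℝ} (h : Bd k f) (h' : Bd l g) :
    Bd (k + l) (fun x => f x * g x) := by
  obtain ⟨C, hC, H⟩ := h
  obtain ⟨C', hC', H'⟩ := h'
  refine ⟨C * C', by positivity, fun x hx => ?_⟩
  rw [abs_mul, Real.rpow_add (Om_pos hx)]
  calc |f x| * |g x| ≤ (C * ‖x‖ ^ k) * (C' * ‖x‖ ^ l) :=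
        mul_le_mul (H x hx) (H' x hx) (abs_nonneg _) (by positivity)
    _ = _ := by ring

lemma Bd.const {n : ℕ} (c : ℝ) : Bd 0 (fun _ : En n => c) :=
  ⟨|c|, abs_nonneg _, fun x _ => by simp⟩

lemma Bd.const_mul {n : ℕ} {k : ℝ} {f : En n → ℝ} (h : Bd k f) (c : ℝ) :
    Bd k (fun x => c * f x) := by
  simpa using (Bd.const c).mul h

lemma Bd.zero {n : ℕ} (k : ℝ) : Bd k (fun _ : En n => 0) :=
  ⟨0, le_rfl, fun x _ => by simp⟩

lemma Bd.sum {n : ℕ} {k : ℝ} {ι : Type*} (t : Finset ι) {f : ι → En n → ℝ}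
    (h : ∀ i, Bd k (f i)) : Bd k (fun x => ∑ i ∈ t, f i x) := by
  classical
  induction t using Finset.induction_on with
  | empty => simpa using Bd.zero k
  | insert a t ha ih => simpa [Finset.sum_insert ha] using (h a).add ih

/-- First-order symbols. -/
def Sy {n : ℕ} (m : ℝ) (f : En n → ℝ) : Prop :=
  ContDiffOn ℝ 1 f (OmegaExt n) ∧ Bd m f ∧ ∀ i, Bd (m - 1) (pd i f)

lemma Sy.congr {n : ℕ} {k : ℝ} {f g : En n → ℝ} (h : Sy k f) (e : ∀ x ∈ OmegaExt n, g x = f x) :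
    Sy k g := by
  refine ⟨h.1.congr e, h.2.1.congr e, fun i => (h.2.2 i).congr fun x hx => ?_⟩
  apply pd_congr
  filter_upwards [(isOpen_Om n).mem_nhds hx] with y hy using e y hy

lemma Sy.mono {n : ℕ} {k l : ℝ} {f : En n → ℝ} (h : Sy k f) (e : k ≤ l) : Sy l f :=
  ⟨h.1, h.2.1.mono e, fun i => (h.2.2 i).mono (by linarith)⟩

lemma Sy.add {n : ℕ} {k : ℝ} {f g : En n → ℝ} (h : Sy k f) (h' : Sy k g) :
    Sy k (fun x => f x + g x) :=
  ⟨h.1.add h'.1, h.2.1.add h'.2.1, fun i => ((h.2.2 i).add (h'.2.2 i)).congr fun _ hx =>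
    pd_add i (diffAt_Om h.1 hx) (diffAt_Om h'.1 hx)⟩

lemma Sy.sub {n : ℕ} {k : ℝ} {f g : En n → ℝ} (h : Sy k f) (h' : Sy k g) :
    Sy k (fun x => f x - g x) :=
  ⟨h.1.sub h'.1, h.2.1.sub h'.2.1, fun i => ((h.2.2 i).sub (h'.2.2 i)).congr fun _ hx =>
    pd_sub i (diffAt_Om h.1 hx) (diffAt_Om h'.1 hx)⟩

lemma Sy.mul {n : ℕ} {k l : ℝ} {f g : En n → ℝ} (h : Sy k f) (h' : Sy l g) :
    Sy (k + l) (fun x => f x * g x) := by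
  refine ⟨h.1.mul h'.1, h.2.1.mul h'.2.1, fun i => ?_⟩
  have h1 : Bd (k + l - 1) (fun x => pd i f x * g x) := ((h.2.2 i).mul h'.2.1).mono (by linarith)
  have h2 : Bd (k + l - 1) (fun x => f x * pd i g x) := (h.2.1.mul (h'.2.2 i)).mono (by linarith)
  exact (h1.add h2).congr fun _ hx => pd_mul i (diffAt_Om h.1 hx) (diffAt_Om h'.1 hx)

lemma pd_const {n : ℕ} (i : Fin n) (c : ℝ) (x : En n) : pd i (fun _ : En n => c) x = 0 := by
  simp [pd]

lemma Sy.const {n : ℕ} (c : ℝ) : Sy 0 (fun _ : En n => c) :=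
  ⟨contDiffOn_const, Bd.const c, fun i => (Bd.zero _).congr fun x _ => pd_const i c x⟩

lemma Sy.zero {n : ℕ} (k : ℝ) : Sy k (fun _ : En n => 0) :=
  ⟨contDiffOn_const, Bd.zero _, fun i => (Bd.zero _).congr fun x _ => pd_const i 0 x⟩

lemma Sy.sum {n : ℕ} {k : ℝ} {ι : Type*} (t : Finset ι) {f : ι → En n → ℝ}
    (h : ∀ i, Sy k (f i)) : Sy k (fun x => ∑ i ∈ t, f i x) := by
  classical
  induction t using Finset.induction_on with
  | empty => simpa using Sy.zero k
  | insert a t ha ih => simpa [Finset.sum_insert ha] using (h a).add ih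

lemma pd_coord {n : ℕ} (i j : Fin n) (x : En n) :
    pd i (fun y : En n => y j) x = if i = j then 1 else 0 := by
  have : (fun y : En n => y j) = (EuclideanSpace.proj j : En n →L[ℝ] ℝ) := rfl
  rw [pd, this, ContinuousLinearMap.fderiv]
  simp [ev, Pi.single_apply, eq_comm]

lemma Sy.coord {n : ℕ} (j : Fin n) : Sy 1 (fun x : En n => x j) := by
  refine ⟨?_, ⟨1, zero_le_one, fun x _ => ?_⟩, fun i => ⟨1, zero_le_one, fun x _ => ?_⟩⟩
  · have : (fun y : En n => y j) = (EuclideanSpace.proj j : En n →L[ℝ] ℝ) := rfl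
    rw [this]; exact (EuclideanSpace.proj j : En n →L[ℝ] ℝ).contDiff.contDiffOn
  · simpa using PiLp.norm_apply_le x j
  · rw [pd_coord]; split_ifs <;> simp

lemma Sy.norm_rpow {n : ℕ} (t : ℝ) : Sy t (fun x : En n => ‖x‖ ^ t) := by
  refine ⟨?_, ⟨1, zero_le_one, fun x hx => ?_⟩, fun i => ⟨|t|, abs_nonneg _, fun x hx => ?_⟩⟩
  · intro x hx
    apply ContDiffAt.contDiffWithinAt
    exact (contDiffAt_norm ℝ (Om_ne hx)).rpow_const_of_ne (Om_pos hx).ne'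
  · rw [abs_of_nonneg (by positivity), one_mul]
  · rw [pd_comp_norm i (Om_ne hx) (Real.hasDerivAt_rpow_const (Or.inl (Om_pos hx).ne')),
      abs_mul, abs_mul, abs_of_nonneg (Real.rpow_nonneg (norm_nonneg x) _)]
    have : |x i / ‖x‖| ≤ 1 := by
      rw [abs_div, abs_norm, div_le_one (Om_pos hx)]
      exact PiLp.norm_apply_le x i
    calc _ ≤ |t| * ‖x‖ ^ (t-1) * 1 := mul_le_mul_of_nonneg_left this (by positivity)
      _ = _ := mul_one _

lemma Sy.norm {n : ℕ} : Sy 1 (fun x : En n => ‖x‖) :=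
  (Sy.norm_rpow 1).congr fun x _ => (Real.rpow_one _).symm

lemma Sy.norm_inv {n : ℕ} : Sy (-1) (fun x : En n => ‖x‖⁻¹) :=
  (Sy.norm_rpow (-1)).congr fun x _ => (Real.rpow_neg_one _).symm

lemma pd_inv {n : ℕ} (i : Fin n) {f : En n → ℝ} {x : En n} (hf : DifferentiableAt ℝ f x)
    (h0 : f x ≠ 0) : pd i (fun y => (f y)⁻¹) x = - (pd i f x * ((f x)⁻¹ * (f x)⁻¹)) := by
  have h1 : DifferentiableAt ℝ (fun y => (f y)⁻¹) x := hf.inv h0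
  have h2 := pd_mul i hf h1
  have h3 : pd i (fun y => f y * (f y)⁻¹) x = 0 := by
    rw [← pd_const i 1 x]
    apply pd_congr
    filter_upwards [hf.continuousAt.eventually_ne h0] with y hy using mul_inv_cancel₀ hy
  rw [h3] at h2
  field_simp
  field_simp at h2
  linarith

lemma Sy.inv {n : ℕ} {m c : ℝ} {f : En n → ℝ} (hf : Sy m f) (hc : 0 < c)
    (h : ∀ x ∈ OmegaExt n, c * ‖x‖ ^ m ≤ f x) : Sy (-m) (fun x => (f x)⁻¹) := by
  have hpos : ∀ x ∈ OmegaExt n, 0 < f x := fun x hx =>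
    lt_of_lt_of_le (mul_pos hc (Real.rpow_pos_of_pos (Om_pos hx) _)) (h x hx)
  have hb : Bd (-m) (fun x => (f x)⁻¹) := by
    refine ⟨c⁻¹, by positivity, fun x hx => ?_⟩
    have hp := Real.rpow_pos_of_pos (Om_pos hx) m
    rw [abs_of_pos (inv_pos.mpr (hpos x hx)), Real.rpow_neg (norm_nonneg x), ← mul_inv]
    exact inv_anti₀ (by positivity) (h x hx)
  refine ⟨hf.1.inv fun x hx => (hpos x hx).ne', hb, fun i => ?_⟩
  exact ((((hf.2.2 i).mul (hb.mul hb)).neg).mono (by linarith)).congr fun x hx =>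
    pd_inv i (diffAt_Om hf.1 hx) (hpos x hx).ne'

end

section
open scoped Topology ENNReal NNReal Pointwise ContDiff Convolution

/-- All standing hypotheses. -/
structure Setup (n : ℕ) (A : En n → Matrix (Fin n) (Fin n) ℝ) (lam α C : ℝ) (u : En n → ℝ) : Prop where
  hn : 2 ≤ n
  hlam0 : 0 < lam
  hlam1 : lam < 1
  hα0 : 0 < α
  hα1 : α ≤ 1
  hC : 0 < C
  hA : EllipticDecay A lam α C
  hu : WeakSol A u

def Bm {n : ℕ} (A : En n → Matrix (Fin n) (Fin n) ℝ) (i j : Fin n) (x : En n) : ℝ := (A x - 1) i j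
def Bx {n : ℕ} (A : En n → Matrix (Fin n) (Fin n) ℝ) (j : Fin n) (x : En n) : ℝ :=
  ∑ k, Bm A j k x * x k
def Bxx {n : ℕ} (A : En n → Matrix (Fin n) (Fin n) ℝ) (x : En n) : ℝ := ∑ j, Bx A j x * x j
def Ax {n : ℕ} (A : En n → Matrix (Fin n) (Fin n) ℝ) (j : Fin n) (x : En n) : ℝ :=
  ∑ k, A x j k * x k
def qA {n : ℕ} (A : En n → Matrix (Fin n) (Fin n) ℝ) (x : En n) : ℝ := ∑ j, Ax A j x * x j
def aV {n : ℕ} (A : En n → Matrix (Fin n) (Fin n) ℝ) (j : Fin n) (x : En n) : ℝ :=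
  ‖x‖⁻¹ * Ax A j x
def YV {n : ℕ} (A : En n → Matrix (Fin n) (Fin n) ℝ) (j : Fin n) (x : En n) : ℝ :=
  ‖x‖ * (Ax A j x * (qA A x)⁻¹)
def WV {n : ℕ} (A : En n → Matrix (Fin n) (Fin n) ℝ) (j : Fin n) (x : En n) : ℝ :=
  ‖x‖⁻¹ * (qA A x)⁻¹ * (‖x‖ * ‖x‖ * Bx A j x - Bxx A x * x j)
/-- The divergence of `A∇r`. -/
def dva {n : ℕ} (A : En n → Matrix (Fin n) (Fin n) ℝ) (x : En n) : ℝ := ∑ j, pd j (aV A j) x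
def bA {n : ℕ} (A : En n → Matrix (Fin n) (Fin n) ℝ) (x : En n) : ℝ :=
  dva A x - ((n:ℝ) - 1) * (muA A x * ‖x‖⁻¹)

lemma sum_sq_eq {n : ℕ} (x : En n) : ∑ j, x j * x j = ‖x‖ ^ 2 := by
  rw [EuclideanSpace.norm_sq_eq]
  exact Finset.sum_congr rfl fun j _ => by rw [Real.norm_eq_abs, sq_abs]; ring

lemma A_eq {n : ℕ} (A : En n → Matrix (Fin n) (Fin n) ℝ) (x : En n) (i j : Fin n) :
    A x i j = Bm A i j x + if i = j then 1 else 0 := by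
  simp [Bm, Matrix.one_apply]

lemma Ax_eq {n : ℕ} (A : En n → Matrix (Fin n) (Fin n) ℝ) (x : En n) (j : Fin n) :
    Ax A j x = Bx A j x + x j := by
  simp only [Ax, Bx, A_eq A x, add_mul, Finset.sum_add_distrib]
  simp

lemma qA_eq {n : ℕ} (A : En n → Matrix (Fin n) (Fin n) ℝ) (x : En n) :
    qA A x = Bxx A x + ‖x‖ ^ 2 := by
  simp only [qA, Bxx, Ax_eq, add_mul, Finset.sum_add_distrib, sum_sq_eq]

lemma qA_quad {n : ℕ} (A : En n → Matrix (Fin n) (Fin n) ℝ) (x : En n) :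
    quadForm (A x) x x = qA A x := by
  rw [quadForm_eq, qA]
  refine Finset.sum_congr rfl fun i _ => ?_
  rw [Ax, Finset.sum_mul]
  exact Finset.sum_congr rfl fun j _ => by ring

lemma muA_eq {n : ℕ} (A : En n → Matrix (Fin n) (Fin n) ℝ) (x : En n) :
    muA A x = qA A x * ‖x‖⁻¹ ^ 2 := by
  rw [muA, qA_quad, div_eq_mul_inv, inv_pow]

lemma muA_eq' {n : ℕ} (A : En n → Matrix (Fin n) (Fin n) ℝ) {x : En n} (hx : x ∈ OmegaExt n) :
    muA A x = Bxx A x * (‖x‖⁻¹ * ‖x‖⁻¹) + 1 := by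
  have := (Om_pos hx).ne'
  rw [muA_eq, qA_eq]
  field_simp

variable {n : ℕ} {A : En n → Matrix (Fin n) (Fin n) ℝ} {lam α C : ℝ} {u : En n → ℝ}

lemma Setup.q_low (S : Setup n A lam α C u) {x : En n} (hx : x ∈ OmegaExt n) :
    lam * ‖x‖ ^ 2 ≤ qA A x := by
  rw [← qA_quad]; exact (S.hA.2.2.1 x hx x).1

lemma Setup.q_up (S : Setup n A lam α C u) {x : En n} (hx : x ∈ OmegaExt n) :
    qA A x ≤ lam⁻¹ * ‖x‖ ^ 2 := by
  rw [← qA_quad]; exact (S.hA.2.2.1 x hx x).2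

lemma Setup.q_pos (S : Setup n A lam α C u) {x : En n} (hx : x ∈ OmegaExt n) : 0 < qA A x :=
  lt_of_lt_of_le (mul_pos S.hlam0 (pow_pos (Om_pos hx) 2)) (S.q_low hx)

lemma Setup.mu_low (S : Setup n A lam α C u) {x : En n} (hx : x ∈ OmegaExt n) : lam ≤ muA A x := by
  rw [muA, qA_quad, le_div_iff₀ (pow_pos (Om_pos hx) 2)]; exact S.q_low hx

lemma Setup.mu_up (S : Setup n A lam α C u) {x : En n} (hx : x ∈ OmegaExt n) : muA A x ≤ lam⁻¹ := by
  rw [muA, qA_quad, div_le_iff₀ (pow_pos (Om_pos hx) 2)]; exact S.q_up hx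

lemma Setup.mu_pos (S : Setup n A lam α C u) {x : En n} (hx : x ∈ OmegaExt n) : 0 < muA A x :=
  lt_of_lt_of_le S.hlam0 (S.mu_low hx)

lemma Setup.syB (S : Setup n A lam α C u) (i j : Fin n) : Sy (-α) (Bm A i j) := by
  have hb : ∀ x ∈ OmegaExt n, ‖x‖ * ‖gradient (Bm A i j) x‖ + |Bm A i j x| ≤ C * ‖x‖ ^ (-α) :=
    fun x hx => S.hA.2.2.2 x hx i j
  refine ⟨?_, ⟨C, S.hC.le, fun x hx => ?_⟩, fun k => ⟨C, S.hC.le, fun x hx => ?_⟩⟩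
  · exact ((S.hA.2.1 i j).sub (contDiffOn_const (c := (1 : Matrix (Fin n) (Fin n) ℝ) i j)))
  · have := hb x hx
    have := mul_nonneg (norm_nonneg x) (norm_nonneg (gradient (Bm A i j) x))
    linarith
  · have h1 := hb x hx
    have h2 : |pd k (Bm A i j) x| ≤ ‖gradient (Bm A i j) x‖ := by
      rw [← gradient_apply]; exact PiLp.norm_apply_le (gradient (Bm A i j) x) k
    have h3 := abs_nonneg (Bm A i j x)
    have hp := Om_pos hx
    rw [Real.rpow_sub hp, Real.rpow_one, ← mul_div_assoc, le_div_iff₀ hp]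
    nlinarith

lemma Setup.syA (S : Setup n A lam α C u) (i j : Fin n) : Sy 0 (fun x => A x i j) :=
  (((S.syB i j).mono (by linarith [S.hα0])).add (Sy.const (if i = j then 1 else 0))).congr
    fun x _ => A_eq A x i j

lemma Setup.syBx (S : Setup n A lam α C u) (j : Fin n) : Sy (1 - α) (Bx A j) :=
  Sy.sum _ fun k => ((S.syB j k).mul (Sy.coord k)).mono (by linarith)

lemma Setup.syBxx (S : Setup n A lam α C u) : Sy (2 - α) (Bxx A) :=
  Sy.sum _ fun k => ((S.syBx k).mul (Sy.coord k)).mono (by linarith)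

lemma Setup.syAx (S : Setup n A lam α C u) (j : Fin n) : Sy 1 (Ax A j) :=
  Sy.sum _ fun k => ((S.syA j k).mul (Sy.coord k)).mono (by linarith)

lemma Setup.syq (S : Setup n A lam α C u) : Sy 2 (qA A) :=
  Sy.sum _ fun k => ((S.syAx k).mul (Sy.coord k)).mono (by linarith)

lemma Setup.syqi (S : Setup n A lam α C u) : Sy (-2) (fun x => (qA A x)⁻¹) :=
  S.syq.inv S.hlam0 fun x hx => by rw [Real.rpow_two]; exact S.q_low hx

lemma Setup.sya (S : Setup n A lam α C u) (j : Fin n) : Sy 0 (aV A j) :=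
  (Sy.norm_inv.mul (S.syAx j)).mono (by linarith)

lemma Setup.syY (S : Setup n A lam α C u) (j : Fin n) : Sy 0 (YV A j) :=
  (Sy.norm.mul ((S.syAx j).mul S.syqi)).mono (by linarith)

lemma Setup.syW (S : Setup n A lam α C u) (j : Fin n) : Sy (-α) (WV A j) := by
  have h1 : Sy (3 - α) (fun x => ‖x‖ * ‖x‖ * Bx A j x) :=
    ((Sy.norm.mul Sy.norm).mul (S.syBx j)).mono (by linarith)
  have h2 : Sy (3 - α) (fun x => Bxx A x * x j) :=
    (S.syBxx.mul (Sy.coord j)).mono (by linarith)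
  exact ((Sy.norm_inv.mul S.syqi).mul (h1.sub h2)).mono (by linarith)

lemma Setup.Y_eq (S : Setup n A lam α C u) (j : Fin n) {x : En n} (hx : x ∈ OmegaExt n) :
    YV A j x = ‖x‖⁻¹ * x j + WV A j x := by
  have h1 := (Om_pos hx).ne'
  have h2 := (S.q_pos hx).ne'
  rw [YV, WV, Ax_eq]
  have h3 := qA_eq A x
  field_simp
  rw [h3]; ring

lemma a_eq (j : Fin n) (x : En n) :
    aV A j x = ‖x‖⁻¹ * x j + ‖x‖⁻¹ * Bx A j x := by
  rw [aV, Ax_eq]; ring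

lemma pd_unit (k j : Fin n) {x : En n} (hx : x ∈ OmegaExt n) :
    pd k (fun y : En n => ‖y‖⁻¹ * y j) x =
      ‖x‖⁻¹ * ((if k = j then 1 else 0) - ‖x‖⁻¹ * x k * (‖x‖⁻¹ * x j)) := by
  have h0 := Om_ne hx
  have hp := (Om_pos hx).ne'
  rw [pd_mul k (diffAt_Om Sy.norm_inv.1 hx) (diffAt_Om (Sy.coord j).1 hx), pd_coord,
    pd_inv k (diffAt_Om Sy.norm.1 hx) hp, pd_norm k h0]
  field_simp
  ring

lemma Setup.pd_Y (S : Setup n A lam α C u) (k j : Fin n) {x : En n} (hx : x ∈ OmegaExt n) :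
    pd k (YV A j) x = ‖x‖⁻¹ * ((if k = j then 1 else 0) - ‖x‖⁻¹ * x k * (‖x‖⁻¹ * x j))
      + pd k (WV A j) x := by
  rw [← pd_unit k j hx, ← pd_add k (diffAt_Om (Sy.norm_inv.mul (Sy.coord j)).1 hx)
    (diffAt_Om (S.syW j).1 hx)]
  apply pd_congr
  filter_upwards [(isOpen_Om n).mem_nhds hx] with y hy using S.Y_eq j hy

lemma unit_div {x : En n} (hx : x ∈ OmegaExt n) :
    ∑ j, ‖x‖⁻¹ * ((if j = j then 1 else 0) - ‖x‖⁻¹ * x j * (‖x‖⁻¹ * x j)) =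
      ((n:ℝ) - 1) * ‖x‖⁻¹ := by
  have hp := (Om_pos hx).ne'
  rw [← Finset.mul_sum, Finset.sum_sub_distrib]
  have e : ∑ j, ‖x‖⁻¹ * x j * (‖x‖⁻¹ * x j) = 1 := by
    have : ∀ j, ‖x‖⁻¹ * x j * (‖x‖⁻¹ * x j) = ‖x‖⁻¹ * ‖x‖⁻¹ * (x j * x j) := fun j => by ring
    simp only [this, ← Finset.mul_sum, sum_sq_eq]
    field_simp
  rw [e]; simp; ring

lemma Setup.div_Y (S : Setup n A lam α C u) {x : En n} (hx : x ∈ OmegaExt n) :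
    ∑ j, pd j (YV A j) x = ((n:ℝ) - 1) * ‖x‖⁻¹ + ∑ j, pd j (WV A j) x := by
  rw [← unit_div hx, ← Finset.sum_add_distrib]
  exact Finset.sum_congr rfl fun j _ => S.pd_Y j j hx

lemma Setup.bd_dva (S : Setup n A lam α C u) :
    Bd (-1 - α) (fun x => dva A x - ((n:ℝ) - 1) * ‖x‖⁻¹) := by
  have h1 : ∀ j, Sy (-α) (fun x => ‖x‖⁻¹ * Bx A j x) := fun j =>
    (Sy.norm_inv.mul (S.syBx j)).mono (by linarith)
  have h2 : Bd (-1-α) (fun x => ∑ j, pd j (fun x => ‖x‖⁻¹ * Bx A j x) x) :=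
    Bd.sum _ fun j => ((h1 j).2.2 j).mono (by linarith)
  refine h2.congr fun x hx => ?_
  rw [← unit_div hx, dva, ← Finset.sum_sub_distrib]
  refine Finset.sum_congr rfl fun j _ => ?_
  have : aV A j = fun x => ‖x‖⁻¹ * x j + ‖x‖⁻¹ * Bx A j x := funext fun x => a_eq j x
  rw [this, pd_add j (diffAt_Om (Sy.norm_inv.mul (Sy.coord j)).1 hx) (diffAt_Om (h1 j).1 hx),
    pd_unit j j hx]
  ring

lemma Setup.bd_mu1 (S : Setup n A lam α C u) : Bd (-α) (fun x => muA A x - 1) := by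
  have : Bd (-α) (fun x : En n => Bxx A x * (‖x‖⁻¹ * ‖x‖⁻¹)) :=
    (S.syBxx.2.1.mul (Sy.norm_inv.2.1.mul Sy.norm_inv.2.1)).mono (by linarith)
  exact this.congr fun x hx => by rw [muA_eq' A hx]; ring

lemma Setup.bd_mu (S : Setup n A lam α C u) : Bd 0 (fun x => muA A x) :=
  ((S.bd_mu1.mono (by linarith [S.hα0])).add (Bd.const 1)).congr fun x hx => by ring

lemma Setup.bd_b (S : Setup n A lam α C u) : Bd (-1 - α) (bA A) := by
  have h1 : Bd (-1-α) (fun x : En n => ((n:ℝ)-1) * ((muA A x - 1) * ‖x‖⁻¹)) :=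
    ((S.bd_mu1.mul Sy.norm_inv.2.1).const_mul _).mono (by linarith)
  exact (S.bd_dva.sub h1).congr fun x hx => by rw [bA]; ring

end

section
open scoped Topology ENNReal NNReal Pointwise ContDiff Convolution

def sN (n : ℕ) : ℝ := ((n:ℝ) - 1) / 2
def vA {n : ℕ} (A : En n → Matrix (Fin n) (Fin n) ℝ) (u : En n → ℝ) (x : En n) : ℝ :=
  ∑ i, x i / ‖x‖ * au A u i x
def eU {n : ℕ} (A : En n → Matrix (Fin n) (Fin n) ℝ) (u : En n → ℝ) (x : En n) : ℝ :=
  ∑ i, ∑ j, A x i j * (pd i u x * pd j u x)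
def pV {n : ℕ} (u : En n → ℝ) (i : Fin n) (x : En n) : ℝ :=
  pd i u x + sN n * ‖x‖⁻¹ * u x * (‖x‖⁻¹ * x i)
def zP {n : ℕ} (A : En n → Matrix (Fin n) (Fin n) ℝ) (u : En n → ℝ) (x : En n) : ℝ :=
  vA A u x + sN n * ‖x‖⁻¹ * u x * muA A x
def dD {n : ℕ} (A : En n → Matrix (Fin n) (Fin n) ℝ) (u : En n → ℝ) (x : En n) : ℝ :=
  zP A u x ^ 2 * (muA A x)⁻¹
def eD {n : ℕ} (A : En n → Matrix (Fin n) (Fin n) ℝ) (u : En n → ℝ) (x : En n) : ℝ :=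
  ∑ i, ∑ j, A x i j * (pV u i x * pV u j x)
def hD {n : ℕ} (A : En n → Matrix (Fin n) (Fin n) ℝ) (u : En n → ℝ) (x : En n) : ℝ :=
  u x ^ 2 * muA A x
def iD {n : ℕ} (A : En n → Matrix (Fin n) (Fin n) ℝ) (u : En n → ℝ) (x : En n) : ℝ :=
  u x * zP A u x
def gD {n : ℕ} (A : En n → Matrix (Fin n) (Fin n) ℝ) (u : En n → ℝ) (x : En n) : ℝ :=
  2 * dD A u x - eD A u x + u x ^ 2 - (sN n ^ 2 - sN n) * (u x ^ 2 * muA A x * ‖x‖⁻¹ ^ 2)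
def tD {n : ℕ} (u : En n → ℝ) (x : En n) : ℝ :=
  (∑ i, pd i u x ^ 2) - (∑ i, ‖x‖⁻¹ * x i * pd i u x) ^ 2
def kD {n : ℕ} (u : En n → ℝ) (x : En n) : ℝ := (∑ i, pV u i x ^ 2) + u x ^ 2
def psD {n : ℕ} (A : En n → Matrix (Fin n) (Fin n) ℝ) (u : En n → ℝ) (x : En n) : ℝ :=
  (∑ m, pd m (YV A m) x) * (eU A u x - u x ^ 2)
   + (∑ m, YV A m x * ∑ i, ∑ j, pd m (fun y => A y i j) x * (pd i u x * pd j u x))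
   - 2 * (∑ m, pd m u x * ∑ i, pd i (YV A m) x * au A u i x)
def JD {n : ℕ} (A : En n → Matrix (Fin n) (Fin n) ℝ) (u : En n → ℝ) (x : En n) : ℝ :=
  - psD A u x + 2 * sN n * ‖x‖⁻¹ * (eU A u x - u x ^ 2) + sN n * ‖x‖⁻¹ ^ 2 * (u x ^ 2 * dva A x)
   - 2 * sN n * ‖x‖⁻¹ ^ 3 * (u x ^ 2 * muA A x)

section
variable {n : ℕ} {A : En n → Matrix (Fin n) (Fin n) ℝ} {lam α C : ℝ} {u : En n → ℝ}

lemma Setup.symm (S : Setup n A lam α C u) {x : En n} (hx : x ∈ OmegaExt n) (i j : Fin n) :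
    A x i j = A x j i := ((S.hA.1 x hx).apply i j).symm

/-- Symmetry of the bilinear form. -/
lemma Setup.swap (S : Setup n A lam α C u) {x : En n} (hx : x ∈ OmegaExt n) (f g : Fin n → ℝ) :
    ∑ i, f i * ∑ j, A x i j * g j = ∑ j, (∑ i, A x j i * f i) * g j := by
  simp only [Finset.mul_sum, Finset.sum_mul]
  rw [Finset.sum_comm]
  exact Finset.sum_congr rfl fun j _ => Finset.sum_congr rfl fun i _ => by
    rw [S.symm hx i j]; ring

lemma Setup.v_eq (S : Setup n A lam α C u) {x : En n} (hx : x ∈ OmegaExt n) :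
    ∑ j, aV A j x * pd j u x = vA A u x := by
  have := S.swap hx (fun i => x i / ‖x‖) (fun j => pd j u x)
  rw [vA]
  simp only [au]
  rw [this]
  refine Finset.sum_congr rfl fun j _ => ?_
  rw [aV, Ax, Finset.mul_sum]
  congr 1
  exact Finset.sum_congr rfl fun i _ => by rw [div_eq_mul_inv]; ring

lemma mu_a (x : En n) : ∑ j, x j / ‖x‖ * aV A j x = muA A x := by
  rw [muA_eq, qA, Finset.sum_mul]
  exact Finset.sum_congr rfl fun j _ => by rw [aV, div_eq_mul_inv]; ring

lemma Setup.Y_a (S : Setup n A lam α C u) {x : En n} (hx : x ∈ OmegaExt n) (j : Fin n) :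
    YV A j x = (muA A x)⁻¹ * aV A j x := by
  have h1 := (Om_pos hx).ne'
  have h2 := (S.q_pos hx).ne'
  rw [YV, aV, muA_eq]
  field_simp

lemma Setup.Y_r (S : Setup n A lam α C u) {x : En n} (hx : x ∈ OmegaExt n) :
    ∑ j, x j / ‖x‖ * YV A j x = 1 := by
  have : ∀ j, x j / ‖x‖ * YV A j x = (muA A x)⁻¹ * (x j / ‖x‖ * aV A j x) := fun j => by
    rw [S.Y_a hx]; ring
  simp only [this, ← Finset.mul_sum, mu_a]
  exact inv_mul_cancel₀ (S.mu_pos hx).ne'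

lemma Setup.Y_u (S : Setup n A lam α C u) {x : En n} (hx : x ∈ OmegaExt n) :
    ∑ j, YV A j x * pd j u x = (muA A x)⁻¹ * vA A u x := by
  rw [← S.v_eq hx, Finset.mul_sum]
  exact Finset.sum_congr rfl fun j _ => by rw [S.Y_a hx]; ring

lemma eU_eq (x : En n) : ∑ i, au A u i x * pd i u x = eU A u x := by
  rw [eU]
  refine Finset.sum_congr rfl fun i _ => ?_
  rw [au, Finset.sum_mul]
  exact Finset.sum_congr rfl fun j _ => by ring

lemma hn1 (S : Setup n A lam α C u) : 1 ≤ n := le_trans (by norm_num) S.hn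

lemma pd_u2 {x : En n} (hu : DifferentiableAt ℝ u x) {f : En n → ℝ} (hf : DifferentiableAt ℝ f x)
    (j : Fin n) :
    pd j (fun x => u x * u x * f x) x = 2 * u x * (f x * pd j u x) + u x ^ 2 * pd j f x := by
  have : DifferentiableAt ℝ (fun x => u x * u x) x := hu.mul hu
  rw [pd_mul j this hf, pd_mul j hu hu]; ring

lemma Setup.raw1 (S : Setup n A lam α C u) :
    RP n (hD A u) (fun x => 2 * (u x * vA A u x) + u x ^ 2 * dva A x) := by
  have hu := S.hu.1
  refine (RP.div (hn1 S) (fun j x => u x * u x * aV A j x)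
    (fun j => (hu.mul hu).mul (S.sya j).1)).congr (fun x hx => ?_) (fun x hx => ?_)
  · have : ∀ j, x j / ‖x‖ * (u x * u x * aV A j x) = u x ^ 2 * (x j / ‖x‖ * aV A j x) :=
      fun j => by ring
    simp only [this, ← Finset.mul_sum, mu_a, hD]
  · simp only [pd_u2 (diffAt_Om hu hx) (diffAt_Om (S.sya _).1 hx), Finset.sum_add_distrib,
      ← Finset.mul_sum, S.v_eq hx, dva]
    ring

lemma Setup.raw2 (S : Setup n A lam α C u) :
    RP n (fun x => u x ^ 2) (fun x => 2 * (u x * ∑ m, YV A m x * pd m u x)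
      + u x ^ 2 * ∑ m, pd m (YV A m) x) := by
  have hu := S.hu.1
  refine (RP.div (hn1 S) (fun j x => u x * u x * YV A j x)
    (fun j => (hu.mul hu).mul (S.syY j).1)).congr (fun x hx => ?_) (fun x hx => ?_)
  · have : ∀ j, x j / ‖x‖ * (u x * u x * YV A j x) = u x ^ 2 * (x j / ‖x‖ * YV A j x) :=
      fun j => by ring
    simp only [this, ← Finset.mul_sum, S.Y_r hx, mul_one]
  · simp only [pd_u2 (diffAt_Om hu hx) (diffAt_Om (S.syY _).1 hx), Finset.sum_add_distrib,
      ← Finset.mul_sum]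
    ring

lemma Setup.raw3 (S : Setup n A lam α C u) :
    RP n (fun x => u x * vA A u x) (fun x => eU A u x - u x ^ 2) :=
  (RP.weak (hn1 S) S.hA.2.1 S.hu).congr (fun _ _ => rfl) (fun x _ => by rw [eU_eq])

lemma RP.cmul {P Q : En n → ℝ} (h : RP n P Q) (c : ℝ) :
    RP n (fun x => c * P x) (fun x => c * Q x) :=
  (h.radial (fun _ => c) (fun _ => 0) (fun r _ => hasDerivAt_const r c)
    continuousOn_const).congr (fun _ _ => rfl) (fun x _ => by ring)

lemma Setup.raw4 (S : Setup n A lam α C u) :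
    RP n (fun x => 2 * (vA A u x ^ 2 * (muA A x)⁻¹) - eU A u x + u x ^ 2)
      (fun x => - psD A u x) := by
  have h := RP.rellich (hn1 S) S.hA.2.1 S.hA.1
    (fun x hx ξ => (mul_nonneg S.hlam0.le (sq_nonneg _)).trans (S.hA.2.2.1 x hx ξ).1) S.hu
    (YV A) (fun j => (S.syY j).1)
  refine ((h.cmul (-1)).add S.raw2).congr (fun x hx => ?_) (fun x hx => ?_)
  · rw [S.Y_r hx, S.Y_u hx]
    change _ = -1 * (1 * eU A u x - 2 * ((muA A x)⁻¹ * vA A u x) * vA A u x) + u x ^ 2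
    ring
  · rw [psD]
    change _ = -1 * (_ * eU A u x + _ - _ + _) + _
    ring

lemma inv_deriv {r : ℝ} (c : ℝ) (hr : 1 < r) : HasDerivAt (fun r : ℝ => c * r⁻¹) (-c * r⁻¹ ^ 2) r := by
  have h : r ≠ 0 := by linarith
  have := (hasDerivAt_inv h).const_mul c
  refine this.congr_deriv ?_
  rw [inv_pow]; ring

lemma inv2_deriv {r : ℝ} (c : ℝ) (hr : 1 < r) :
    HasDerivAt (fun r : ℝ => c * r⁻¹ ^ 2) (-2 * c * r⁻¹ ^ 3) r := by
  have h : r ≠ 0 := by linarith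
  have := ((hasDerivAt_inv h).fun_pow 2).const_mul c
  refine this.congr_deriv ?_
  push_cast
  field_simp

lemma inv_pow_cont (c : ℝ) (k : ℕ) : ContinuousOn (fun r : ℝ => c * r⁻¹ ^ k) (Set.Ioi 1) := by
  refine ContinuousOn.mul continuousOn_const (ContinuousOn.pow (ContinuousOn.inv₀ continuousOn_id ?_) k)
  intro x hx
  have : (1:ℝ) < x := hx
  simp only [id]; linarith

lemma Setup.RPh (S : Setup n A lam α C u) :
    RP n (hD A u) (fun x => 2 * iD A u x + u x ^ 2 * bA A x) :=
  S.raw1.congr (fun _ _ => rfl) (fun x hx => by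
    rw [iD, zP, bA, sN]; ring)

lemma pV_sum2 (x : En n) : eD A u x =
    (∑ i, ∑ j, A x i j * (pd i u x * pd j u x)) +
    sN n * ‖x‖⁻¹ * u x * (∑ i, (∑ j, A x i j * pd j u x) * (‖x‖⁻¹ * x i)) +
    sN n * ‖x‖⁻¹ * u x * (∑ i, (∑ j, A x i j * x j) * (‖x‖⁻¹ * pd i u x)) +
    (sN n * ‖x‖⁻¹ * u x) ^ 2 * (∑ i, (∑ j, A x i j * x j) * (‖x‖⁻¹ ^ 2 * x i)) := by
  simp only [eD, Finset.mul_sum, Finset.sum_mul, ← Finset.sum_add_distrib]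
  refine Finset.sum_congr rfl fun i _ => Finset.sum_congr rfl fun j _ => ?_
  rw [pV, pV]; ring

lemma Setup.e_eq (S : Setup n A lam α C u) {x : En n} (hx : x ∈ OmegaExt n) :
    eD A u x = eU A u x + 2 * sN n * ‖x‖⁻¹ * (u x * vA A u x)
      + sN n ^ 2 * ‖x‖⁻¹ ^ 2 * (u x ^ 2 * muA A x) := by
  rw [pV_sum2]
  have e1 : ∑ i, (∑ j, A x i j * pd j u x) * (‖x‖⁻¹ * x i) = vA A u x := by
    rw [vA]; exact Finset.sum_congr rfl fun i _ => by rw [au, div_eq_mul_inv]; ring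
  have e2 : ∑ i, (∑ j, A x i j * x j) * (‖x‖⁻¹ * pd i u x) = vA A u x := by
    rw [← S.v_eq hx]; exact Finset.sum_congr rfl fun i _ => by rw [aV, Ax]; ring
  have e3 : ∑ i, (∑ j, A x i j * x j) * (‖x‖⁻¹ ^ 2 * x i) = muA A x := by
    rw [← mu_a]; exact Finset.sum_congr rfl fun i _ => by rw [aV, Ax, div_eq_mul_inv]; ring
  rw [e1, e2, e3, eU]; ring

lemma Setup.d_eq (S : Setup n A lam α C u) {x : En n} (hx : x ∈ OmegaExt n) :
    dD A u x = vA A u x ^ 2 * (muA A x)⁻¹ + 2 * sN n * ‖x‖⁻¹ * (u x * vA A u x)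
      + sN n ^ 2 * ‖x‖⁻¹ ^ 2 * (u x ^ 2 * muA A x) := by
  have := (S.mu_pos hx).ne'
  have h1 := (Om_pos hx).ne'
  rw [dD, zP]; field_simp; ring

lemma Setup.g_eq (S : Setup n A lam α C u) {x : En n} (hx : x ∈ OmegaExt n) :
    gD A u x = (2 * (vA A u x ^ 2 * (muA A x)⁻¹) - eU A u x + u x ^ 2)
      + 2 * sN n * ‖x‖⁻¹ * (u x * vA A u x) + sN n * ‖x‖⁻¹ ^ 2 * hD A u x := by
  rw [gD, S.e_eq hx, S.d_eq hx, hD]; ring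

lemma Setup.RPi (S : Setup n A lam α C u) :
    RP n (iD A u) (fun x => 2 * dD A u x - gD A u x + sN n * ‖x‖⁻¹ * (u x ^ 2 * bA A x)) := by
  have h1 := S.raw1.radial (fun r => sN n * r⁻¹) (fun r => -sN n * r⁻¹ ^ 2)
    (fun r hr => inv_deriv _ hr) (inv_pow_cont _ 2)
  refine (S.raw3.add h1).congr (fun x hx => ?_) (fun x hx => ?_)
  · rw [iD, zP, hD]; ring
  · rw [S.g_eq hx, S.d_eq hx, bA, hD, sN]; ring

lemma Setup.RPg (S : Setup n A lam α C u) : RP n (gD A u) (JD A u) := by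
  have h1 := S.raw1.radial (fun r => sN n * r⁻¹ ^ 2) (fun r => -2 * sN n * r⁻¹ ^ 3)
    (fun r hr => inv2_deriv _ hr) (inv_pow_cont _ 3)
  have h2 := S.raw3.radial (fun r => 2 * sN n * r⁻¹) (fun r => -(2 * sN n) * r⁻¹ ^ 2)
    (fun r hr => inv_deriv _ hr) (inv_pow_cont _ 2)
  refine ((S.raw4.add h2).add h1).congr (fun x hx => ?_) (fun x hx => ?_)
  · rw [S.g_eq hx]
  · rw [JD, hD]; ring
end

end

section
open scoped Topology ENNReal NNReal Pointwise ContDiff Convolution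

/-- Weighted power bound. -/
def GB {n : ℕ} (N : En n → ℝ) (k : ℝ) (f : En n → ℝ) : Prop :=
  ∃ C, 0 ≤ C ∧ ∀ x ∈ OmegaExt n, |f x| ≤ C * ‖x‖ ^ k * N x

section
variable {n : ℕ} {N : En n → ℝ} {k l : ℝ} {f g : En n → ℝ}

lemma GB.congr (h : GB N k f) (e : ∀ x ∈ OmegaExt n, g x = f x) : GB N k g := by
  obtain ⟨C, hC, H⟩ := h
  exact ⟨C, hC, fun x hx => by rw [e x hx]; exact H x hx⟩

lemma GB.mono (hN : ∀ x, 0 ≤ N x) (h : GB N k f) (e : k ≤ l) : GB N l f := by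
  obtain ⟨C, hC, H⟩ := h
  exact ⟨C, hC, fun x hx => (H x hx).trans (mul_le_mul_of_nonneg_right
    (mul_le_mul_of_nonneg_left (Real.rpow_le_rpow_of_exponent_le (Om_one hx) e) hC) (hN x))⟩

lemma GB.add (h : GB N k f) (h' : GB N k g) : GB N k (fun x => f x + g x) := by
  obtain ⟨C, hC, H⟩ := h
  obtain ⟨C', hC', H'⟩ := h'
  refine ⟨C + C', by positivity, fun x hx => (abs_add_le _ _).trans ?_⟩
  rw [add_mul, add_mul]; exact add_le_add (H x hx) (H' x hx)

lemma GB.neg (h : GB N k f) : GB N k (fun x => - f x) := by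
  obtain ⟨C, hC, H⟩ := h
  exact ⟨C, hC, fun x hx => by rw [abs_neg]; exact H x hx⟩

lemma GB.sub (h : GB N k f) (h' : GB N k g) : GB N k (fun x => f x - g x) := by
  simpa only [sub_eq_add_neg] using h.add h'.neg

lemma GB.zero (N : En n → ℝ) (k : ℝ) : GB N k (fun _ : En n => 0) :=
  ⟨0, le_rfl, fun x _ => by simp⟩

lemma GB.sum {ι : Type*} (t : Finset ι) {f : ι → En n → ℝ}
    (h : ∀ i, GB N k (f i)) : GB N k (fun x => ∑ i ∈ t, f i x) := by
  classical
  induction t using Finset.induction_on with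
  | empty => simpa using GB.zero N k
  | insert a t ha ih => simpa [Finset.sum_insert ha] using (h a).add ih

lemma Bd.gmul (h : Bd k f) (h' : GB N l g) : GB N (k + l) (fun x => f x * g x) := by
  obtain ⟨C, hC, H⟩ := h
  obtain ⟨C', hC', H'⟩ := h'
  refine ⟨C * C', by positivity, fun x hx => ?_⟩
  rw [abs_mul, Real.rpow_add (Om_pos hx)]
  calc |f x| * |g x| ≤ (C * ‖x‖ ^ k) * (C' * ‖x‖ ^ l * N x) :=
        mul_le_mul (H x hx) (H' x hx) (abs_nonneg _) (by positivity)
    _ = _ := by ring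

lemma GB.lmul (hN : ∀ x, 0 ≤ N x) (h : GB (fun x => √(N x)) k f) (h' : GB (fun x => √(N x)) l g) :
    GB N (k + l) (fun x => f x * g x) := by
  obtain ⟨C, hC, H⟩ := h
  obtain ⟨C', hC', H'⟩ := h'
  refine ⟨C * C', by positivity, fun x hx => ?_⟩
  rw [abs_mul, Real.rpow_add (Om_pos hx)]
  calc |f x| * |g x| ≤ (C * ‖x‖ ^ k * √(N x)) * (C' * ‖x‖ ^ l * √(N x)) :=
        mul_le_mul (H x hx) (H' x hx) (abs_nonneg _) (by positivity)
    _ = C * C' * (‖x‖ ^ k * ‖x‖ ^ l) * (√(N x) * √(N x)) := by ring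
    _ = _ := by rw [Real.mul_self_sqrt (hN x)]

lemma GB.const_mul (h : GB N k f) (c : ℝ) : GB N k (fun x => c * f x) := by
  simpa using (Bd.const c).gmul h

/-- The quadratic weight. -/
def wt (p : Fin n → En n → ℝ) (u : En n → ℝ) (x : En n) : ℝ := (∑ i, p i x ^ 2) + u x ^ 2

lemma wt_nonneg (p : Fin n → En n → ℝ) (u : En n → ℝ) (x : En n) : 0 ≤ wt p u x :=
  add_nonneg (Finset.sum_nonneg fun _ _ => sq_nonneg _) (sq_nonneg _)

lemma GB.p (p : Fin n → En n → ℝ) (u : En n → ℝ) (i : Fin n) :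
    GB (fun x => √(wt p u x)) 0 (p i) := by
  refine ⟨1, zero_le_one, fun x _ => ?_⟩
  simp only [Real.rpow_zero, one_mul]
  apply Real.abs_le_sqrt
  have := Finset.single_le_sum (f := fun i => p i x ^ 2) (fun i _ => sq_nonneg _) (Finset.mem_univ i)
  have h2 := sq_nonneg (u x)
  rw [wt]; linarith

lemma GB.w (p : Fin n → En n → ℝ) (u : En n → ℝ) :
    GB (fun x => √(wt p u x)) 0 u := by
  refine ⟨1, zero_le_one, fun x _ => ?_⟩
  simp only [Real.rpow_zero, one_mul]
  apply Real.abs_le_sqrt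
  have : 0 ≤ ∑ i, p i x ^ 2 := Finset.sum_nonneg fun _ _ => sq_nonneg _
  rw [wt]; linarith

lemma GB.lin (p : Fin n → En n → ℝ) (u : En n → ℝ) {c : Fin n → En n → ℝ} (hc : ∀ i, Bd k (c i)) :
    GB (fun x => √(wt p u x)) k (fun x => ∑ i, c i x * p i x) :=
  GB.sum _ fun i => ((hc i).gmul (GB.p p u i)).mono (fun _ => Real.sqrt_nonneg _) (by simp)

lemma GB.pp (p : Fin n → En n → ℝ) (u : En n → ℝ) (i j : Fin n) :
    GB (wt p u) 0 (fun x => p i x * p j x) := by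
  simpa using GB.lmul (wt_nonneg p u) (GB.p p u i) (GB.p p u j)

lemma GB.ww (p : Fin n → En n → ℝ) (u : En n → ℝ) :
    GB (wt p u) 0 (fun x => u x ^ 2) := by
  simpa [sq] using GB.lmul (wt_nonneg p u) (GB.w p u) (GB.w p u)

lemma GB.quad (p : Fin n → En n → ℝ) (u : En n → ℝ) {c : Fin n → Fin n → En n → ℝ}
    (hc : ∀ i j, Bd k (c i j)) :
    GB (wt p u) k (fun x => ∑ i, ∑ j, c i j x * (p i x * p j x)) :=
  GB.sum _ fun i => GB.sum _ fun j => ((hc i j).gmul (GB.pp p u i j)).mono (wt_nonneg p u) (by simp)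
end

section
variable {n : ℕ} {A : En n → Matrix (Fin n) (Fin n) ℝ} {lam α C : ℝ} {u : En n → ℝ}

lemma bd_unit (i : Fin n) : Bd 0 (fun x : En n => ‖x‖⁻¹ * x i) :=
  (Sy.norm_inv.2.1.mul (Sy.coord i).2.1).mono (by simp)

lemma Setup.bd_pdA (S : Setup n A lam α C u) (m i j : Fin n) :
    Bd (-1 - α) (pd m (fun y => A y i j)) := by
  refine (((S.syB i j).2.2 m).mono (by linarith)).congr fun x hx => ?_
  have : (fun y => A y i j) = fun y => Bm A i j y + (if i = j then 1 else 0) :=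
    funext fun y => A_eq A y i j
  rw [this, pd_add m (diffAt_Om (S.syB i j).1 hx) (differentiableAt_const _), pd_const, add_zero]

lemma eB (p : Fin n → ℝ) (x : En n) :
    ∑ i, ∑ j, A x i j * (p i * p j) - ∑ i, p i ^ 2 = ∑ i, ∑ j, Bm A i j x * (p i * p j) := by
  simp only [A_eq A x, add_mul, Finset.sum_add_distrib]
  have : ∑ i, ∑ j, (if i = j then (1:ℝ) else 0) * (p i * p j) = ∑ i, p i ^ 2 := by
    refine Finset.sum_congr rfl fun i _ => ?_
    simp [sq]
  rw [this]; ring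

lemma vB (x : En n) :
    vA A u x - ∑ i, ‖x‖⁻¹ * x i * pd i u x = ∑ i, ‖x‖⁻¹ * x i * ∑ j, Bm A i j x * pd j u x := by
  rw [vA, ← Finset.sum_sub_distrib]
  refine Finset.sum_congr rfl fun i _ => ?_
  simp only [au, A_eq A x, add_mul, Finset.sum_add_distrib]
  simp
  ring

lemma Setup.J_eq (S : Setup n A lam α C u) {x : En n} (hx : x ∈ OmegaExt n) :
    JD A u x - 2 * ‖x‖⁻¹ * tD u x =
      - ((∑ m, pd m (WV A m) x) * (eU A u x - u x ^ 2))
      - (∑ m, YV A m x * ∑ i, ∑ j, pd m (fun y => A y i j) x * (pd i u x * pd j u x))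
      + 2 * (∑ m, pd m u x * ∑ i, pd i (WV A m) x * au A u i x)
      + 2 * (‖x‖⁻¹ * ((∑ i, ∑ j, Bm A i j x * (pd i u x * pd j u x)) -
          (∑ i, ‖x‖⁻¹ * x i * pd i u x) * (∑ i, ‖x‖⁻¹ * x i * ∑ j, Bm A i j x * pd j u x)))
      + (sN n * (‖x‖⁻¹ ^ 2 * dva A x) - 2 * sN n * (‖x‖⁻¹ ^ 3 * muA A x)) * u x ^ 2 := by
  have e1 : ∑ m, pd m u x * ∑ i, pd i (YV A m) x * au A u i x =
      ‖x‖⁻¹ * (eU A u x - (∑ i, ‖x‖⁻¹ * x i * pd i u x) * vA A u x)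
       + ∑ m, pd m u x * ∑ i, pd i (WV A m) x * au A u i x := by
    have e2 : ∀ m, ∑ i, pd i (YV A m) x * au A u i x =
        ‖x‖⁻¹ * (au A u m x - ‖x‖⁻¹ * x m * vA A u x) + ∑ i, pd i (WV A m) x * au A u i x := by
      intro m
      simp only [S.pd_Y _ m hx, add_mul, Finset.sum_add_distrib]
      congr 1
      simp only [mul_assoc, ← Finset.mul_sum, sub_mul, Finset.sum_sub_distrib]
      congr 1
      simp only [vA, Finset.mul_sum]
      simp
      refine Finset.sum_congr rfl fun i _ => by rw [div_eq_mul_inv]; ring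
    simp only [e2, mul_add, Finset.sum_add_distrib]
    congr 1
    rw [← eU_eq, Finset.sum_mul, ← Finset.sum_sub_distrib, Finset.mul_sum]
    exact Finset.sum_congr rfl fun i _ => by ring
  rw [← eB, ← vB, JD, psD, e1, S.div_Y hx, tD, ← eU, sN]
  ring

lemma Setup.J_bd1 (S : Setup n A lam α C u) :
    GB (wt (fun i => pd i u) u) (-1 - α) (fun x => JD A u x - 2 * ‖x‖⁻¹ * tD u x) := by
  have a0 := S.hα0
  have a1 := S.hα1
  set p : Fin n → En n → ℝ := fun i => pd i u with hp
  have hN := wt_nonneg p u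
  have hsq : ∀ x, 0 ≤ √(wt p u x) := fun x => Real.sqrt_nonneg _
  have hau : ∀ i, GB (fun x => √(wt p u x)) 0 (au A u i) := fun i =>
    GB.lin p u fun j => (S.syA i j).2.1
  have heU : GB (wt p u) 0 (eU A u) := GB.quad p u fun i j => (S.syA i j).2.1
  have hdW : Bd (-1-α) (fun x => ∑ m, pd m (WV A m) x) :=
    Bd.sum _ fun m => ((S.syW m).2.2 m).mono (by linarith)
  have t1 : GB (wt p u) (-1-α) (fun x => (∑ m, pd m (WV A m) x) * (eU A u x - u x ^ 2)) :=
    (hdW.gmul (heU.sub (GB.ww p u))).mono hN (by linarith)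
  have t2 : GB (wt p u) (-1-α) (fun x => ∑ m, YV A m x *
      ∑ i, ∑ j, pd m (fun y => A y i j) x * (pd i u x * pd j u x)) :=
    GB.sum _ fun m => ((S.syY m).2.1.gmul (GB.quad p u fun i j => S.bd_pdA m i j)).mono hN
      (by linarith)
  have t3 : GB (wt p u) (-1-α) (fun x => 2 * (∑ m, pd m u x * ∑ i, pd i (WV A m) x * au A u i x)) := by
    refine GB.const_mul (GB.sum _ fun m => ?_) 2
    have h1 : GB (fun x => √(wt p u x)) (-1-α) (fun x => ∑ i, pd i (WV A m) x * au A u i x) :=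
      GB.sum _ fun i => (((S.syW m).2.2 i).gmul (hau i)).mono hsq (by linarith)
    exact ((GB.p p u m).lmul hN h1).mono hN (by linarith)
  have t4 : GB (wt p u) (-1-α) (fun x => 2 * (‖x‖⁻¹ * ((∑ i, ∑ j, Bm A i j x * (pd i u x * pd j u x)) -
          (∑ i, ‖x‖⁻¹ * x i * pd i u x) * (∑ i, ‖x‖⁻¹ * x i * ∑ j, Bm A i j x * pd j u x)))) := by
    have h1 : GB (wt p u) (-α) (fun x => ∑ i, ∑ j, Bm A i j x * (pd i u x * pd j u x)) :=
      GB.quad p u fun i j => (S.syB i j).2.1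
    have h2 : GB (fun x => √(wt p u x)) 0 (fun x => ∑ i, ‖x‖⁻¹ * x i * pd i u x) :=
      GB.lin p u fun i => bd_unit i
    have h3 : GB (fun x => √(wt p u x)) (-α)
        (fun x => ∑ i, ‖x‖⁻¹ * x i * ∑ j, Bm A i j x * pd j u x) :=
      GB.sum _ fun i => ((bd_unit i).gmul (GB.lin p u fun j => (S.syB i j).2.1)).mono hsq (by linarith)
    exact ((Sy.norm_inv.2.1.gmul (h1.sub ((h2.lmul hN h3).mono hN (by linarith)))).const_mul 2).mono
      hN (by linarith)
  have t5 : GB (wt p u) (-1-α) (fun x =>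
      (sN n * (‖x‖⁻¹ ^ 2 * dva A x) - 2 * sN n * (‖x‖⁻¹ ^ 3 * muA A x)) * u x ^ 2) := by
    have i2 : Bd (-2) (fun x : En n => ‖x‖⁻¹ ^ 2) :=
      ((Sy.norm_inv.2.1.mul Sy.norm_inv.2.1).mono (by norm_num)).congr fun x _ => by ring
    have i3 : Bd (-3) (fun x : En n => ‖x‖⁻¹ ^ 3) :=
      ((i2.mul Sy.norm_inv.2.1).mono (by norm_num)).congr fun x _ => by ring
    have hd : Bd 0 (dva A) := Bd.sum _ fun j => ((S.sya j).2.2 j).mono (by norm_num)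
    have h1 : Bd (-1-α) (fun x : En n => sN n * (‖x‖⁻¹ ^ 2 * dva A x)) :=
      ((i2.mul hd).const_mul _).mono (by linarith)
    have h2 : Bd (-1-α) (fun x : En n => 2 * sN n * (‖x‖⁻¹ ^ 3 * muA A x)) :=
      ((i3.mul S.bd_mu).const_mul _).mono (by linarith)
    exact ((h1.sub h2).gmul (GB.ww p u)).mono hN (by linarith)
  exact ((((t1.neg.sub t2).add t3).add t4).add t5).congr fun x hx => S.J_eq hx

lemma unit_sq {x : En n} (hx : x ∈ OmegaExt n) : ∑ i, (‖x‖⁻¹ * x i) ^ 2 = 1 := by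
  have hp := (Om_pos hx).ne'
  have : ∀ j, (‖x‖⁻¹ * x j) ^ 2 = ‖x‖⁻¹ * ‖x‖⁻¹ * (x j * x j) := fun j => by ring
  simp only [this, ← Finset.mul_sum, sum_sq_eq]
  field_simp

lemma wt_le {x : En n} (hx : x ∈ OmegaExt n) :
    wt (fun i => pd i u) u x ≤ (2 + 2 * sN n ^ 2) * kD u x := by
  have h1 : ∀ i, pd i u x ^ 2 ≤ 2 * pV u i x ^ 2 + 2 * sN n ^ 2 * u x ^ 2 * (‖x‖⁻¹ * x i) ^ 2 := by
    intro i
    have e : pd i u x = pV u i x - sN n * ‖x‖⁻¹ * u x * (‖x‖⁻¹ * x i) := by rw [pV]; ring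
    have h2 : ‖x‖⁻¹ ^ 2 ≤ 1 := pow_le_one₀ (inv_nonneg.mpr (norm_nonneg x)) (inv_le_one_of_one_le₀ (Om_one hx))
    have h3 : ‖x‖⁻¹ ^ 2 * (sN n ^ 2 * u x ^ 2 * (‖x‖⁻¹ * x i) ^ 2) ≤
        1 * (sN n ^ 2 * u x ^ 2 * (‖x‖⁻¹ * x i) ^ 2) := mul_le_mul_of_nonneg_right h2 (by positivity)
    rw [e]
    nlinarith [sq_nonneg (pV u i x + sN n * ‖x‖⁻¹ * u x * (‖x‖⁻¹ * x i))]
  have h2 : ∑ i, pd i u x ^ 2 ≤ 2 * (∑ i, pV u i x ^ 2) + 2 * sN n ^ 2 * u x ^ 2 := by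
    refine (Finset.sum_le_sum fun i _ => h1 i).trans ?_
    rw [Finset.sum_add_distrib, ← Finset.mul_sum, ← Finset.mul_sum, unit_sq hx, mul_one]
  have h3 : 0 ≤ ∑ i, pV u i x ^ 2 := Finset.sum_nonneg fun _ _ => sq_nonneg _
  rw [wt, kD]
  nlinarith [mul_nonneg (sq_nonneg (sN n)) h3, sq_nonneg (u x), mul_nonneg (sq_nonneg (sN n)) (sq_nonneg (u x))]

lemma Setup.J_bd (S : Setup n A lam α C u) :
    GB (kD u) (-1 - α) (fun x => JD A u x - 2 * ‖x‖⁻¹ * tD u x) := by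
  obtain ⟨C', hC', H⟩ := S.J_bd1
  refine ⟨C' * (2 + 2 * sN n ^ 2), by positivity, fun x hx => (H x hx).trans ?_⟩
  calc _ ≤ C' * ‖x‖ ^ (-1-α) * ((2 + 2 * sN n ^ 2) * kD u x) :=
        mul_le_mul_of_nonneg_left (wt_le hx) (by positivity)
    _ = _ := by ring

lemma pr_eq {x : En n} (hx : x ∈ OmegaExt n) :
    ∑ i, ‖x‖⁻¹ * x i * pV u i x = (∑ i, ‖x‖⁻¹ * x i * pd i u x) + sN n * ‖x‖⁻¹ * u x := by
  have : ∀ i, ‖x‖⁻¹ * x i * pV u i x = ‖x‖⁻¹ * x i * pd i u x + sN n * ‖x‖⁻¹ * u x * (‖x‖⁻¹ * x i) ^ 2 :=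
    fun i => by rw [pV]; ring
  simp only [this, Finset.sum_add_distrib, ← Finset.mul_sum, unit_sq hx, mul_one]

lemma t_eq {x : En n} (hx : x ∈ OmegaExt n) :
    tD u x = (∑ i, pV u i x ^ 2) - (∑ i, ‖x‖⁻¹ * x i * pV u i x) ^ 2 := by
  have : ∀ i, pV u i x ^ 2 = pd i u x ^ 2 + 2 * (sN n * ‖x‖⁻¹ * u x) * (‖x‖⁻¹ * x i * pd i u x) +
    (sN n * ‖x‖⁻¹ * u x) ^ 2 * (‖x‖⁻¹ * x i) ^ 2 := fun i => by rw [pV]; ring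
  rw [pr_eq hx]
  simp only [this, Finset.sum_add_distrib, ← Finset.mul_sum, unit_sq hx, mul_one]
  rw [tD]; ring

lemma t_nonneg {x : En n} (hx : x ∈ OmegaExt n) : 0 ≤ tD u x := by
  have := Finset.sum_mul_sq_le_sq_mul_sq Finset.univ (fun i => ‖x‖⁻¹ * x i) (fun i => pd i u x)
  rw [unit_sq hx, one_mul] at this
  rw [tD]; linarith

lemma t_le {x : En n} (hx : x ∈ OmegaExt n) : tD u x ≤ kD u x := by
  rw [t_eq hx, kD]
  nlinarith [sq_nonneg (∑ i, ‖x‖⁻¹ * x i * pV u i x), sq_nonneg (u x)]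

lemma Setup.z_eq (S : Setup n A lam α C u) {x : En n} (hx : x ∈ OmegaExt n) :
    zP A u x = ∑ j, aV A j x * pV u j x := by
  have : ∀ j, aV A j x * pV u j x = aV A j x * pd j u x +
      sN n * ‖x‖⁻¹ * u x * (x j / ‖x‖ * aV A j x) := fun i => by rw [pV, div_eq_mul_inv]; ring
  simp only [this, Finset.sum_add_distrib, ← Finset.mul_sum, mu_a, S.v_eq hx, zP]

lemma Setup.g_diff (S : Setup n A lam α C u) {x : En n} (hx : x ∈ OmegaExt n) :
    gD A u x - (kD u x - 2 * tD u x) =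
      2 * ((∑ j, WV A j x * pV u j x) * (∑ j, aV A j x * pV u j x) +
       (∑ j, ‖x‖⁻¹ * x j * pV u j x) * (∑ j, ‖x‖⁻¹ * Bx A j x * pV u j x))
      - (∑ i, ∑ j, Bm A i j x * (pV u i x * pV u j x))
      - ((sN n ^ 2 - sN n) * (muA A x * (‖x‖⁻¹ * ‖x‖⁻¹))) * u x ^ 2 := by
  have hd : dD A u x = (∑ j, YV A j x * pV u j x) * zP A u x := by
    have : ∑ j, YV A j x * pV u j x = (muA A x)⁻¹ * zP A u x := by
      rw [S.z_eq hx, Finset.mul_sum]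
      exact Finset.sum_congr rfl fun j _ => by rw [S.Y_a hx]; ring
    rw [this, dD]; ring
  have hY : ∑ j, YV A j x * pV u j x = (∑ j, ‖x‖⁻¹ * x j * pV u j x) + ∑ j, WV A j x * pV u j x := by
    rw [← Finset.sum_add_distrib]
    exact Finset.sum_congr rfl fun j _ => by rw [S.Y_eq j hx]; ring
  have ha : ∑ j, aV A j x * pV u j x =
      (∑ j, ‖x‖⁻¹ * x j * pV u j x) + ∑ j, ‖x‖⁻¹ * Bx A j x * pV u j x := by
    rw [← Finset.sum_add_distrib]
    exact Finset.sum_congr rfl fun j _ => by rw [a_eq]; ring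
  rw [gD, hd, hY, S.z_eq hx, t_eq hx, kD, ← eB (fun i => pV u i x), ← eD, ha]
  ring

lemma Setup.g_bd (S : Setup n A lam α C u) :
    GB (kD u) (-α) (fun x => gD A u x - (kD u x - 2 * tD u x)) := by
  have a0 := S.hα0
  have a1 := S.hα1
  set p : Fin n → En n → ℝ := pV u with hp
  have hk : kD u = wt p u := rfl
  rw [hk]
  have hN := wt_nonneg p u
  have hsq : ∀ x, 0 ≤ √(wt p u x) := fun x => Real.sqrt_nonneg _
  have h1 := GB.lin p u fun j => (S.syW j).2.1
  have h2 := GB.lin p u fun j => (S.sya j).2.1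
  have h3 := GB.lin p u fun j => bd_unit (n := n) j
  have h4 : GB (fun x => √(wt p u x)) (-α) (fun x => ∑ j, ‖x‖⁻¹ * Bx A j x * pV u j x) :=
    GB.lin p u fun j => (Sy.norm_inv.2.1.mul (S.syBx j).2.1).mono (by linarith)
  have h5 := GB.quad p u fun i j => (S.syB i j).2.1
  have h6 : Bd (-α) (fun x : En n => (sN n ^ 2 - sN n) * (muA A x * (‖x‖⁻¹ * ‖x‖⁻¹))) :=
    ((S.bd_mu.mul (Sy.norm_inv.2.1.mul Sy.norm_inv.2.1)).const_mul _).mono (by linarith)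
  exact ((((((h1.lmul hN h2).mono hN (by linarith)).add ((h3.lmul hN h4).mono hN (by linarith))).const_mul 2).sub
    h5).sub ((h6.gmul (GB.ww p u)).mono hN (by linarith))).congr fun x hx => S.g_diff hx

lemma h_nonneg' (S : Setup n A lam α C u) {x : En n} (hx : x ∈ OmegaExt n) : 0 ≤ hD A u x :=
  mul_nonneg (sq_nonneg _) (S.mu_pos hx).le

lemma Setup.u2_le (S : Setup n A lam α C u) {x : En n} (hx : x ∈ OmegaExt n) :
    u x ^ 2 ≤ lam⁻¹ * hD A u x := by
  have h := S.mu_low hx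
  rw [hD, inv_mul_eq_div, le_div_iff₀ S.hlam0]
  exact mul_le_mul_of_nonneg_left h (sq_nonneg _)

lemma Setup.h_bd (S : Setup n A lam α C u) {k : ℝ} {c : En n → ℝ} (hc : Bd k c) :
    GB (hD A u) k (fun x => c x * u x ^ 2) := by
  obtain ⟨C', hC', H⟩ := hc
  refine ⟨C' * lam⁻¹, mul_nonneg hC' (inv_nonneg.mpr S.hlam0.le), fun x hx => ?_⟩
  rw [abs_mul, abs_of_nonneg (sq_nonneg (u x))]
  calc _ ≤ C' * ‖x‖ ^ k * (lam⁻¹ * hD A u x) :=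
        mul_le_mul (H x hx) (S.u2_le hx) (sq_nonneg _) (by positivity)
    _ = _ := by ring

lemma Setup.h_le_k (S : Setup n A lam α C u) {x : En n} (hx : x ∈ OmegaExt n) :
    hD A u x ≤ lam⁻¹ * kD u x := by
  have h3 : 0 ≤ ∑ i, pV u i x ^ 2 := Finset.sum_nonneg fun _ _ => sq_nonneg _
  have hl := inv_nonneg.mpr S.hlam0.le
  rw [hD, kD]
  have := mul_le_mul_of_nonneg_left (S.mu_up hx) (sq_nonneg (u x))
  nlinarith [mul_nonneg hl h3]

lemma pV_norm (x : En n) : ‖(WithLp.toLp 2 (fun i => pV u i x) : En n)‖ ^ 2 = ∑ i, pV u i x ^ 2 := by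
  rw [EuclideanSpace.norm_sq_eq]
  exact Finset.sum_congr rfl fun j _ => by rw [Real.norm_eq_abs, sq_abs]

lemma e_quad (x : En n) : quadForm (A x) (WithLp.toLp 2 (fun i => pV u i x)) (WithLp.toLp 2 (fun i => pV u i x)) = eD A u x := by
  rw [quadForm_eq, eD]

lemma Setup.k_le (S : Setup n A lam α C u) {x : En n} (hx : x ∈ OmegaExt n) :
    kD u x ≤ lam⁻¹ * (eD A u x + hD A u x) := by
  have h1 := (S.hA.2.2.1 x hx (WithLp.toLp 2 (fun i => pV u i x))).1
  rw [pV_norm, e_quad] at h1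
  have h2 := S.u2_le hx
  rw [kD, mul_add, inv_mul_eq_div, inv_mul_eq_div] at *
  have : (∑ i, pV u i x ^ 2) ≤ eD A u x / lam := by
    rw [le_div_iff₀ S.hlam0]; linarith
  linarith

lemma Setup.d_nonneg (S : Setup n A lam α C u) {x : En n} (hx : x ∈ OmegaExt n) : 0 ≤ dD A u x :=
  mul_nonneg (sq_nonneg _) (inv_nonneg.mpr (S.mu_pos hx).le)

lemma Setup.d_le_e (S : Setup n A lam α C u) {x : En n} (hx : x ∈ OmegaExt n) :
    dD A u x ≤ eD A u x := by
  have hm := S.mu_pos hx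
  set t := (muA A x)⁻¹ * zP A u x with ht
  have h1 : 0 ≤ ∑ i, ∑ j, A x i j * ((pV u i x - t * (‖x‖⁻¹ * x i)) * (pV u j x - t * (‖x‖⁻¹ * x j))) := by
    have := (S.hA.2.2.1 x hx (WithLp.toLp 2 (fun i => pV u i x - t * (‖x‖⁻¹ * x i)))).1
    rw [quadForm_eq] at this
    exact (mul_nonneg S.hlam0.le (sq_nonneg _)).trans this
  have e1 : ∑ i, ∑ j, A x i j * ((pV u i x - t * (‖x‖⁻¹ * x i)) * (pV u j x - t * (‖x‖⁻¹ * x j))) =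
      eD A u x - t * (∑ i, ‖x‖⁻¹ * x i * ∑ j, A x i j * pV u j x) - t * (∑ i, aV A i x * pV u i x)
       + t ^ 2 * ∑ i, x i / ‖x‖ * aV A i x := by
    simp only [eD, aV, Ax, Finset.mul_sum, Finset.sum_mul, ← Finset.sum_add_distrib, ← Finset.sum_sub_distrib]
    refine Finset.sum_congr rfl fun i _ => Finset.sum_congr rfl fun j _ => ?_
    rw [div_eq_mul_inv]; ring
  have e2 : ∑ i, ‖x‖⁻¹ * x i * ∑ j, A x i j * pV u j x = ∑ i, aV A i x * pV u i x := by
    rw [S.swap hx]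
    refine Finset.sum_congr rfl fun j _ => ?_
    rw [aV, Ax, Finset.mul_sum]
    congr 1
    exact Finset.sum_congr rfl fun i _ => by ring
  rw [e1, e2, ← S.z_eq hx, mu_a] at h1
  have e3 : t * zP A u x = dD A u x := by rw [ht, dD]; ring
  have e4 : t ^ 2 * muA A x = dD A u x := by
    rw [ht, dD]; field_simp
  linarith

lemma Setup.cs_pt (S : Setup n A lam α C u) {x : En n} (hx : x ∈ OmegaExt n) (t : ℝ) :
    0 ≤ dD A u x + 2 * t * iD A u x + t ^ 2 * hD A u x := by
  have hm := S.mu_pos hx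
  have : dD A u x + 2 * t * iD A u x + t ^ 2 * hD A u x =
      (zP A u x + t * u x * muA A x) ^ 2 * (muA A x)⁻¹ := by
    rw [dD, iD, hD]; field_simp; ring
  rw [this]
  exact mul_nonneg (sq_nonneg _) (inv_nonneg.mpr hm.le)

lemma Setup.m_bd (S : Setup n A lam α C u) :
    GB (hD A u) 0 (fun x => gD A u x - (2 * dD A u x - eD A u x)) := by
  have h : Bd 0 (fun x : En n => 1 - (sN n ^ 2 - sN n) * (muA A x * (‖x‖⁻¹ * ‖x‖⁻¹))) :=
    (Bd.const 1).sub (((S.bd_mu.mul (Sy.norm_inv.2.1.mul Sy.norm_inv.2.1)).const_mul _).mono (by norm_num))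
  exact (S.h_bd h).congr fun x hx => by rw [gD]; ring
end

end

section
open scoped Topology ENNReal NNReal Pointwise ContDiff Convolution

structure ODE (α C : ℝ) (H I D E g T K H1 I1 g1 : ℝ → ℝ) : Prop where
  hα0 : 0 < α
  hα1 : α ≤ 1
  hC : 1 ≤ C
  dH : ∀ r, 1 < r → HasDerivAt H (H1 r) r
  dI : ∀ r, 1 < r → HasDerivAt I (I1 r) r
  dg : ∀ r, 1 < r → HasDerivAt g (g1 r) r
  eH : ∀ r, 1 < r → |H1 r - 2 * I r| ≤ C * r ^ (-1 - α) * H r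
  eI : ∀ r, 1 < r → |I1 r - (2 * D r - g r)| ≤ C * r ^ (-1 - α) * H r
  eg : ∀ r, 1 < r → |g1 r - 2 * r⁻¹ * T r| ≤ C * r ^ (-1 - α) * K r
  gK : ∀ r, 1 < r → |g r - (K r - 2 * T r)| ≤ C * r ^ (-α) * K r
  gm : ∀ r, 1 < r → |g r - (2 * D r - E r)| ≤ C * H r
  HK : ∀ r, 1 < r → H r ≤ C * K r
  KE : ∀ r, 1 < r → K r ≤ C * (E r + H r)
  T0 : ∀ r, 1 < r → 0 ≤ T r
  TK : ∀ r, 1 < r → T r ≤ K r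
  D0 : ∀ r, 1 < r → 0 ≤ D r
  DE : ∀ r, 1 < r → D r ≤ E r
  H0 : ∀ r, 1 < r → 0 ≤ H r
  cs : ∀ r, 1 < r → I r ^ 2 ≤ D r * H r

section
variable {n : ℕ} {A : En n → Matrix (Fin n) (Fin n) ℝ} {lam α C : ℝ} {u : En n → ℝ}

lemma mem_Om_of {x : En n} {r : ℝ} (hr : 1 < r) (hx : ‖x‖ = r) : x ∈ OmegaExt n := by
  show 1 < ‖x‖
  rw [hx]; exact hr

lemma norm_inv_contOn : ContinuousOn (fun x : En n => ‖x‖⁻¹) (OmegaExt n) :=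
  ContinuousOn.inv₀ continuous_norm.continuousOn fun x hx => (Om_pos hx).ne'

lemma Setup.u_cont (S : Setup n A lam α C u) : ContinuousOn u (OmegaExt n) := S.hu.1.continuousOn

lemma Setup.mu_cont (S : Setup n A lam α C u) : ContinuousOn (muA A) (OmegaExt n) := by
  have : ContinuousOn (fun x => qA A x * ‖x‖⁻¹ ^ 2) (OmegaExt n) :=
    S.syq.1.continuousOn.fun_mul (norm_inv_contOn.pow 2)
  exact this.congr fun x _ => muA_eq A x

lemma Setup.pV_cont (S : Setup n A lam α C u) (i : Fin n) : ContinuousOn (pV u i) (OmegaExt n) := by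
  unfold pV
  have hx : ContinuousOn (fun x : En n => x i) (OmegaExt n) := by fun_prop
  exact (pd_contOn i S.hu.1).fun_add (((continuousOn_const.fun_mul norm_inv_contOn).fun_mul S.u_cont).fun_mul
    (norm_inv_contOn.fun_mul hx))

lemma Setup.k_cont (S : Setup n A lam α C u) : ContinuousOn (kD u) (OmegaExt n) := by
  unfold kD
  exact (continuousOn_finsetSum _ fun i _ => (S.pV_cont i).pow 2).fun_add (S.u_cont.pow 2)

lemma Setup.t_cont (S : Setup n A lam α C u) : ContinuousOn (tD u) (OmegaExt n) := by
  unfold tD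
  refine (continuousOn_finsetSum _ fun i _ => (pd_contOn i S.hu.1).pow 2).fun_sub
    (ContinuousOn.pow (continuousOn_finsetSum _ fun i _ => ?_) 2)
  have hx : ContinuousOn (fun x : En n => x i) (OmegaExt n) := by fun_prop
  exact (norm_inv_contOn.fun_mul hx).fun_mul (pd_contOn i S.hu.1)

lemma Setup.e_cont (S : Setup n A lam α C u) : ContinuousOn (eD A u) (OmegaExt n) := by
  unfold eD
  exact continuousOn_finsetSum _ fun i _ => continuousOn_finsetSum _ fun j _ =>
    (S.hA.2.1 i j).continuousOn.fun_mul ((S.pV_cont i).fun_mul (S.pV_cont j))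

lemma Setup.z_cont (S : Setup n A lam α C u) : ContinuousOn (zP A u) (OmegaExt n) := by
  have : ContinuousOn (fun x => ∑ j, aV A j x * pV u j x) (OmegaExt n) :=
    continuousOn_finsetSum _ fun j _ => (S.sya j).1.continuousOn.fun_mul (S.pV_cont j)
  exact this.congr fun x hx => S.z_eq hx

lemma Setup.d_cont (S : Setup n A lam α C u) : ContinuousOn (dD A u) (OmegaExt n) := by
  unfold dD
  exact (S.z_cont.pow 2).fun_mul (S.mu_cont.inv₀ fun x hx => (S.mu_pos hx).ne')

lemma GB.sph {N f : En n → ℝ} {k : ℝ} (hf : ContinuousOn f (OmegaExt n))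
    (hN : ContinuousOn N (OmegaExt n)) (h : GB N k f) :
    ∃ c, 0 ≤ c ∧ ∀ r, 1 < r → |Sph n f r| ≤ c * r ^ k * Sph n N r := by
  obtain ⟨c, hc, H⟩ := h
  refine ⟨c, hc, fun r hr => ?_⟩
  have e := Sph_const_mul (n := n) (c * r ^ k) N r
  have hcN : ContinuousOn (fun x => c * r ^ k * N x) (OmegaExt n) := continuousOn_const.fun_mul hN
  rw [← e, abs_le]
  have key : ∀ x : En n, ‖x‖ = r → |f x| ≤ c * r ^ k * N x := fun x hx => by
    have := H x (mem_Om_of hr hx)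
    rwa [hx] at this
  constructor
  · have e2 := Sph_const_mul (n := n) (-1) (fun x => c * r ^ k * N x) r
    have h3 : Sph n (fun x => -1 * (c * r ^ k * N x)) r ≤ Sph n f r :=
      Sph_mono (continuousOn_const.fun_mul hcN) hf hr fun x hx => by
        linarith [(abs_le.mp (key x hx)).1]
    linarith
  · exact Sph_mono hf hcN hr fun x hx => (abs_le.mp (key x hx)).2

lemma Setup.ode (S : Setup n A lam α C u) : ∃ c,
    ODE α c (Sph n (hD A u)) (Sph n (iD A u)) (Sph n (dD A u)) (Sph n (eD A u)) (Sph n (gD A u))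
      (Sph n (tD u)) (Sph n (kD u)) (Sph n (fun x => 2 * iD A u x + u x ^ 2 * bA A x))
      (Sph n (fun x => 2 * dD A u x - gD A u x + sN n * ‖x‖⁻¹ * (u x ^ 2 * bA A x)))
      (Sph n (JD A u)) := by
  have ch := S.RPh.1
  have ci := S.RPi.1
  have cg := S.RPg.1
  have ch' := S.RPh.2.1
  have ci' := S.RPi.2.1
  have cg' := S.RPg.2.1
  have cd := S.d_cont
  have ce := S.e_cont
  have ct := S.t_cont
  have ck := S.k_cont
  have c2 : ∀ {f : En n → ℝ} (c : ℝ), ContinuousOn f (OmegaExt n) →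
    ContinuousOn (fun x => c * f x) (OmegaExt n) := fun c h => continuousOn_const.fun_mul h
  have hl : 0 < lam⁻¹ := inv_pos.mpr S.hlam0
  -- the error terms
  have x1 := GB.sph (ch'.fun_sub (c2 2 ci)) ch
    ((S.h_bd S.bd_b).congr fun x _ => by ring)
  have x2 := GB.sph (ci'.fun_sub ((c2 2 cd).fun_sub cg)) ch
    ((S.h_bd ((Sy.norm_inv.2.1.mul S.bd_b).const_mul (sN n))).congr
      (g := fun x => 2 * dD A u x - gD A u x + sN n * ‖x‖⁻¹ * (u x ^ 2 * bA A x)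
        - (2 * dD A u x - gD A u x)) fun x _ => by ring)
  have ct2 : ContinuousOn (fun x => 2 * ‖x‖⁻¹ * tD u x) (OmegaExt n) :=
    (continuousOn_const.fun_mul norm_inv_contOn).fun_mul ct
  have x3 := GB.sph (cg'.fun_sub ct2) ck S.J_bd
  have x4 := GB.sph (cg.fun_sub (ck.fun_sub (c2 2 ct))) ck S.g_bd
  have x5 := GB.sph (cg.fun_sub ((c2 2 cd).fun_sub ce)) ch S.m_bd
  obtain ⟨c1, hc1, y1⟩ := x1
  obtain ⟨c2', hc2, y2⟩ := x2
  obtain ⟨c3, hc3, y3⟩ := x3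
  obtain ⟨c4, hc4, y4⟩ := x4
  obtain ⟨c5, hc5, y5⟩ := x5
  have H0 : ∀ r, 1 < r → 0 ≤ Sph n (hD A u) r := fun r hr =>
    Sph_nonneg hr fun x hx => h_nonneg' S (mem_Om_of hr hx)
  have K0 : ∀ r, 1 < r → 0 ≤ Sph n (kD u) r := fun r hr =>
    Sph_nonneg hr fun x hx => (t_nonneg (mem_Om_of hr hx)).trans (t_le (mem_Om_of hr hx))
  set c := 1 + lam⁻¹ + c1 + c2' + c3 + c4 + c5 with hc
  have up : ∀ {a b N X : ℝ}, 0 ≤ b → 0 ≤ N → a ≤ c → X ≤ a * b * N → X ≤ c * b * N := by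
    intro a b N X hb hN ha hX
    exact hX.trans (mul_le_mul_of_nonneg_right (mul_le_mul_of_nonneg_right ha hb) hN)
  have rp : ∀ {r : ℝ} (k : ℝ), 1 < r → 0 ≤ r ^ k := fun k hr => Real.rpow_nonneg (by linarith) k
  have D0 : ∀ r, 1 < r → 0 ≤ Sph n (dD A u) r := fun r hr =>
    Sph_nonneg hr fun x hx => S.d_nonneg (mem_Om_of hr hx)
  have DE : ∀ r, 1 < r → Sph n (dD A u) r ≤ Sph n (eD A u) r := fun r hr =>
    Sph_mono cd ce hr fun x hx => S.d_le_e (mem_Om_of hr hx)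
  refine ⟨c, S.hα0, S.hα1, by linarith, S.RPh.2.2, S.RPi.2.2, S.RPg.2.2, fun r hr => ?_, fun r hr => ?_,
    fun r hr => ?_, fun r hr => ?_, fun r hr => ?_, fun r hr => ?_, fun r hr => ?_,
    fun r hr => Sph_nonneg hr fun x hx => t_nonneg (mem_Om_of hr hx),
    fun r hr => Sph_mono ct ck hr fun x hx => t_le (mem_Om_of hr hx), D0, DE, H0, fun r hr => ?_⟩
  · have := y1 r hr
    rw [Sph_sub ch' (c2 2 ci) hr, Sph_const_mul] at this
    exact up (rp _ hr) (H0 r hr) (by linarith) this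
  · have := y2 r hr
    rw [Sph_sub ci' ((c2 2 cd).fun_sub cg) hr, Sph_sub (c2 2 cd) cg hr, Sph_const_mul] at this
    refine up (rp _ hr) (H0 r hr) (by linarith : c2' ≤ c) (this.trans ?_)
    refine mul_le_mul_of_nonneg_right (mul_le_mul_of_nonneg_left
      (Real.rpow_le_rpow_of_exponent_le hr.le ?_) hc2) (H0 r hr)
    linarith
  · have := y3 r hr
    rw [Sph_sub cg' ct2 hr, Sph_radial (fun s => 2 * s⁻¹) (tD u) (by linarith)] at this
    exact up (rp _ hr) (K0 r hr) (by linarith) this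
  · have := y4 r hr
    rw [Sph_sub cg (ck.fun_sub (c2 2 ct)) hr, Sph_sub ck (c2 2 ct) hr, Sph_const_mul] at this
    exact up (rp _ hr) (K0 r hr) (by linarith) this
  · have := y5 r hr
    rw [Sph_sub cg ((c2 2 cd).fun_sub ce) hr, Sph_sub (c2 2 cd) ce hr, Sph_const_mul,
      Real.rpow_zero] at this
    have := up zero_le_one (H0 r hr) (by linarith : c5 ≤ c) this
    rwa [mul_one] at this
  · have := Sph_mono ch (c2 lam⁻¹ ck) hr fun x hx => S.h_le_k (mem_Om_of hr hx)
    rw [Sph_const_mul] at this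
    exact this.trans (mul_le_mul_of_nonneg_right (by linarith) (K0 r hr))
  · have := Sph_mono ck (c2 lam⁻¹ (ce.fun_add ch)) hr fun x hx => S.k_le (mem_Om_of hr hx)
    rw [Sph_const_mul, Sph_add ce ch hr] at this
    refine this.trans (mul_le_mul_of_nonneg_right (by linarith) ?_)
    have := D0 r hr; have := DE r hr; have := H0 r hr; linarith
  · exact Sph_cs cd ch ci hr fun x hx => S.cs_pt (mem_Om_of hr hx)
end

end

section
open scoped Topology ENNReal NNReal Pointwise ContDiff Convolution

lemma quad_form_nonneg {D H I : ℝ} (hD : 0 ≤ D) (hH : 0 ≤ H) (h : I ^ 2 ≤ D * H) (t : ℝ) :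
    0 ≤ D + 2 * t * I + t ^ 2 * H := by
  rcases hH.eq_or_lt with e | e
  · subst e
    have : I = 0 := by
      have : I ^ 2 ≤ 0 := by simpa using h
      exact pow_eq_zero_iff (two_ne_zero) |>.mp (le_antisymm this (sq_nonneg _))
    subst this; simpa using hD
  · by_contra hneg
    push Not at hneg
    have : H * (D + 2 * t * I + t ^ 2 * H) < 0 := mul_neg_of_pos_of_neg e hneg
    nlinarith [sq_nonneg (I + t * H)]

lemma carl_alg {H I D E g H1 I1 g1 β γ M : ℝ} (hD : 0 ≤ D) (hH : 0 ≤ H) (h : I ^ 2 ≤ D * H)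
    (hM : 0 ≤ M) (hγ : γ = 2 * M + 1) (hβ1 : 1 ≤ β)
    (hβ : (γ + 2 * M) ^ 2 / 4 + M ^ 2 + 4 * M + M + M ^ 2 ≤ β)
    (h1 : |H1 - 2 * I| ≤ M * H) (h2 : |I1 - E| ≤ M * H) (h3 : |g1| ≤ M * (E + H))
    (h4 : |g - (2 * D - E)| ≤ M * H) :
    H ≤ 2 * β * (g + 2 * β * I + 2 * β ^ 2 * H) + (g1 + 2 * (γ * β) * I + 2 * β * I1
      + 4 * β * (γ * β) * H + 2 * β ^ 2 * H1)
      + M * (2 * β * (I + β * H) + (I1 + γ * β * H + β * H1)) := by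
  have hβ0 : 0 ≤ β := by linarith
  have q := quad_form_nonneg hD hH h (β + (2 * γ + 4 * M) / 8)
  have q' := mul_nonneg hβ0 q
  have a1 := (abs_le.mp h1).1
  have a2 := (abs_le.mp h2).1
  have a3 := (abs_le.mp h3).1
  have a4 := (abs_le.mp h4).1
  have b1 := mul_nonneg (by positivity : 0 ≤ 2 * β ^ 2 + M * β) (by linarith : 0 ≤ H1 - 2 * I + M * H)
  have b2 := mul_nonneg (by positivity : 0 ≤ 2 * β + M) (by linarith : 0 ≤ I1 - E + M * H)
  have b4 := mul_nonneg (by positivity : 0 ≤ 2 * β) (by linarith : 0 ≤ g - (2 * D - E) + M * H)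
  have hγ0 : 0 ≤ γ := by rw [hγ]; linarith
  have b5 : 0 ≤ M * γ * β * H := by positivity
  have B1 : ((γ + 2 * M) ^ 2 / 4 + M ^ 2 + 4 * M) * β + M + M ^ 2 ≤ β ^ 2 := by
    have : 0 ≤ (M + M ^ 2) * (β - 1) := mul_nonneg (by positivity) (by linarith)
    have := mul_le_mul_of_nonneg_right hβ hβ0
    nlinarith
  have B2 : 1 ≤ β ^ 2 := by nlinarith
  have B3 : 0 ≤ H * ((2 * γ - 4 * M) * β ^ 2 - β * ((γ + 2 * M) ^ 2 / 4 + M ^ 2 + 4 * M) - M - M ^ 2 - 1) := by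
    refine mul_nonneg hH ?_
    rw [show 2 * γ - 4 * M = 2 by rw [hγ]; ring]; linarith
  have id : 2 * β * (g + 2 * β * I + 2 * β ^ 2 * H) + (g1 + 2 * (γ * β) * I + 2 * β * I1
      + 4 * β * (γ * β) * H + 2 * β ^ 2 * H1)
      + M * (2 * β * (I + β * H) + (I1 + γ * β * H + β * H1)) - H
      = 4 * (β * (D + 2 * (β + (2 * γ + 4 * M) / 8) * I + (β + (2 * γ + 4 * M) / 8) ^ 2 * H))
       + (2 * β ^ 2 + M * β) * (H1 - 2 * I + M * H) + (2 * β + M) * (I1 - E + M * H)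
       + 2 * β * (g - (2 * D - E) + M * H) + M * γ * β * H + (g1 + M * (E + H))
       + H * ((2 * γ - 4 * M) * β ^ 2 - β * ((γ + 2 * M) ^ 2 / 4 + M ^ 2 + 4 * M) - M - M ^ 2 - 1) := by
    ring
  linarith

section
variable {α C : ℝ} {H I D E g T K H1 I1 g1 : ℝ → ℝ}

lemma ODE.unit (O : ODE α C H I D E g T K H1 I1 g1) {r : ℝ} (hr : 1 < r) :
    |H1 r - 2 * I r| ≤ 3 * C ^ 2 * H r ∧ |I1 r - E r| ≤ 3 * C ^ 2 * H r ∧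
    |g1 r| ≤ 3 * C ^ 2 * (E r + H r) ∧ |g r - (2 * D r - E r)| ≤ 3 * C ^ 2 * H r := by
  have hC := O.hC
  have H0 := O.H0 r hr
  have K0 := (O.T0 r hr).trans (O.TK r hr)
  have rp : r ^ (-1 - α) ≤ 1 := Real.rpow_le_one_of_one_le_of_nonpos hr.le (by linarith [O.hα0])
  have ri : r⁻¹ ≤ 1 := inv_le_one_of_one_le₀ hr.le
  have ri0 : 0 ≤ r⁻¹ := inv_nonneg.mpr (by linarith)
  have CC : C ≤ C ^ 2 := by nlinarith
  have l1 : C * r ^ (-1 - α) * H r ≤ C * H r :=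
    mul_le_mul_of_nonneg_right (by nlinarith) H0
  have l2 : C * r ^ (-1 - α) * K r ≤ C * K r :=
    mul_le_mul_of_nonneg_right (by nlinarith) K0
  have l3 : C * H r ≤ C ^ 2 * H r := mul_le_mul_of_nonneg_right CC H0
  have l4 : 0 ≤ C ^ 2 * H r := by positivity
  have h1 := O.eH r hr
  have h2 := O.eI r hr
  have h3 := O.eg r hr
  have h4 := O.gm r hr
  refine ⟨by linarith, ?_, ?_, by linarith⟩
  · have : I1 r - E r = (I1 r - (2 * D r - g r)) - (g r - (2 * D r - E r)) := by ring
    rw [this]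
    exact (abs_sub _ _).trans (by linarith)
  · have : g1 r = (g1 r - 2 * r⁻¹ * T r) + 2 * r⁻¹ * T r := by ring
    rw [this]
    refine (abs_add_le _ _).trans ?_
    have t0 := O.T0 r hr
    rw [abs_of_nonneg (by positivity : 0 ≤ 2 * r⁻¹ * T r)]
    have l5 : r⁻¹ * T r ≤ K r := (mul_le_of_le_one_left t0 ri).trans (O.TK r hr)
    have l6 := O.KE r hr
    have l7 : (2 + C) * K r ≤ (3 * C) * K r := mul_le_mul_of_nonneg_right (by linarith) K0
    have l8 : 3 * C * K r ≤ 3 * C * (C * (E r + H r)) := mul_le_mul_of_nonneg_left l6 (by linarith)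
    nlinarith

end

set_option maxHeartbeats 1000000 in
/-- Uniqueness from the inside: zero Cauchy data at `r0` propagate inwards. -/
lemma ODE.inward {α C : ℝ} {H I D E g T K H1 I1 g1 : ℝ → ℝ} (O : ODE α C H I D E g T K H1 I1 g1)
    {r0 : ℝ} (hH : H r0 = 0) (hI : I r0 = 0) (hg : g r0 = 0)
    {d : ℝ} (hd : 1 < d) (hd0 : d < r0) : H d = 0 := by
  by_contra hne
  have hHd : 0 < H d := lt_of_le_of_ne (O.H0 d hd) (Ne.symm hne)
  -- a small interval
  have hcont : ContinuousAt H d := (O.dH d hd).continuousAt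
  have hev : ∀ᶠ r in 𝓝 d, H d / 2 < H r := hcont.eventually (lt_mem_nhds (by linarith))
  obtain ⟨ε, hε, hball⟩ := Metric.eventually_nhds_iff.mp hev
  set a := (1 + d) / 2 with ha
  set b := max ((a + d) / 2) (d - ε / 2) with hb
  have had : a < d := by rw [ha]; linarith
  have ha1 : 1 < a := by rw [ha]; linarith
  have hab : a < b := lt_of_lt_of_le (by linarith) (le_max_left _ _)
  have hbd : b < d := max_lt (by linarith) (by linarith)
  have hbH : ∀ r ∈ Set.Icc b d, H d / 2 ≤ H r := fun r hr => by
    refine (hball ?_).le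
    have := le_max_right ((a + d) / 2) (d - ε / 2)
    rw [Real.dist_eq, abs_lt]
    constructor <;> linarith [hr.1, hr.2]
  set M := 3 * C ^ 2 with hM
  have hM0 : 0 < M := by have := O.hC; positivity
  set γ := 2 * M + 1 with hγ
  have hγ0 : 0 < γ := by linarith
  set B := (γ + 2 * M) ^ 2 / 4 + M ^ 2 + 4 * M + M + M ^ 2 with hB
  have hB0 : 0 < B := by positivity
  set φ : ℝ → ℝ := fun r => Real.exp (γ * r) / γ with hφ
  set κ := 2 * (φ b - φ a) with hκ
  have hκ0 : 0 < κ := by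
    have : φ a < φ b := div_lt_div_of_pos_right (Real.exp_lt_exp.mpr (mul_lt_mul_of_pos_left hab hγ0)) hγ0
    linarith
  set X0 := |g a| + M * |I a| with hX0
  set X1 := 2 * Real.exp (γ * a) * |I a| with hX1
  have hX00 : 0 ≤ X0 := by positivity
  have hX10 : 0 ≤ X1 := by positivity
  set δ := H d / 2 * (d - b) with hδ
  have hδ0 : 0 < δ := mul_pos (by linarith) (by linarith)
  -- main inequality for each τ
  have main : ∀ τ : ℝ, 1 + B ≤ τ → Real.exp (κ * τ) * δ ≤ X0 + X1 * τ := by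
    intro τ hτ
    have hτ0 : 0 < τ := by linarith
    set β : ℝ → ℝ := fun r => τ * Real.exp (γ * r) with hβ
    set P : ℝ → ℝ := fun r => Real.exp (2 * τ * φ r) with hP
    have dβ : ∀ r, HasDerivAt β (γ * β r) r := fun r => by
      have := (((hasDerivAt_id r).const_mul γ).exp).const_mul τ
      refine this.congr_deriv ?_
      simp only [hβ, id]; ring
    have dφ : ∀ r, HasDerivAt φ (Real.exp (γ * r)) r := fun r => by
      have := (((hasDerivAt_id r).const_mul γ).exp).div_const γ
      refine this.congr_deriv ?_
      simp only [id]; field_simp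
    have dP : ∀ r, HasDerivAt P (2 * β r * P r) r := fun r => by
      have := ((dφ r).const_mul (2 * τ)).exp
      refine this.congr_deriv ?_
      simp only [hβ, hP]; ring
    set F : ℝ → ℝ := fun r => P r * (g r + 2 * β r * I r + 2 * β r ^ 2 * H r)
      + M * (P r * (I r + β r * H r)) with hF
    set F1 : ℝ → ℝ := fun r => P r * (2 * β r * (g r + 2 * β r * I r + 2 * β r ^ 2 * H r)
      + (g1 r + 2 * (γ * β r) * I r + 2 * β r * I1 r + 4 * β r * (γ * β r) * H r + 2 * β r ^ 2 * H1 r)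
      + M * (2 * β r * (I r + β r * H r) + (I1 r + γ * β r * H r + β r * H1 r))) with hF1
    have dF : ∀ r, 1 < r → HasDerivAt F (F1 r) r := fun r hr => by
      have e1 := (dP r).mul (((O.dg r hr).add (((dβ r).const_mul 2).mul (O.dI r hr))).add
        ((((dβ r).fun_pow 2).const_mul 2).mul (O.dH r hr)))
      have e2 := ((dP r).mul ((O.dI r hr).add ((dβ r).mul (O.dH r hr)))).const_mul M
      refine (e1.add e2).congr_deriv ?_
      simp only [hF1, Pi.add_apply, Pi.mul_apply]
      push_cast
      ring
    have F1low : ∀ r, 1 < r → P r * H r ≤ F1 r := fun r hr => by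
      obtain ⟨u1, u2, u3, u4⟩ := O.unit hr
      have e1 : 1 ≤ Real.exp (γ * r) := Real.one_le_exp (by positivity)
      have hβr : τ ≤ β r := le_mul_of_one_le_right hτ0.le e1
      exact mul_le_mul_of_nonneg_left (carl_alg (O.D0 r hr) (O.H0 r hr) (O.cs r hr) hM0.le hγ
        (by linarith) (by linarith) u1 u2 u3 u4) (Real.exp_pos _).le
    have Fmono : MonotoneOn F (Set.Icc a r0) := by
      refine monotoneOn_of_hasDerivWithinAt_nonneg (f' := F1) (convex_Icc _ _) ?_ ?_ ?_
      · exact fun r hr => (dF r (by linarith [hr.1])).continuousAt.continuousWithinAt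
      · exact fun r hr => by
          rw [interior_Icc] at hr
          exact (dF r (by linarith [hr.1])).hasDerivWithinAt
      · exact fun r hr => by
          rw [interior_Icc] at hr
          have h1 : 1 < r := by linarith [hr.1]
          exact (mul_nonneg (Real.exp_pos _).le (O.H0 r h1)).trans (F1low r h1)
    have F0 : F r0 = 0 := by simp only [hF, hH, hI, hg]; ring
    have Fd : F d ≤ 0 := by
      rw [← F0]
      exact Fmono ⟨had.le, hd0.le⟩ ⟨by linarith, le_rfl⟩ hd0.le
    have Fab : F a ≤ F b := Fmono ⟨le_rfl, by linarith⟩ ⟨hab.le, by linarith⟩ hab.le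
    have Fbd : P b * (H d / 2) * (d - b) ≤ F d - F b := by
      obtain ⟨r, hr, he⟩ := exists_hasDerivAt_eq_slope F F1 hbd
        (fun r hr => (dF r (by linarith [hr.1])).continuousAt.continuousWithinAt)
        (fun r hr => dF r (by linarith [hr.1]))
      rw [eq_div_iff (by linarith)] at he
      rw [← he]
      refine mul_le_mul_of_nonneg_right ?_ (by linarith)
      refine le_trans ?_ (F1low r (by linarith [hr.1]))
      refine mul_le_mul ?_ (hbH r ⟨hr.1.le, hr.2.le⟩) (by linarith) (Real.exp_pos _).le
      refine Real.exp_le_exp.mpr (mul_le_mul_of_nonneg_left ?_ (by positivity))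
      exact div_le_div_of_nonneg_right (Real.exp_le_exp.mpr (mul_le_mul_of_nonneg_left hr.1.le hγ0.le)) hγ0.le
    have Fa : -(P a * (X0 + X1 * τ)) ≤ F a := by
      have e : F a = P a * (g a + (2 * β a + M) * I a + (2 * β a ^ 2 + M * β a) * H a) := by
        simp only [hF]; ring
      have hβa : 0 ≤ β a := by positivity
      have h0 : 0 ≤ (2 * β a ^ 2 + M * β a) * H a := mul_nonneg (by positivity) (O.H0 a ha1)
      rw [e, ← mul_neg]
      refine mul_le_mul_of_nonneg_left ?_ (Real.exp_pos _).le
      have i1 := neg_abs_le (g a)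
      have i2 := mul_le_mul_of_nonneg_left (neg_abs_le (I a)) (by positivity : 0 ≤ 2 * β a + M)
      have e3 : X1 * τ = 2 * β a * |I a| := by simp only [hX1, hβ]; ring
      rw [hX0, e3]
      linarith
    have Pab : P b = Real.exp (κ * τ) * P a := by
      simp only [hP, ← Real.exp_add, hκ]; congr 1; ring
    have hfin : P a * (Real.exp (κ * τ) * δ) ≤ P a * (X0 + X1 * τ) := by
      have : P b * (H d / 2) * (d - b) = P a * (Real.exp (κ * τ) * δ) := by
        rw [Pab, hδ]; ring
      linarith
    exact le_of_mul_le_mul_left hfin (Real.exp_pos _)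
  set τ := 1 + B + 2 * (X0 + X1) / (κ ^ 2 * δ) with hτ
  have hq : 0 ≤ 2 * (X0 + X1) / (κ ^ 2 * δ) := by positivity
  have m := main τ (by linarith)
  have hτ1 : 1 < τ := by linarith
  have ex := Real.quadratic_le_exp_of_nonneg (mul_pos hκ0 (by linarith : 0 < τ)).le
  have l1 : (κ * τ) ^ 2 / 2 * δ ≤ X0 + X1 * τ := by
    refine le_trans (mul_le_mul_of_nonneg_right ?_ hδ0.le) m
    have : 0 < κ * τ := by positivity
    linarith
  have l2 : X0 + X1 * τ ≤ (X0 + X1) * τ := by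
    have := le_mul_of_one_le_right hX00 hτ1.le
    rw [add_mul]; linarith
  have l3 : 2 * (X0 + X1) < τ * (κ ^ 2 * δ) := by
    rw [← div_lt_iff₀ (by positivity)]; linarith
  have : (X0 + X1) * τ < (κ * τ) ^ 2 / 2 * δ := by
    have := mul_lt_mul_of_pos_right l3 (by linarith : 0 < τ)
    have e : (κ * τ) ^ 2 / 2 * δ = τ * (κ ^ 2 * δ) * τ / 2 := by ring
    rw [e]; linarith
  linarith

end

section
open scoped Topology ENNReal NNReal Pointwise ContDiff Convolution

/-- The square of the negative part is `C¹`. -/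
lemma negpart_deriv (x : ℝ) : HasDerivAt (fun y : ℝ => min y 0 ^ 2) (2 * min x 0) x := by
  rcases lt_trichotomy x 0 with h | h | h
  · have := (hasDerivAt_id x).fun_pow 2
    have e : (fun y : ℝ => min y 0 ^ 2) =ᶠ[𝓝 x] fun y => id y ^ 2 := by
      filter_upwards [gt_mem_nhds h] with y hy
      rw [min_eq_left hy.le]; rfl
    refine (this.congr_of_eventuallyEq e).congr_deriv ?_
    rw [min_eq_left h.le]; simp
  · subst h
    rw [hasDerivAt_iff_isLittleO]
    simp only [min_self, mul_zero, smul_zero, sub_zero]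
    rw [Asymptotics.isLittleO_iff]
    intro c hc
    filter_upwards [Metric.ball_mem_nhds (0:ℝ) hc] with y hy
    simp only [Metric.mem_ball, dist_zero_right, Real.norm_eq_abs] at hy
    simp only [Real.norm_eq_abs]
    have : |min y 0| ≤ |y| := by
      rcases le_total y 0 with h | h
      · rw [min_eq_left h]
      · rw [min_eq_right h]; simp
    have e : |min y 0 ^ 2 - 0 ^ 2| = |min y 0| * |min y 0| := by
      rw [← abs_mul]; congr 1; ring
    rw [e]
    exact mul_le_mul (this.trans hy.le) this (abs_nonneg _) hc.le
  · have e : (fun y : ℝ => min y 0 ^ 2) =ᶠ[𝓝 x] fun y => 0 := by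
      filter_upwards [lt_mem_nhds h] with y hy
      rw [min_eq_right hy.le]; simp
    refine ((hasDerivAt_const x (0:ℝ)).congr_of_eventuallyEq e).congr_deriv ?_
    rw [min_eq_right h.le]; simp

lemma part1_alg {N k ε N1 k1 c : ℝ} (hk : 0 ≤ k) (hε : 0 ≤ ε)
    (h1 : k - ε - |N| * ε ≤ N1) (h2 : k1 ≤ -c - 2 * k * N + k * ε) :
    k1 + 2 * min N 0 * N1 ≤ -c + 3 * ε * (1 + (k + min N 0 ^ 2)) := by
  rcases le_total N 0 with h | h
  · rw [min_eq_left h]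
    rw [abs_of_nonpos h] at h1
    have := mul_le_mul_of_nonpos_left h1 h
    nlinarith [mul_nonneg hε (sq_nonneg (N + 1)), mul_nonneg hε hk, mul_nonneg hε (sq_nonneg N)]
  · rw [min_eq_right h]
    have := mul_nonneg hk h
    have := mul_nonneg hε hk
    nlinarith

lemma ODE.large {α C : ℝ} {H I D E g T K H1 I1 g1 : ℝ → ℝ} (O : ODE α C H I D E g T K H1 I1 g1)
    {R1 : ℝ} (hg : ∀ r, R1 ≤ r → g r ≤ 0) :
    ∃ R2, 1 < R2 ∧ R1 ≤ R2 ∧ ∀ r, R2 ≤ r → H r / (3 * C) * r⁻¹ ≤ g1 r := by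
  have hC := O.hC
  have ht : Tendsto (fun r : ℝ => C * r ^ (-α)) atTop (𝓝 0) := by
    simpa using (tendsto_rpow_neg_atTop O.hα0).const_mul C
  have hev := ht.eventually (gt_mem_nhds (show (0:ℝ) < 1 / 3 by norm_num))
  obtain ⟨R, hR⟩ := eventually_atTop.mp hev
  refine ⟨max (max R R1) 2, ?_, ?_, fun r hr => ?_⟩
  · exact lt_of_lt_of_le (by norm_num) (le_max_right _ _)
  · exact (le_max_right _ _).trans (le_max_left _ _)
  have r1 : R ≤ r := ((le_max_left _ _).trans (le_max_left _ _)).trans hr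
  have r2 : R1 ≤ r := ((le_max_right _ _).trans (le_max_left _ _)).trans hr
  have r3 : 2 ≤ r := (le_max_right _ _).trans hr
  have hr1 : 1 < r := by linarith
  have s := hR r r1
  have K0 := (O.T0 r hr1).trans (O.TK r hr1)
  have a1 := (abs_le.mp (O.gK r hr1)).1
  have a2 := (abs_le.mp (O.eg r hr1)).1
  have a3 := O.HK r hr1
  have a4 := hg r r2
  have p1 : C * r ^ (-α) * K r ≤ 1 / 3 * K r := mul_le_mul_of_nonneg_right s.le K0
  have ri : 0 < r⁻¹ := inv_pos.mpr (by linarith)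
  have e : r ^ (-1 - α) = r ^ (-α) * r⁻¹ := by
    rw [← Real.rpow_neg_one, ← Real.rpow_add (by linarith)]; congr 1; ring
  have p2 : C * r ^ (-1 - α) * K r ≤ 1 / 3 * K r * r⁻¹ := by
    have := mul_le_mul_of_nonneg_right p1 ri.le
    rw [e]; linarith
  have p3 : K r ≤ 3 * T r := by linarith
  have p4 : K r * r⁻¹ ≤ 3 * T r * r⁻¹ := mul_le_mul_of_nonneg_right p3 ri.le
  have p5 : H r / (3 * C) ≤ 1 / 3 * K r := by
    rw [div_le_iff₀ (by linarith)]; linarith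
  have p6 := mul_le_mul_of_nonneg_right p5 ri.le
  linarith

set_option maxHeartbeats 1000000 in
lemma ODE.zeros {α C : ℝ} {H I D E g T K H1 I1 g1 : ℝ → ℝ} (O : ODE α C H I D E g T K H1 I1 g1)
    {R1 : ℝ} (hg : ∀ r, R1 ≤ r → g r ≤ 0) (R : ℝ) : ∃ r, R ≤ r ∧ 1 < r ∧ H r = 0 := by
  by_contra hno
  push Not at hno
  have hC := O.hC
  have hα := O.hα0
  obtain ⟨R2, hR2, hR12, hlarge⟩ := O.large hg
  set R3 := max R R2 with hR3
  have hpos : ∀ r, R3 ≤ r → 1 < r ∧ 0 < H r ∧ R1 ≤ r ∧ R2 ≤ r := fun r hr => by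
    have h1 : R ≤ r := (le_max_left _ _).trans hr
    have h2 : R2 ≤ r := (le_max_right _ _).trans hr
    have h3 : 1 < r := by linarith
    exact ⟨h3, lt_of_le_of_ne (O.H0 r h3) (Ne.symm (hno r h1 h3)), by linarith, h2⟩
  set c := 1 / (3 * C) with hc
  have hc0 : 0 < c := by positivity
  set N : ℝ → ℝ := fun r => I r / H r with hN
  set N1 : ℝ → ℝ := fun r => (I1 r * H r - I r * H1 r) / H r ^ 2 with hN1
  set k : ℝ → ℝ := fun r => -g r / H r with hk
  set k1 : ℝ → ℝ := fun r => (-g1 r * H r - -g r * H1 r) / H r ^ 2 with hk1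
  set m : ℝ → ℝ := fun r => Real.exp (3 * C / α * r ^ (-α)) with hm
  set F : ℝ → ℝ := fun r => (1 + (k r + min (N r) 0 ^ 2)) * m r + c * Real.log r with hF
  set F1 : ℝ → ℝ := fun r => (k1 r + 2 * min (N r) 0 * N1 r) * m r
      + (1 + (k r + min (N r) 0 ^ 2)) * (m r * (-(3 * (C * r ^ (-1 - α))))) + c * r⁻¹ with hF1
  have dF : ∀ r, R3 ≤ r → HasDerivAt F (F1 r) r := fun r hr => by
    obtain ⟨h1, hH, -, -⟩ := hpos r hr
    have dN : HasDerivAt N (N1 r) r := (O.dI r h1).fun_div (O.dH r h1) hH.ne'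
    have dk : HasDerivAt k (k1 r) r := (O.dg r h1).fun_neg.fun_div (O.dH r h1) hH.ne'
    have dn : HasDerivAt (fun r => min (N r) 0 ^ 2) (2 * min (N r) 0 * N1 r) r :=
      (negpart_deriv (N r)).comp r dN
    have hr0 : r ≠ 0 := by linarith
    have dm : HasDerivAt m (m r * (-(3 * (C * r ^ (-1 - α))))) r := by
      have := ((Real.hasDerivAt_rpow_const (p := -α) (Or.inl hr0)).const_mul (3 * C / α)).exp
      refine this.congr_deriv ?_
      rw [show -α - 1 = -1 - α by ring]
      simp only [hm]
      field_simp
    have := (((dk.fun_add dn).const_add 1).fun_mul dm).fun_add ((Real.hasDerivAt_log hr0).const_mul c)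
    exact this
  have F1neg : ∀ r, R3 ≤ r → F1 r ≤ 0 := fun r hr => by
    obtain ⟨h1, hH, hr1, hr2⟩ := hpos r hr
    have hr0 : 0 < r := by linarith
    set ε := C * r ^ (-1 - α) with hε
    have hε0 : 0 ≤ ε := by positivity
    have k0 : 0 ≤ k r := div_nonneg (by linarith [hg r hr1]) hH.le
    have a1 := abs_le.mp (O.eH r h1)
    have a2 := abs_le.mp (O.eI r h1)
    rw [← hε] at a1 a2
    have eI : I r = N r * H r := by simp only [hN]; field_simp
    have eg : g r = - (k r * H r) := by simp only [hk]; field_simp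
    have hcs : N r ^ 2 * H r ≤ D r := by
      have := O.cs r h1
      rw [eI] at this
      have h3 : (N r ^ 2 * H r) * H r ≤ D r * H r := by nlinarith
      exact le_of_mul_le_mul_right h3 hH
    have i1 : k r - ε - |N r| * ε ≤ N1 r := by
      have e : N1 r = (I1 r - N r * H1 r) / H r := by
        simp only [hN1]; rw [eI]; field_simp
      rw [e, le_div_iff₀ hH]
      have b1 : N r * (H1 r - 2 * I r) ≤ |N r| * (ε * H r) := by
        refine (le_abs_self _).trans ?_
        rw [abs_mul]
        exact mul_le_mul_of_nonneg_left (abs_le.mpr a1) (abs_nonneg _)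
      have b2 : N r * I r = N r ^ 2 * H r := by rw [eI]; ring
      have b3 := a2.1
      have b4 : k r * H r = - g r := by rw [eg]; ring
      have : N r * H1 r = N r * (H1 r - 2 * I r) + 2 * (N r * I r) := by ring
      rw [this, b2, sub_mul, sub_mul, b4]
      linarith
    have i2 : k1 r ≤ -(c * r⁻¹) - 2 * k r * N r + k r * ε := by
      have e : k1 r = (-g1 r - k r * H1 r) / H r := by
        simp only [hk1]; rw [eg]; field_simp
      rw [e, div_le_iff₀ hH]
      have b1 := hlarge r hr2
      have b1' : H r / (3 * C) * r⁻¹ = c * r⁻¹ * H r := by rw [hc]; ring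
      have b2 := mul_le_mul_of_nonneg_left a1.1 k0
      have b3 : k r * N r * H r = k r * I r := by rw [eI]; ring
      have : (-(c * r⁻¹) - 2 * k r * N r + k r * ε) * H r =
        - (c * r⁻¹ * H r) - 2 * (k r * N r * H r) + k r * (ε * H r) := by ring
      rw [this, b3]
      linarith
    have key := part1_alg k0 hε0 i1 i2
    have m1 : 1 ≤ m r := Real.one_le_exp (by positivity)
    have m0 : 0 ≤ m r := by linarith
    have k2 := mul_le_mul_of_nonneg_right key m0
    have k3 : c * r⁻¹ ≤ c * r⁻¹ * m r := le_mul_of_one_le_right (by positivity) m1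
    simp only [hF1]
    linarith
  have anti : AntitoneOn F (Set.Ici R3) := by
    refine antitoneOn_of_hasDerivWithinAt_nonpos (f' := F1) (convex_Ici _) ?_ ?_ ?_
    · exact fun r hr => (dF r hr).continuousAt.continuousWithinAt
    · exact fun r hr => (dF r (interior_subset hr)).hasDerivWithinAt
    · exact fun r hr => F1neg r (interior_subset hr)
  have hlog : Tendsto (fun r => c * Real.log r) atTop atTop :=
    Real.tendsto_log_atTop.const_mul_atTop hc0
  obtain ⟨r, hr1, hr2⟩ := ((hlog.eventually_gt_atTop (F R3)).and (eventually_ge_atTop R3)).exists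
  have := anti (Set.self_mem_Ici) hr2 hr2
  obtain ⟨h1, hH, h3, -⟩ := hpos r hr2
  have k0 : 0 ≤ k r := div_nonneg (by linarith [hg r h3]) hH.le
  have : 0 ≤ (1 + (k r + min (N r) 0 ^ 2)) * m r := by positivity
  have : F r = (1 + (k r + min (N r) 0 ^ 2)) * m r + c * Real.log r := rfl
  linarith

end

section
open scoped Topology ENNReal NNReal Pointwise ContDiff Convolution

section
variable {n : ℕ} {A : En n → Matrix (Fin n) (Fin n) ℝ} {lam α C : ℝ} {u : En n → ℝ}

/-- If `u` vanishes on a sphere, its gradient is radial there. -/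
lemma grad_radial (hu : ContDiffOn ℝ 1 u (OmegaExt n)) {x : En n} (hx : x ∈ OmegaExt n)
    (h0 : ∀ y : En n, ‖y‖ = ‖x‖ → u y = 0) : ∃ c, ∀ i, pd i u x = c * x i := by
  have hx0 : x ≠ 0 := Om_ne hx
  have hφ : HasStrictFDerivAt u (fderiv ℝ u x) x :=
    (hu.contDiffAt ((isOpen_Om n).mem_nhds hx)).hasStrictFDerivAt (by simp)
  have hf : HasStrictFDerivAt (fun y : En n => ‖y‖) (fderiv ℝ (fun y : En n => ‖y‖) x) x :=
    (contDiffAt_norm ℝ hx0).hasStrictFDerivAt (n := 1) (by simp)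
  have hext : IsLocalExtrOn u {y : En n | ‖y‖ = ‖x‖} x := by
    left
    filter_upwards [self_mem_nhdsWithin] with y hy
    rw [h0 y hy, h0 x rfl]
  obtain ⟨a, b, hab, he⟩ := hext.exists_multipliers_of_hasStrictFDerivAt_1d hf hφ
  have key : ∀ i, a * (x i / ‖x‖) + b * pd i u x = 0 := fun i => by
    have := congrArg (fun L : En n →L[ℝ] ℝ => L (ev i)) he
    simp only [ContinuousLinearMap.add_apply, ContinuousLinearMap.smul_apply, smul_eq_mul,
      ContinuousLinearMap.zero_apply] at this
    rw [← pd_norm i hx0]; exact this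
  have hxn : ‖x‖ ≠ 0 := norm_ne_zero_iff.mpr hx0
  have hb : b ≠ 0 := by
    intro hb
    subst hb
    have ha : a ≠ 0 := fun ha => hab (by simp [ha])
    apply hx0
    ext i
    have := key i
    simp only [zero_mul, add_zero, mul_eq_zero, ha, false_or, div_eq_zero_iff, hxn, or_false] at this
    simpa using this
  refine ⟨-(a / (b * ‖x‖)), fun i => ?_⟩
  have := key i
  field_simp at this ⊢
  linarith

lemma Setup.cauchy_zero (S : Setup n A lam α C u) {r : ℝ} (hr : 1 < r) (hH : Sph n (hD A u) r = 0) :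
    Sph n (iD A u) r = 0 ∧ 0 ≤ Sph n (gD A u) r := by
  have hz : ∀ x : En n, ‖x‖ = r → u x = 0 := fun x hx => by
    have := Sph_eq_zero S.RPh.1 hr (fun x hx => h_nonneg' S (mem_Om_of hr hx)) hH x hx
    have hm := (S.mu_pos (mem_Om_of hr hx)).ne'
    simpa [hD, hm] using this
  constructor
  · have h : ∀ x : En n, ‖x‖ = r → iD A u x = 0 := fun x hx => by rw [iD, hz x hx, zero_mul]
    have c0 : ContinuousOn (fun _ : En n => (0:ℝ)) (OmegaExt n) := continuousOn_const
    have e0 : Sph n (fun _ : En n => (0:ℝ)) r = 0 := by simp [Sph]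
    rw [← e0]
    exact le_antisymm (Sph_mono S.RPi.1 c0 hr fun x hx => (h x hx).le)
      (Sph_mono c0 S.RPi.1 hr fun x hx => (h x hx).ge)
  · refine Sph_nonneg hr fun x hx => ?_
    have hxO := mem_Om_of hr hx
    obtain ⟨c, hc⟩ := grad_radial S.hu.1 hxO fun y hy => hz y (hy.trans hx)
    have hu0 := hz x hx
    have hp : ∀ i, pV u i x = c * x i := fun i => by rw [pV, hu0, hc]; ring
    have hxn := (Om_pos hxO).ne'
    have he : eD A u x = c ^ 2 * qA A x := by
      rw [eD, qA, Finset.mul_sum]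
      refine Finset.sum_congr rfl fun i _ => ?_
      rw [Ax, Finset.sum_mul, Finset.mul_sum]
      exact Finset.sum_congr rfl fun j _ => by rw [hp, hp]; ring
    have hzz : zP A u x = c * (‖x‖⁻¹ * qA A x) := by
      rw [S.z_eq hxO, qA, Finset.mul_sum, Finset.mul_sum]
      exact Finset.sum_congr rfl fun i _ => by rw [hp, aV]; ring
    have hd : dD A u x = eD A u x := by
      have := (S.q_pos hxO).ne'
      rw [dD, hzz, he, muA_eq]
      field_simp
    have := S.d_nonneg hxO
    rw [gD, ← hd, hu0]
    linarith [show (2 * dD A u x - dD A u x + 0 ^ 2 - (sN n ^ 2 - sN n) * (0 ^ 2 * muA A x * ‖x‖⁻¹ ^ 2)) = dD A u x by ring]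

/-- The contradiction: if `g ≤ 0` for large radii, then `u = 0`. -/
lemma Setup.vanish (S : Setup n A lam α C u) {R1 : ℝ} (hg : ∀ r, R1 ≤ r → Sph n (gD A u) r ≤ 0)
    {x : En n} (hx : x ∈ OmegaExt n) : u x = 0 := by
  obtain ⟨c, O⟩ := S.ode
  obtain ⟨r0, h1, h2, h3⟩ := O.zeros hg (max R1 (‖x‖ + 1))
  obtain ⟨hI, hG⟩ := S.cauchy_zero h2 h3
  have hG0 : Sph n (gD A u) r0 = 0 := le_antisymm (hg r0 ((le_max_left _ _).trans h1)) hG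
  have hlt : ‖x‖ < r0 := by
    have := (le_max_right R1 (‖x‖ + 1)).trans h1
    linarith
  have hHx := O.inward h3 hI hG0 (d := ‖x‖) hx hlt
  have := Sph_eq_zero S.RPh.1 (r := ‖x‖) hx (fun y hy => h_nonneg' S (mem_Om_of hx hy)) hHx x rfl
  have hm := (S.mu_pos hx).ne'
  simpa [hD, hm] using this

lemma Setup.w_pd (S : Setup n A lam α C u) {x : En n} (hx : x ∈ OmegaExt n) (i : Fin n) :
    gradient (fun x : En n => ‖x‖ ^ (((n : ℝ) - 1) / 2) * u x) x i = ‖x‖ ^ sN n * pV u i x := by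
  have hp := Om_pos hx
  have hd := Real.hasDerivAt_rpow_const (p := sN n) (Or.inl hp.ne')
  have hdiff : DifferentiableAt ℝ (fun y : En n => ‖y‖ ^ sN n) x :=
    hd.differentiableAt.comp x ((contDiffAt_norm ℝ (Om_ne hx)).differentiableAt (n := 1) (by simp))
  rw [gradient_apply]
  have e := pd_mul i hdiff (diffAt_Om S.hu.1 hx)
  have e2 := pd_comp_norm i (Om_ne hx) hd
  show pd i (fun x : En n => ‖x‖ ^ sN n * u x) x = _
  rw [e, e2, pV, Real.rpow_sub_one hp.ne']
  field_simp
  ring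

lemma Setup.G_eq (S : Setup n A lam α C u) {ρ : ℝ} (hρ : 1 < ρ) :
    ∃ c, 0 < c ∧ Gfun A u ρ = c * Sph n (gD A u) ρ := by
  have hρ0 : 0 < ρ := by linarith
  obtain ⟨c, hc, hs⟩ := sphInt_eq n (hn1 S) ρ hρ0
  set W : ℝ → ℝ := fun r => (r ^ sN n) ^ 2 with hW
  have hW0 : 0 < W ρ := by positivity
  refine ⟨c * W ρ, by positivity, ?_⟩
  have q1 : Sph n (fun x => (Zd A (fun x : En n => ‖x‖ ^ (((n : ℝ) - 1) / 2) * u x) x / ‖x‖) ^ 2 * muA A x) ρ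
      = W ρ * Sph n (dD A u) ρ := by
    rw [← Sph_radial W _ hρ0]
    refine Sph_congr (fun x hx => ?_) hρ
    have hp := (Om_pos hx).ne'
    have hm := (S.mu_pos hx).ne'
    have hZ : Zd A (fun x : En n => ‖x‖ ^ (((n : ℝ) - 1) / 2) * u x) x
        = (muA A x)⁻¹ * ‖x‖ ^ sN n * ‖x‖ * zP A u x := by
      rw [Zd, S.z_eq hx, Finset.mul_sum]
      refine Finset.sum_congr rfl fun i _ => ?_
      rw [S.w_pd hx]
      have : Zvec A x i = (muA A x)⁻¹ * Ax A i x := by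
        simp [Zvec, Ax, Matrix.mulVec, dotProduct]
      rw [this, aV]
      field_simp
    rw [hZ, dD]
    simp only [hW]
    field_simp
  have q2 : Sph n (fun x => quadForm (A x) (gradient (fun x : En n => ‖x‖ ^ (((n : ℝ) - 1) / 2) * u x) x)
      (gradient (fun x : En n => ‖x‖ ^ (((n : ℝ) - 1) / 2) * u x) x)) ρ = W ρ * Sph n (eD A u) ρ := by
    rw [← Sph_radial W _ hρ0]
    refine Sph_congr (fun x hx => ?_) hρ
    rw [quadForm_eq, eD, Finset.mul_sum]
    refine Finset.sum_congr rfl fun i _ => ?_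
    rw [Finset.mul_sum]
    refine Finset.sum_congr rfl fun j _ => ?_
    rw [S.w_pd hx, S.w_pd hx]; simp only [hW]; ring
  have q3 : Sph n (fun x => (‖x‖ ^ (((n : ℝ) - 1) / 2) * u x) ^ 2) ρ = W ρ * Sph n (fun x => u x ^ 2) ρ := by
    rw [← Sph_radial W _ hρ0]
    refine Sph_congr (fun x hx => ?_) hρ
    simp only [hW, sN]; ring
  have q4 : Sph n (fun x => (‖x‖ ^ (((n : ℝ) - 1) / 2) * u x) ^ 2 / ‖x‖ ^ 2 * muA A x) ρ
      = W ρ * Sph n (fun x => u x ^ 2 * muA A x * ‖x‖⁻¹ ^ 2) ρ := by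
    rw [← Sph_radial W _ hρ0]
    refine Sph_congr (fun x hx => ?_) hρ
    simp only [hW, sN]; rw [div_eq_mul_inv, inv_pow]; ring
  have c2 : ∀ {f : En n → ℝ} (c : ℝ), ContinuousOn f (OmegaExt n) →
    ContinuousOn (fun x => c * f x) (OmegaExt n) := fun c h => continuousOn_const.fun_mul h
  have cu : ContinuousOn (fun x => u x ^ 2) (OmegaExt n) := S.u_cont.pow 2
  have cm : ContinuousOn (fun x => u x ^ 2 * muA A x * ‖x‖⁻¹ ^ 2) (OmegaExt n) :=
    (cu.fun_mul S.mu_cont).fun_mul (norm_inv_contOn.pow 2)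
  have cde := (c2 2 S.d_cont).fun_sub S.e_cont
  have q5 : Sph n (gD A u) ρ = 2 * Sph n (dD A u) ρ - Sph n (eD A u) ρ + Sph n (fun x => u x ^ 2) ρ
      - (sN n ^ 2 - sN n) * Sph n (fun x => u x ^ 2 * muA A x * ‖x‖⁻¹ ^ 2) ρ := by
    have : gD A u = fun x => 2 * dD A u x - eD A u x + u x ^ 2
      - (sN n ^ 2 - sN n) * (u x ^ 2 * muA A x * ‖x‖⁻¹ ^ 2) := rfl
    rw [this, Sph_sub (cde.fun_add cu) (c2 _ cm) hρ, Sph_add cde cu hρ,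
      Sph_sub (c2 2 S.d_cont) S.e_cont hρ, Sph_const_mul, Sph_const_mul]
  rw [q5]
  simp only [Gfun]
  rw [hs, hs, hs, hs, q1, q2, q3, q4, sN]
  ring
end

lemma EllipticDecay.mono {n : ℕ} {A : En n → Matrix (Fin n) (Fin n) ℝ} {lam α β C : ℝ} (hC : 0 < C)
    (h : EllipticDecay A lam α C) (hβ : β ≤ α) : EllipticDecay A lam β C := by
  refine ⟨h.1, h.2.1, h.2.2.1, fun x hx i j => (h.2.2.2 x hx i j).trans ?_⟩
  exact mul_le_mul_of_nonneg_left (Real.rpow_le_rpow_of_exponent_le (Om_one hx) (by linarith)) hC.le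

/-- The main claim. -/
lemma main_claim
    (n : ℕ) (hn : 2 ≤ n)
    (A : En n → Matrix (Fin n) (Fin n) ℝ) (lam α C : ℝ)
    (hlam0 : 0 < lam) (hlam1 : lam < 1) (hα : 0 < α) (hC : 0 < C)
    (hA : EllipticDecay A lam α C)
    (u : En n → ℝ) (hu : WeakSol A u)
    (hne : ∃ x ∈ OmegaExt n, u x ≠ 0) :
    ∃ r : ℕ → ℝ, Tendsto r atTop atTop ∧ ∀ j, 0 < Gfun A u (r j) := by
  have S : Setup n A lam (min α 1) C u :=
    ⟨hn, hlam0, hlam1, lt_min hα one_pos, min_le_right _ _, hC, hA.mono hC (min_le_left _ _), hu⟩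
  have key : ∀ R : ℝ, ∃ r, R ≤ r ∧ 0 < Gfun A u r := by
    by_contra hno
    push Not at hno
    obtain ⟨R, hR⟩ := hno
    obtain ⟨x, hx, hxu⟩ := hne
    refine hxu (S.vanish (R1 := max R 2) (fun r hr => ?_) hx)
    have h1 : R ≤ r := (le_max_left _ _).trans hr
    have h2 : 2 ≤ r := (le_max_right _ _).trans hr
    obtain ⟨c, hc, e⟩ := S.G_eq (ρ := r) (by linarith)
    have := hR r h1
    rw [e] at this
    by_contra hpos
    push Not at hpos
    have := mul_pos hc hpos
    linarith
  choose f hf using key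
  exact ⟨fun j => f j, tendsto_atTop_mono (fun j => (hf j).1) tendsto_natCast_atTop_atTop,
    fun j => (hf j).2⟩

end

/-- **Lemma `post1`.** Let `u` be a nontrivial weak solution of
`-div(A∇u) = u` in `Ω` and suppose that for some `δ ∈ (0,1)` one has
`liminf_{R→∞} R^{-(1-δ)} ∫_{R<|x|<2R} u² = 0`. Then there is a sequence `r_j → ∞`
with `G(r_j) > 0` for every `j`. -/
theorem G_positive_on_sequence
    (n : ℕ) (hn : 2 ≤ n)
    (A : En n → Matrix (Fin n) (Fin n) ℝ) (lam α C : ℝ)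
    (hlam0 : 0 < lam) (hlam1 : lam < 1) (hα : 0 < α) (hC : 0 < C)
    (hA : EllipticDecay A lam α C)
    (u : En n → ℝ) (hu : WeakSol A u)
    (hne : ∃ x ∈ OmegaExt n, u x ≠ 0)
    (δ : ℝ) (hδ : δ ∈ Set.Ioo (0 : ℝ) 1)
    (hlim : Filter.liminf
        (fun R : ℝ => R ^ (-(1 - δ)) * ∫ x in {x : En n | R < ‖x‖ ∧ ‖x‖ < 2 * R}, (u x) ^ 2)
        Filter.atTop = 0) :
    ∃ r : ℕ → ℝ, Tendsto r atTop atTop ∧ ∀ j, 0 < Gfun A u (r j) := by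
  exact main_claim n hn A lam α C hlam0 hlam1 hα hC hA u hu hne

end
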